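/- arXiv:1806.01382 — 2 statements merged into one kernel-verified Lean document; each statement's English description precedes it below -/
import Mathlib

section
/- Let d ≥ 3 be a fixed integer and p a prime with gcd(p,d) = 1. Then, as n → ∞, Σ over all p-tuples (n_0, n_1, …, n_{p−1}) of nonnegative integers with n_0 + ⋯ + n_{p−1} = n and n_0 < n of the quantity ( n choose n_0,…,n_{p−1} ) · ( dn choose d n_0,…,d n_{p−1} )^{−1} · N_n(n_0,…,n_{p−1}) converges to 1, where N_n(n_0,…,n_{p−1}) = #{ (a^{(1)},…,a^{(n)}) ∈ (T_{d,p})^n : Σ_{i=1}^n Φ(a^{(i)}) = (d n_0, …, d n_{p−1}) }. -/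
/-!
Write `n_j` for the number of letters `j` in a word `v ∈ F_p^n`. Each type `(n_0, …, n_{p-1})` is shared
by exactly `(n choose n_0, …, n_{p-1})` words, so the sum in question is

  `S_n = ∑_{v ≠ 0} #zs(v) / #orb(v)`,

where `orb(v)` is the set of words of length `n d` in which each letter occurs `d` times as often as in
`v`, and `zs(v)` is the subset of those whose `n` consecutive blocks of length `d` all have sum zero
(`sum_antidiagonal_eq`). The nonzero words are split according to their type, with small constants
`δ, ε > 0`.

* Words with at most `δ n` nonzero letters. By Cauchy–Schwarz `#zs ≤ √#pairs`, and a generating function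
  bound for `pairs`, in which every nontrivial block pair involves at least two nonzero letters, shows
  that words of weight `m` contribute at most `(K √(m / n)) ^ m`; this uses `d ≥ 3`
  (`exists_near_zero`).
* Words with at least `δ n` nonzero letters in which some letter has frequency at least `(1 + ε) / p`.
  A generating function bound gives `#zs / #orb ≤ poly(n) · G ^ n · Q(v)`, where `Q(v)` has polynomially
  bounded total mass and `G ≤ 1` by AM–GM. The equality case of AM–GM forces the uniform type, or,
  because `p ∤ d`, the word `v = 0`, so that `G` is bounded away from one by compactness
  (`tendsto_bulk`).
* Balanced words, in which every letter has frequency below `(1 + ε) / p`. Fourier inversion expresses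
  `#zs(v) / #orb(v)` as `p ^ (-n)` times a sum over frequencies `w ∈ F_p^n` of normalised exponential
  sums. The `p` constant frequencies contribute `p` if `∑ v = 0` and `0` otherwise (`abs_zs_sub_le`);
  as all but a vanishing proportion of words are balanced (`tendsto_unbalanced`) and
  `p · #{v : ∑ v = 0} = p ^ n`, they produce the limit `1`. Frequencies close to a nonzero constant are
  translated to ones close to zero, and by the symmetry of the kernel the latter are again controlled by
  `exists_near_zero`. For the other frequencies Parseval and the entropy bound on orbit sizes give
  exponential decay (`ker_bulk_le`).
-/

/-- `phi a j` is the number of coordinates of the tuple `a` equal to `j`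
(the `j`-th coordinate of the counting vector `Φ(a)`). -/
noncomputable def phi {p k : ℕ} (a : Fin k → ZMod p) (j : ZMod p) : ℕ :=
  Nat.card {i : Fin k // a i = j}

/-- The adjacency matrix of the `d`-regular directed multigraph on `n` vertices
associated to a permutation `P` of the `n·d` points of the configuration model:
`A(P)_{kℓ} = #{k' ∈ F_k : P(k') ∈ F_ℓ}`. -/
noncomputable def adjMat (n d : ℕ) (P : Equiv.Perm (Fin n × Fin d)) :
    Matrix (Fin n) (Fin n) ℤ :=
  Matrix.of fun k l => (Nat.card {k' : Fin d // (P (k, k')).1 = l} : ℤ)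

/-- `T_{d,p}`, the set of `d`-tuples over `F_p` summing to zero. -/
def Tset (d p : ℕ) [NeZero p] : Finset (Fin d → ZMod p) :=
  Finset.univ.filter (fun a => ∑ i, a i = 0)

namespace KeyEst
open Finset

/-! ### Words, types and entropy -/

/-- The number of indices `i` with `a i = j`; as a function of `j` this is the type of the word `a`. -/
def cnt {ι κ : Type*} [Fintype ι] [DecidableEq κ] (a : ι → κ) (j : κ) : ℕ :=
  (univ.filter fun i => a i = j).card

/-- The words of the same type as `V`, i.e. the orbit of `V` under permutations of the positions. -/
def orb {ι κ : Type*} [Fintype ι] [DecidableEq ι] [Fintype κ] [DecidableEq κ] (V : ι → κ) :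
    Finset (ι → κ) :=
  univ.filter fun A => cnt A = cnt V

/-- The blow-up of `v`, in which the letter `v i` is repeated `d` times in the block `{i} × Fin d`. -/
def lft {κ : Type*} {n : ℕ} (d : ℕ) (v : Fin n → κ) : Fin n × Fin d → κ := fun x => v x.1

section general
variable {ι κ : Type*} [Fintype ι] [Fintype κ] [DecidableEq κ]

lemma mem_orb [DecidableEq ι] {A V : ι → κ} : A ∈ orb V ↔ cnt A = cnt V := by simp [orb]

lemma sum_cnt (a : ι → κ) : ∑ j, cnt a j = Fintype.card ι := by
  rw [← Finset.card_univ, Finset.card_eq_sum_card_fiberwise (f := a) (t := univ) (by simp)]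
  rfl

lemma prod_cnt {R : Type*} [CommMonoid R] (f : κ → R) (a : ι → κ) :
    ∏ i, f (a i) = ∏ j, f j ^ cnt a j := by
  rw [← Fintype.prod_fiberwise a]
  refine prod_congr rfl fun j _ => ?_
  rw [prod_congr rfl (g := fun _ => f j) (by rintro ⟨i, hi⟩ _; simp [hi])]
  simp [cnt, Fintype.card_subtype]

lemma sum_cnt_smul {R : Type*} [AddCommMonoid R] (f : κ → R) (a : ι → κ) :
    ∑ i, f (a i) = ∑ j, cnt a j • f j :=
  prod_cnt (R := Multiplicative R) f a

omit [Fintype κ] in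
lemma cnt_lft {n : ℕ} (d : ℕ) (v : Fin n → κ) (j : κ) : cnt (lft d v) j = d * cnt v j := by
  have : (univ.filter fun x : Fin n × Fin d => lft d v x = j)
      = (univ.filter fun i => v i = j) ×ˢ univ := by
    ext ⟨a, b⟩
    simp only [mem_filter, mem_univ, true_and, mem_product, and_true]
    rfl
  simp [cnt, this, mul_comm]

lemma card_filter_cnt [DecidableEq ι] (τ : κ → ℕ) (hτ : ∑ j, τ j = Fintype.card ι) :
    (univ.filter fun A : ι → κ => cnt A = τ).card = Nat.multinomial univ τ := by
  classical
  have h1 : (∑ j : κ, (MvPolynomial.X j : MvPolynomial κ ℤ)) ^ Fintype.card ι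
      = ∑ A : ι → κ, MvPolynomial.monomial (Finsupp.equivFunOnFinite.symm (cnt A)) 1 := by
    rw [← Finset.card_univ, ← Finset.prod_const, Finset.prod_univ_sum, Fintype.piFinset_univ]
    refine sum_congr rfl fun A _ => ?_
    rw [prod_cnt, MvPolynomial.monomial_eq, Finsupp.prod_fintype _ _ (by simp)]
    simp
  have h2 := Finset.sum_pow_eq_sum_piAntidiag (univ : Finset κ)
    (fun j => (MvPolynomial.X j : MvPolynomial κ ℤ)) (Fintype.card ι)
  have h3 : ∀ k : κ → ℕ, ((Nat.multinomial univ k : MvPolynomial κ ℤ)) *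
      ∏ i, (MvPolynomial.X i : MvPolynomial κ ℤ) ^ k i
      = MvPolynomial.monomial (Finsupp.equivFunOnFinite.symm k) (Nat.multinomial univ k : ℤ) := by
    intro k
    rw [MvPolynomial.monomial_eq, Finsupp.prod_fintype _ _ (by simp)]
    simp
  rw [h1] at h2
  have h4 := congrArg (MvPolynomial.coeff (Finsupp.equivFunOnFinite.symm τ)) h2
  simp only [h3, MvPolynomial.coeff_sum, MvPolynomial.coeff_monomial,
    EmbeddingLike.apply_eq_iff_eq] at h4
  rw [Finset.sum_ite_eq' ] at h4
  rw [if_pos (by simp [hτ])] at h4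
  simpa [Finset.sum_boole] using h4

lemma card_orb [DecidableEq ι] (V : ι → κ) : (orb V).card = Nat.multinomial univ (cnt V) :=
  card_filter_cnt _ (sum_cnt V)

lemma card_orb_pos [DecidableEq ι] (V : ι → κ) : 0 < (orb V).card := by
  rw [card_orb]; exact Nat.multinomial_pos _ _

omit [Fintype κ] in
lemma exists_perm {W W' : ι → κ} (h : cnt W' = cnt W) : ∃ σ : Equiv.Perm ι, W' = W ∘ σ := by
  have e : ∀ j, Nonempty ({i // W' i = j} ≃ {i // W i = j}) := fun j => by
    refine ⟨Fintype.equivOfCardEq ?_⟩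
    simpa [cnt, Fintype.card_subtype] using congrFun h j
  have e := fun j => (e j).some
  refine ⟨(Equiv.sigmaFiberEquiv W').symm.trans
    ((Equiv.sigmaCongrRight fun j => (e j)).trans (Equiv.sigmaFiberEquiv W)), ?_⟩
  funext i
  simp only [Function.comp, Equiv.trans_apply]
  exact ((e (W' i)) ⟨i, rfl⟩).2.symm

omit [Fintype κ] [DecidableEq κ] in
/-- A weighted count: if all letters of the words in `𝒜` lie in `S` and every word of `𝒜` has weight
at least `c`, then `#𝒜 * c` is at most the total weight `(∑ r ∈ S, g r) ^ N` of all words over `S`. -/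
lemma gen_bound [DecidableEq ι] (S : Finset κ) (g : κ → ℝ) (hg : ∀ r, 0 ≤ g r) (𝒜 : Finset (ι → κ)) (c : ℝ)
    (hS : ∀ A ∈ 𝒜, ∀ i, A i ∈ S) (hc : ∀ A ∈ 𝒜, c ≤ ∏ i, g (A i)) :
    (𝒜.card : ℝ) * c ≤ (∑ r ∈ S, g r) ^ Fintype.card ι := by
  rw [← Finset.card_univ (α := ι), ← Finset.prod_const, ← Finset.sum_prod_piFinset]
  rw [← nsmul_eq_mul]
  refine (Finset.card_nsmul_le_sum _ _ _ hc).trans ?_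
  refine Finset.sum_le_sum_of_subset_of_nonneg (fun A hA => ?_) fun A _ _ => ?_
  · simpa using hS A hA
  · exact prod_nonneg fun i _ => hg _

/-- The probability of `v` under the product of its own empirical letter distribution, equivalently
`exp (-N * H)` with `H` the empirical entropy. Letters that do not occur contribute `0 ^ 0 = 1`. -/
noncomputable def Q (v : ι → κ) : ℝ := ∏ j, ((cnt v j : ℝ) / Fintype.card ι) ^ cnt v j

lemma cnt_le (v : ι → κ) (j : κ) : cnt v j ≤ Fintype.card ι := by
  rw [← sum_cnt v]; exact single_le_sum (f := cnt v) (by simp) (mem_univ j)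

lemma Q_nonneg (v : ι → κ) : 0 ≤ Q v := by unfold Q; positivity

lemma Q_le_pow (v : ι → κ) (t : ℝ) (h : ∀ j, (cnt v j : ℝ) / Fintype.card ι ≤ t) :
    Q v ≤ t ^ Fintype.card ι := by
  rw [← sum_cnt v, ← Finset.prod_pow_eq_pow_sum]
  unfold Q
  exact prod_le_prod (fun j _ => by positivity) fun j _ => by gcongr; exact h j

lemma Q_le_one (v : ι → κ) : Q v ≤ 1 := by
  have := Q_le_pow v 1 fun j => by
    apply div_le_one_of_le₀ _ (by positivity)
    exact_mod_cast cnt_le v j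
  simpa using this

/-- Each type class has total `Q`-mass at most one, and there are at most `(N + 1) ^ #κ` types. -/
lemma sum_Q_le [DecidableEq ι] : ∑ v : ι → κ, Q v ≤ ((Fintype.card ι : ℝ) + 1) ^ Fintype.card κ := by
  classical
  let N := Fintype.card ι
  have key : ∀ τ : κ → Fin (N + 1),
      ∑ v ∈ univ.filter (fun v : ι → κ => (fun j => (⟨cnt v j, Nat.lt_succ_of_le (cnt_le v j)⟩ : Fin (N+1))) = τ),
        Q v ≤ 1 := by
    intro τ
    set 𝒜 := univ.filter (fun v : ι → κ => (fun j => (⟨cnt v j, Nat.lt_succ_of_le (cnt_le v j)⟩ : Fin (N+1))) = τ)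
    rcases 𝒜.eq_empty_or_nonempty with h | ⟨v₀, h₀⟩
    · simp [h]
    have hτ : ∀ v ∈ 𝒜, cnt v = fun j => (τ j : ℕ) := by
      intro v hv
      have := (mem_filter.1 hv).2
      funext j
      rw [← this]
    have hQ : ∀ v ∈ 𝒜, Q v = Q v₀ := fun v hv => by
      unfold Q; rw [hτ v hv, hτ v₀ h₀]
    rw [sum_congr rfl hQ, sum_const, nsmul_eq_mul]
    have := gen_bound univ (fun j => (cnt v₀ j : ℝ) / N) (fun j => by positivity) 𝒜 (Q v₀) (by simp)
      (fun A hA => by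
        rw [prod_cnt (fun j => (cnt v₀ j : ℝ) / N) A, hτ A hA, ← hτ v₀ h₀]
        exact le_rfl)
    refine this.trans ?_
    rw [← sum_div, ← Nat.cast_sum, sum_cnt]
    exact pow_le_one₀ (by positivity) (div_self_le_one _)
  rw [← sum_fiberwise_of_maps_to (t := (univ : Finset (κ → Fin (N+1))))
    (g := fun v : ι → κ => fun j => (⟨cnt v j, Nat.lt_succ_of_le (cnt_le v j)⟩ : Fin (N+1)))
    (fun _ _ => mem_univ _)]
  refine (sum_le_sum fun τ _ => key τ).trans ?_
  simp [N]

lemma factorial_upper_aux (k : ℕ) (hk : 1 ≤ k) :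
    (k.factorial : ℝ) ≤ Real.exp 1 * k * ((k : ℝ) ^ k * Real.exp (-k)) := by
  induction k, hk using Nat.le_induction with
  | base => simp [← Real.exp_add]
  | succ k hk ih =>
    have hk' : (0:ℝ) < k := by exact_mod_cast hk
    have h1 : Real.exp 1 * (k:ℝ) ^ (k+1) ≤ ((k:ℝ)+1)^(k+1) := by
      have : Real.exp 1 ≤ (((k:ℝ)+1)/k) ^ (k+1) := by
        have h := Real.one_sub_inv_le_log_of_pos (x := ((k:ℝ)+1)/k) (by positivity)
        have h2 : 1 - (((k:ℝ)+1)/k)⁻¹ = 1/(k+1) := by field_simp; ring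
        rw [h2] at h
        rw [← Real.log_le_log_iff (by positivity) (by positivity), Real.log_exp, Real.log_pow]
        push_cast
        have := mul_le_mul_of_nonneg_left h (show (0:ℝ) ≤ k+1 by positivity)
        rwa [mul_one_div_cancel (by positivity)] at this
      rw [div_pow, le_div_iff₀ (by positivity)] at this
      exact this
    rw [Nat.factorial_succ]
    push_cast
    have e1 : Real.exp (-(k:ℝ)) = Real.exp (-((k:ℝ)+1)) * Real.exp 1 := by
      rw [← Real.exp_add]; congr 1; ring
    calc ((k:ℝ)+1) * (k.factorial : ℝ)
        ≤ ((k:ℝ)+1) * (Real.exp 1 * k * ((k : ℝ) ^ k * Real.exp (-k))) := by gcongr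
      _ = Real.exp 1 * (k+1) * Real.exp (-((k:ℝ)+1)) * (Real.exp 1 * (k:ℝ) ^ (k+1)) := by
          rw [e1]; ring
      _ ≤ Real.exp 1 * (k+1) * Real.exp (-((k:ℝ)+1)) * ((k:ℝ)+1)^(k+1) := by gcongr
      _ = _ := by ring

lemma factorial_upper (k : ℕ) :
    (k.factorial : ℝ) ≤ Real.exp 1 * (k + 1) * ((k : ℝ) ^ k * Real.exp (-k)) := by
  rcases Nat.eq_zero_or_pos k with rfl | hk
  · simp
  · refine (factorial_upper_aux k hk).trans ?_
    gcongr
    linarith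

lemma factorial_lower (k : ℕ) : (k : ℝ) ^ k * Real.exp (-k) ≤ k.factorial := by
  have := Real.pow_div_factorial_le_exp (k : ℝ) (by positivity) k
  rw [div_le_iff₀ (by positivity)] at this
  rw [Real.exp_neg, ← div_eq_mul_inv, div_le_iff₀ (by positivity)]
  linarith

/-- The lower bound `1 / Q V`, up to a polynomial factor, for the number of words of the type of `V`. -/
lemma one_le_card_orb_mul_Q [DecidableEq ι] (V : ι → κ) :
    1 ≤ (Real.exp 1 * (Fintype.card ι + 1)) ^ Fintype.card κ * ((orb V).card * Q V) := by
  set N := Fintype.card ι with hN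
  have hs : ∑ j, cnt V j = N := sum_cnt V
  have hsR : ∑ j, (cnt V j : ℝ) = N := by exact_mod_cast hs
  have h1 : (∏ j, ((cnt V j).factorial : ℝ)) * (orb V).card = N.factorial := by
    rw [card_orb, ← hs]; exact_mod_cast Nat.multinomial_spec univ (cnt V)
  have h2 : (∏ j, ((cnt V j).factorial : ℝ)) ≤
      (Real.exp 1 * (N + 1)) ^ Fintype.card κ *
        ((∏ j, (cnt V j : ℝ) ^ cnt V j) * Real.exp (-N)) := by
    rw [← hsR, ← Finset.sum_neg_distrib, Real.exp_sum, ← prod_mul_distrib, ← Finset.card_univ,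
      ← prod_const, ← prod_mul_distrib]
    refine prod_le_prod (fun _ _ => by positivity) fun j _ => (factorial_upper _).trans ?_
    rw [hsR]
    gcongr
    exact cnt_le V j
  have h3 := factorial_lower N
  have h4 : Q V * (N : ℝ) ^ N = ∏ j, (cnt V j : ℝ) ^ cnt V j := by
    unfold Q
    rw [← hN]
    conv_lhs => rw [← hs, ← Finset.prod_pow_eq_pow_sum]
    rw [hs, ← prod_mul_distrib]
    refine prod_congr rfl fun j _ => ?_
    rcases Nat.eq_zero_or_pos (cnt V j) with h | h
    · simp [h]
    · have : (N:ℝ) ≠ 0 := by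
        have := cnt_le V j
        rw [← hN] at this
        exact_mod_cast (by omega : N ≠ 0)
      rw [← mul_pow, div_mul_cancel₀ _ this]
  have h5 : (0:ℝ) < (N : ℝ) ^ N * Real.exp (-N) := by
    rcases Nat.eq_zero_or_pos N with h | h
    · simp [h]
    · positivity
  rw [← h1] at h3
  have h6 := h3.trans (mul_le_mul_of_nonneg_right h2 (Nat.cast_nonneg (orb V).card))
  rw [← h4] at h6
  have h7 : (N : ℝ) ^ N * Real.exp (-N) * 1 ≤ (N : ℝ) ^ N * Real.exp (-N) *
      ((Real.exp 1 * (N + 1)) ^ Fintype.card κ * ((orb V).card * Q V)) := by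
    rw [mul_one]; refine h6.trans (le_of_eq (by ring))
  exact le_of_mul_le_mul_left h7 h5

lemma Q_lft {n : ℕ} (d : ℕ) (hd : 0 < d) (v : Fin n → κ) : Q (lft d v) = Q v ^ d := by
  unfold Q
  rw [← prod_pow]
  refine prod_congr rfl fun j _ => ?_
  rw [cnt_lft, pow_mul']
  simp only [Fintype.card_prod, Fintype.card_fin]
  have : (d:ℝ) ≠ 0 := by positivity
  congr 2
  push_cast
  rw [mul_comm (n:ℝ), mul_div_mul_left _ _ this]

lemma choose_lower (N k : ℕ) (hk : k ≤ N) : ((N : ℝ) / k) ^ k ≤ N.choose k := by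
  induction k generalizing N with
  | zero => simp
  | succ k ih =>
    obtain ⟨N, rfl⟩ : ∃ M, N = M + 1 := ⟨N - 1, by omega⟩
    have hk : k ≤ N := by omega
    have h := ih N hk
    have e : (((N+1).choose (k+1) : ℕ) : ℝ) = ((N:ℝ)+1)/(k+1) * N.choose k := by
      rw [div_mul_eq_mul_div, eq_div_iff (by positivity)]
      exact_mod_cast (Nat.add_one_mul_choose_eq N k).symm
    rw [e, pow_succ']
    push_cast
    refine mul_le_mul_of_nonneg_left (le_trans ?_ h) (by positivity)
    rcases Nat.eq_zero_or_pos k with rfl | h0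
    · simp
    gcongr ?_ ^ k
    have : (k:ℝ) ≤ N := by exact_mod_cast hk
    have : (0:ℝ) < k := by exact_mod_cast h0
    rw [div_le_div_iff₀ (by positivity) (by positivity)]
    nlinarith

/-- If all but `m` letters of `V` equal `z`, choosing the positions of the others already gives
`N.choose m ≥ (N / m) ^ m` words of the type of `V`. -/
lemma card_orb_lower [DecidableEq ι] (V : ι → κ) (z : κ) (m : ℕ)
    (hm : cnt V z + m = Fintype.card ι) :
    ((Fintype.card ι : ℝ) / m) ^ m ≤ (orb V).card := by
  have h0 : (univ : Finset κ) = insert z (univ.erase z) := by simp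
  have h1 : ∑ j ∈ univ.erase z, cnt V j = m := by
    have := sum_cnt V
    rw [← Finset.add_sum_erase _ _ (mem_univ z)] at this
    omega
  rw [card_orb, h0, Nat.multinomial_insert (by simp), h1, hm]
  push_cast
  have h2 := choose_lower (Fintype.card ι) m (by omega)
  have h3 : (Fintype.card ι).choose (cnt V z) = (Fintype.card ι).choose m := by
    rw [← hm, Nat.choose_symm_add]
  rw [h3]
  refine h2.trans (le_mul_of_one_le_right (by positivity) ?_)
  exact_mod_cast Nat.multinomial_pos _ _

end general

/-! ### Exponential sums over type classes -/

section fourier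
variable {p : ℕ} [Fact p.Prime] {ι : Type*} [Fintype ι] [DecidableEq ι]

local notation "𝐞" => (ZMod.stdAddChar : AddChar (ZMod _) ℂ)

lemma orthogonality (a : ι → ZMod p) :
    ∑ w : ι → ZMod p, 𝐞 (∑ i, w i * a i) = if a = 0 then (p : ℂ) ^ Fintype.card ι else 0 := by
  have h1 : ∀ w : ι → ZMod p, 𝐞 (∑ i, w i * a i) = ∏ i, 𝐞 (w i * a i) := fun w =>
    map_prod (AddChar.toMonoidHom (ZMod.stdAddChar : AddChar (ZMod p) ℂ))
      (fun i => Multiplicative.ofAdd (w i * a i)) univ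
  simp_rw [h1]
  rw [← Fintype.piFinset_univ, ← Finset.prod_univ_sum (fun _ => univ) (fun i x => 𝐞 (x * a i))]
  simp_rw [AddChar.sum_mulShift _ (ZMod.isPrimitive_stdAddChar p)]
  split_ifs with h
  · simp [h]
  · obtain ⟨i, hi⟩ := Function.ne_iff.1 h
    exact prod_eq_zero (mem_univ i) (by rw [if_neg (by simpa using hi)]; simp)

lemma parseval {β : Type*} [DecidableEq β] (S : Finset β) (r : β → ι → ZMod p) :
    ∑ w : ι → ZMod p, ‖∑ b ∈ S, 𝐞 (∑ i, w i * r b i)‖ ^ 2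
      = (p : ℝ) ^ Fintype.card ι * ((S ×ˢ S).filter fun b => r b.1 = r b.2).card := by
  have h : ∀ w : ι → ZMod p, ((‖∑ b ∈ S, 𝐞 (∑ i, w i * r b i)‖ ^ 2 : ℝ) : ℂ)
      = ∑ b ∈ S ×ˢ S, 𝐞 (∑ i, w i * (r b.1 - r b.2) i) := by
    intro w
    push_cast
    rw [← Complex.mul_conj', map_sum, sum_mul_sum, sum_product]
    refine sum_congr rfl fun b _ => sum_congr rfl fun b' _ => ?_
    rw [← AddChar.map_neg_eq_conj, ← AddChar.map_add_eq_mul]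
    congr 1
    rw [← sub_eq_add_neg, ← sum_sub_distrib]
    simp [mul_sub]
  have h2 : ((∑ w : ι → ZMod p, ‖∑ b ∈ S, 𝐞 (∑ i, w i * r b i)‖ ^ 2 : ℝ) : ℂ)
      = (((p : ℝ) ^ Fintype.card ι * ((S ×ˢ S).filter fun b => r b.1 = r b.2).card : ℝ) : ℂ) := by
    rw [Complex.ofReal_sum, sum_congr rfl fun w _ => h w, sum_comm]
    simp_rw [orthogonality, sub_eq_zero]
    rw [← sum_filter, sum_const, nsmul_eq_mul]
    push_cast
    ring
  exact_mod_cast h2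

/-- The exponential sum `∑ e(W · A)` over the words `A` of the type of `V`. Up to normalisation it is
a multivariate Krawtchouk polynomial, and it depends on `W` only through its type. -/
noncomputable def Ks (W V : ι → ZMod p) : ℂ := ∑ A ∈ orb V, 𝐞 (∑ x, W x * A x)

lemma Ks_congr {W W' : ι → ZMod p} (V : ι → ZMod p) (h : cnt W' = cnt W) : Ks W' V = Ks W V := by
  obtain ⟨σ, rfl⟩ := exists_perm h
  have hc : ∀ (τ : Equiv.Perm ι) (A : ι → ZMod p), cnt (A ∘ τ) = cnt A := by
    intro τ A
    funext j
    refine Finset.card_bij (fun i _ => τ i) (by simp) (by simp) fun i hi => ⟨τ.symm i, ?_, by simp⟩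
    simpa using hi
  refine Finset.sum_bij' (fun A _ => A ∘ σ.symm) (fun A _ => A ∘ σ) ?_ ?_ ?_ ?_ ?_
  · intro A hA; rw [mem_orb] at hA ⊢; rw [hc, hA]
  · intro A hA; rw [mem_orb] at hA ⊢; rw [hc, hA]
  · intro A _; funext x; simp
  · intro A _; funext x; simp
  · intro A _
    congr 1
    exact (Fintype.sum_equiv σ _ _ fun x => by simp)

/-- Reciprocity: after normalisation by the orbit sizes, `Ks` is symmetric in its two arguments. -/
lemma card_mul_Ks (W V : ι → ZMod p) :
    ((orb W).card : ℂ) * Ks W V = ((orb V).card : ℂ) * Ks V W := by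
  have h1 : ∀ W V : ι → ZMod p, ((orb W).card : ℂ) * Ks W V
      = ∑ W' ∈ orb W, ∑ A ∈ orb V, 𝐞 (∑ x, W' x * A x) := by
    intro W V
    rw [← nsmul_eq_mul, ← sum_const]
    exact sum_congr rfl fun W' h => (Ks_congr V (mem_orb.1 h)).symm
  rw [h1, h1, sum_comm]
  simp_rw [mul_comm]

/-- Parseval for the indicator function of `orb V`, keeping only the frequencies in `orb W`. -/
lemma norm_Ks_sq_le (W V : ι → ZMod p) :
    ((orb W).card : ℝ) * ‖Ks W V‖ ^ 2 ≤ (p : ℝ) ^ Fintype.card ι * (orb V).card := by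
  have h1 : ((orb W).card : ℝ) * ‖Ks W V‖ ^ 2 = ∑ W' ∈ orb W, ‖Ks W' V‖ ^ 2 := by
    rw [← nsmul_eq_mul, ← sum_const]
    exact sum_congr rfl fun W' h => by rw [Ks_congr V (mem_orb.1 h)]
  rw [h1]
  refine (sum_le_univ_sum_of_nonneg fun _ => by positivity).trans ?_
  have h2 := parseval (orb V) (fun A => A)
  have h3 : (((orb V) ×ˢ (orb V)).filter fun b => b.1 = b.2) = (orb V).diag := by
    ext ⟨a, b⟩
    simp only [mem_filter, mem_product, mem_diag]
    constructor
    · rintro ⟨⟨h, _⟩, h'⟩; exact ⟨h, h'⟩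
    · rintro ⟨h, rfl⟩; exact ⟨⟨h, h⟩, rfl⟩
  rw [h3, diag_card] at h2
  exact h2.le

omit [DecidableEq ι] in
lemma sum_eq_of_cnt_eq {A V : ι → ZMod p} (h : cnt A = cnt V) : ∑ x, A x = ∑ x, V x := by
  have h1 := sum_cnt_smul (fun j : ZMod p => j) A
  have h2 := sum_cnt_smul (fun j : ZMod p => j) V
  rw [h1, h2, h]

/-- Adding a constant to the frequency only multiplies `Ks` by a phase, as all words of `orb V` have
the same coordinate sum. -/
lemma Ks_shift (W V : ι → ZMod p) (c : ZMod p) :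
    Ks (fun x => W x + c) V = 𝐞 (c * ∑ x, V x) * Ks W V := by
  unfold Ks
  rw [mul_sum]
  refine sum_congr rfl fun A hA => ?_
  rw [← sum_eq_of_cnt_eq (mem_orb.1 hA), ← AddChar.map_add_eq_mul]
  congr 1
  rw [mul_sum, ← sum_add_distrib]
  exact sum_congr rfl fun x _ => by ring

lemma Ks_zero (V : ι → ZMod p) : Ks 0 V = (orb V).card := by
  simp [Ks]

variable {n : ℕ} (d : ℕ)

/-- Pairs of words of the type of `lft d v` whose block sums agree in every block. -/
def pairs (v : Fin n → ZMod p) : Finset ((Fin n × Fin d → ZMod p) × (Fin n × Fin d → ZMod p)) :=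
  (orb (lft d v) ×ˢ orb (lft d v)).filter fun A =>
    (fun i => ∑ k, A.1 (i, k)) = (fun i => ∑ k, A.2 (i, k))

/-- Words of the type of `lft d v` all of whose block sums vanish. -/
def zs (v : Fin n → ZMod p) : Finset (Fin n × Fin d → ZMod p) :=
  (orb (lft d v)).filter fun A => (fun i => ∑ k, A (i, k)) = 0

lemma card_zs_sq_le (v : Fin n → ZMod p) : (zs d v).card ^ 2 ≤ (pairs d v).card := by
  rw [sq, ← card_product]
  refine card_le_card fun A hA => ?_
  simp only [zs, pairs, mem_product, mem_filter] at hA ⊢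
  exact ⟨⟨hA.1.1, hA.2.1⟩, hA.1.2.trans hA.2.2.symm⟩

lemma lft_dot (w : Fin n → ZMod p) (A : Fin n × Fin d → ZMod p) :
    ∑ x, lft d w x * A x = ∑ i, w i * ∑ k, A (i, k) := by
  rw [Fintype.sum_prod_type]
  simp [lft, mul_sum]

lemma sum_norm_Ks_sq (v : Fin n → ZMod p) :
    ∑ w : Fin n → ZMod p, ‖Ks (lft d w) (lft d v)‖ ^ 2 = (p : ℝ) ^ n * (pairs d v).card := by
  have := parseval (orb (lft d v)) (fun A (i : Fin n) => ∑ k, A (i, k))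
  simp only [Fintype.card_fin] at this
  simp only [Ks, lft_dot]
  exact this

lemma sum_Ks (v : Fin n → ZMod p) :
    ∑ w : Fin n → ZMod p, Ks (lft d w) (lft d v) = (p : ℂ) ^ n * (zs d v).card := by
  simp only [Ks, lft_dot]
  rw [sum_comm]
  simp only [orthogonality]
  rw [← sum_filter, sum_const, nsmul_eq_mul, mul_comm]
  simp [zs]

/-- The symmetric kernel `|Ks (lft d w) (lft d v)| / #orb (lft d v)`. -/
noncomputable def ker (w v : Fin n → ZMod p) : ℝ :=
  ‖Ks (lft d w) (lft d v)‖ / (orb (lft d v)).card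

/-- The `ℓ²` bound for the proportion `#zs / #orb`; up to the factor `p ^ n` it also bounds the
row sums of `ker`. -/
noncomputable def B (v : Fin n → ZMod p) : ℝ := √(pairs d v).card / (orb (lft d v)).card

lemma ker_comm (w v : Fin n → ZMod p) : ker d w v = ker d v w := by
  have h := congrArg norm (card_mul_Ks (lft d w) (lft d v))
  simp only [norm_mul, Complex.norm_natCast] at h
  have h1 : (0:ℝ) < (orb (lft d w)).card := by exact_mod_cast card_orb_pos _
  have h2 : (0:ℝ) < (orb (lft d v)).card := by exact_mod_cast card_orb_pos _
  unfold ker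
  rw [div_eq_div_iff h2.ne' h1.ne']
  linarith

/-- Cauchy–Schwarz and Parseval, after exchanging the arguments of the symmetric kernel. -/
lemma sum_ker_le (w : Fin n → ZMod p) :
    ∑ v : Fin n → ZMod p, ker d w v ≤ (p : ℝ) ^ n * B d w := by
  simp_rw [ker_comm d w]
  simp only [ker, B]
  rw [← sum_div, ← mul_div_assoc]
  gcongr
  refine le_of_sq_le_sq ?_ (by positivity)
  rw [mul_pow, Real.sq_sqrt (by positivity)]
  refine sq_sum_le_card_mul_sum_sq.trans (le_of_eq ?_)
  rw [sum_norm_Ks_sq]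
  simp
  ring

lemma zs_div_le_B (v : Fin n → ZMod p) : ((zs d v).card : ℝ) / (orb (lft d v)).card ≤ B d v := by
  unfold B
  gcongr
  refine Real.le_sqrt_of_sq_le ?_
  exact_mod_cast card_zs_sq_le d v

lemma ker_shift (w v : Fin n → ZMod p) (c : ZMod p) :
    ker d (fun i => w i + c) v = ker d w v := by
  unfold ker
  have : lft d (fun i => w i + c) = fun x => lft d w x + c := rfl
  rw [this, Ks_shift, norm_mul]
  simp

end fourier

/-! ### Words of small weight -/

/-- The Hamming weight: the number of nonzero coordinates of `v`. -/
def wt {ι G : Type*} [Fintype ι] [Zero G] [DecidableEq G] (v : ι → G) : ℕ :=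
  (univ.filter fun i => v i ≠ 0).card

section
variable {ι G : Type*} [Fintype ι] [AddCommGroup G] [DecidableEq G]

lemma cnt_add_wt (v : ι → G) : cnt v 0 + wt v = Fintype.card ι := by
  unfold cnt wt
  rw [← Finset.card_univ, Finset.card_filter_add_card_filter_not]

lemma prod_wt {R : Type*} [CommMonoid R] (y : R) (v : ι → G) :
    ∏ i, (if v i = 0 then 1 else y) = y ^ wt v := by
  rw [Finset.prod_ite]
  simp [wt]

lemma wt_eq_zero {v : ι → G} : wt v = 0 ↔ v = 0 := by
  simp [wt, Finset.filter_eq_empty_iff, funext_iff]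

lemma wt_ne_one {v : ι → G} (h : ∑ i, v i = 0) : wt v ≠ 1 := by
  intro h1
  obtain ⟨i, hi⟩ := Finset.card_eq_one.1 h1
  rw [← Finset.sum_filter_ne_zero, hi, sum_singleton] at h
  have : i ∈ univ.filter fun i => v i ≠ 0 := by rw [hi]; simp
  exact (mem_filter.1 this).2 h

/-- A nonzero pair of words with equal sums has at least two nonzero letters; this exponent `2` is what
makes `pairs` small near `v = 0`. -/
lemma two_le_wt {v v' : ι → G} (h : ∑ i, v i = ∑ i, v' i) (hne : (v, v') ≠ 0) :
    2 ≤ wt v + wt v' := by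
  by_contra hlt
  rcases Nat.eq_zero_or_pos (wt v) with h1 | h1
  · have hv := wt_eq_zero.1 h1
    subst hv
    have := wt_ne_one (v := v') (by simpa using h.symm)
    have h2 := wt_eq_zero (v := v')
    exact hne (by rw [h2.1 (by omega)]; rfl)
  · have h0 : wt v' = 0 := by omega
    have hv := wt_eq_zero.1 h0
    subst hv
    have := wt_ne_one (v := v) (by simpa using h)
    omega
end

section
variable {p : ℕ} [Fact p.Prime] {n : ℕ} (d : ℕ)

/-- Each nonzero letter gets weight `y`. The blocks of a pair have total weight at most
`1 + p ^ (2d) y ^ 2`, because the only pair of blocks of weight above `y ^ 2` is the zero pair. -/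
lemma pairs_bound_aux (v : Fin n → ZMod p) (y : ℝ) (hy : 0 < y) (hy1 : y ≤ 1) :
    ((pairs d v).card : ℝ) * y ^ (2 * d * wt v) ≤ (1 + (p : ℝ) ^ (2 * d) * y ^ 2) ^ n := by
  classical
  let f : (Fin n × Fin d → ZMod p) × (Fin n × Fin d → ZMod p) →
      Fin n → (Fin d → ZMod p) × (Fin d → ZMod p) :=
    fun A i => (fun k => A.1 (i, k), fun k => A.2 (i, k))
  have hf : Function.Injective f := by
    rintro ⟨A, A'⟩ ⟨C, C'⟩ h
    have h' : ∀ i k, A (i, k) = C (i, k) ∧ A' (i, k) = C' (i, k) := by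
      intro i k
      have := congrFun h i
      simp only [f, Prod.mk.injEq] at this
      exact ⟨congrFun this.1 k, congrFun this.2 k⟩
    refine Prod.ext ?_ ?_ <;> funext ⟨i, k⟩
    · exact (h' i k).1
    · exact (h' i k).2
  let S : Finset ((Fin d → ZMod p) × (Fin d → ZMod p)) :=
    univ.filter fun a => ∑ k, a.1 k = ∑ k, a.2 k
  let g : (Fin d → ZMod p) × (Fin d → ZMod p) → ℝ := fun a => y ^ (wt a.1 + wt a.2)
  have hwt : ∀ A ∈ orb (lft d v), ∏ i, y ^ wt (fun k => A (i, k)) = y ^ (d * wt v) := by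
    intro A hA
    simp_rw [← prod_wt]
    rw [← Fintype.prod_prod_type' (f := fun i k => if A (i, k) = 0 then 1 else y)]
    rw [prod_cnt (fun j => if j = 0 then 1 else y) A, mem_orb.1 hA, ← prod_cnt,
      Fintype.prod_prod_type]
    have h (i : Fin n) : (∏ k : Fin d, if lft d v (i, k) = 0 then 1 else y)
        = (if v i = 0 then 1 else y) ^ d := by
      have := prod_const (s := (univ : Finset (Fin d))) (if v i = 0 then (1:ℝ) else y)
      rw [Finset.card_univ, Fintype.card_fin] at this
      exact this
    simp only [h]
    rw [prod_pow, prod_wt, ← pow_mul, mul_comm]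
  have h1 := gen_bound S g (fun _ => by positivity) ((pairs d v).image f) (y ^ (2 * d * wt v)) ?_ ?_
  · rw [card_image_of_injective _ hf, Fintype.card_fin] at h1
    refine h1.trans (pow_le_pow_left₀ (sum_nonneg fun _ _ => by positivity) ?_ n)
    rw [← Finset.add_sum_erase S g (a := 0) (by simp [S])]
    refine add_le_add (by simp [g, wt]) ?_
    have h2 : ∀ a ∈ S.erase 0, g a ≤ y ^ 2 := by
      intro a ha
      rw [mem_erase, mem_filter] at ha
      exact pow_le_pow_of_le_one hy.le hy1 (two_le_wt ha.2.2 ha.1)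
    refine (sum_le_card_nsmul _ _ _ h2).trans ?_
    rw [nsmul_eq_mul]
    gcongr
    have : (S.erase 0).card ≤ _ := card_le_univ _
    have h3 : Fintype.card ((Fin d → ZMod p) × (Fin d → ZMod p)) = p ^ (2 * d) := by
      simp [ZMod.card]; ring
    rw [h3] at this
    exact_mod_cast this
  · intro A hA i
    obtain ⟨a, ha, rfl⟩ := mem_image.1 hA
    simp only [pairs, mem_filter] at ha
    simpa [S, f] using congrFun ha.2 i
  · intro A hA
    obtain ⟨a, ha, rfl⟩ := mem_image.1 hA
    simp only [pairs, mem_filter, mem_product] at ha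
    simp only [g, f, pow_add, prod_mul_distrib]
    rw [hwt _ ha.1.1, hwt _ ha.1.2, ← pow_add]
    exact le_of_eq (by ring)

lemma wt_le (v : Fin n → ZMod p) : wt v ≤ n := by
  have := cnt_add_wt v
  simp at this; omega

lemma one_add_mul_pow_le (C x : ℝ) (hC : 0 ≤ C) (hx : 0 ≤ x) :
    (1 + C * (x / n)) ^ n ≤ Real.exp (C * x) := by
  rcases Nat.eq_zero_or_pos n with rfl | hn
  · simpa using mul_nonneg hC hx
  calc (1 + C * (x / n)) ^ n ≤ (Real.exp (C * (x / n))) ^ n := by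
        gcongr
        linarith [Real.add_one_le_exp (C * (x/n))]
    _ = _ := by
        rw [← Real.exp_nat_mul]; congr 1
        have : (n:ℝ) ≠ 0 := by positivity
        field_simp

/-- `pairs_bound_aux` at `y = √(wt v / n)`, combined with `card_orb_lower`. -/
lemma B_le (hd : 0 < d) (v : Fin n → ZMod p) (hv : v ≠ 0) :
    B d v ≤ (Real.exp ((p : ℝ) ^ (2 * d)) * √((wt v : ℝ) / n) ^ d) ^ wt v := by
  set m := wt v with hm
  have hm0 : 0 < m := Nat.pos_of_ne_zero fun h => hv (wt_eq_zero.1 h)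
  have hmn : m ≤ n := wt_le v
  have hn0 : 0 < n := by omega
  have hmR : (0:ℝ) < m := by exact_mod_cast hm0
  have hnR : (0:ℝ) < n := by exact_mod_cast hn0
  set s := √((m : ℝ) / n) with hs
  have hs0 : 0 < s := Real.sqrt_pos.2 (by positivity)
  have hs2 : s ^ 2 = m / n := Real.sq_sqrt (by positivity)
  have hs1 : s ≤ 1 := by
    rw [hs, Real.sqrt_le_one, div_le_one hnR]; exact_mod_cast hmn
  have h1 := pairs_bound_aux d v s hs0 hs1
  rw [← hm, hs2] at h1
  have h2 := h1.trans (one_add_mul_pow_le (n := n) ((p:ℝ) ^ (2 * d)) m (by positivity) (by positivity))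
  have h3 := card_orb_lower (lft d v) 0 (d * m) (by
    have := cnt_add_wt v
    rw [cnt_lft, ← Nat.mul_add, this]; simp [mul_comm])
  have h4 : ((Fintype.card (Fin n × Fin d) : ℕ) : ℝ) / ((d * m : ℕ) : ℝ) = (s ^ 2)⁻¹ := by
    rw [hs2]; simp; field_simp
  rw [h4] at h3
  unfold B
  have hS : (0:ℝ) < s ^ (2 * d * m) := by positivity
  have h5 : ((pairs d v).card : ℝ) ≤ (Real.exp ((p : ℝ) ^ (2 * d)) ^ m * (s ^ (d * m))⁻¹) ^ 2 := by
    have e1 : (Real.exp ((p : ℝ) ^ (2 * d)) ^ m * (s ^ (d * m))⁻¹) ^ 2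
        = Real.exp ((p : ℝ) ^ (2 * d) * m) ^ 2 / s ^ (2 * d * m) := by
      rw [← Real.exp_nat_mul, mul_pow, inv_pow, ← pow_mul, div_eq_mul_inv]
      congr 2
      · congr 1; ring
      · congr 1; ring
    rw [e1, le_div_iff₀ hS]
    refine h2.trans ?_
    have : 1 ≤ Real.exp ((p : ℝ) ^ (2 * d) * m) := Real.one_le_exp (by positivity)
    nlinarith
  have h6 : √((pairs d v).card : ℝ) ≤ Real.exp ((p : ℝ) ^ (2 * d)) ^ m * (s ^ (d * m))⁻¹ :=
    Real.sqrt_le_iff.2 ⟨by positivity, h5⟩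
  have h7 : (0:ℝ) < (orb (lft d v)).card := by exact_mod_cast card_orb_pos _
  rw [div_le_iff₀ h7]
  refine h6.trans ?_
  rw [mul_pow, mul_assoc, ← pow_mul]
  gcongr
  calc (s ^ (d * m))⁻¹ = s ^ (d * m) * (s ^ 2)⁻¹ ^ (d * m) := by
        have : s ^ (d * m) ≠ 0 := by positivity
        rw [inv_pow, ← pow_mul, mul_comm 2, pow_mul _ _ 2]
        field_simp
    _ ≤ _ := by gcongr

lemma card_wt_le (m : ℕ) (hm : 0 < m) (hmn : m ≤ n) :
    ((univ.filter fun v : Fin n → ZMod p => wt v = m).card : ℝ) * ((m : ℝ) / n) ^ m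
      ≤ Real.exp p ^ m := by
  have h0 : 0 < n := by omega
  have h := gen_bound (ι := Fin n) (univ : Finset (ZMod p)) (fun j => if j = 0 then 1 else (m : ℝ) / n)
    (fun r => by split_ifs <;> positivity) (univ.filter fun v => wt v = m) (((m : ℝ) / n) ^ m) (by simp)
    (fun A hA => by rw [prod_wt, (mem_filter.1 hA).2])
  refine h.trans ?_
  rw [Fintype.card_fin, ← Real.exp_nat_mul, mul_comm (m:ℝ)]
  refine le_trans ?_ (one_add_mul_pow_le (n := n) (p:ℝ) m (by positivity) (by positivity))
  refine pow_le_pow_left₀ (sum_nonneg fun i _ => by split_ifs <;> positivity) ?_ n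
  · rw [← Finset.add_sum_erase univ _ (mem_univ (0 : ZMod p))]
    simp only [if_true]
    gcongr
    rw [sum_congr rfl (g := fun _ => (m:ℝ)/n) (fun x hx => if_neg (ne_of_mem_erase hx)), sum_const,
      nsmul_eq_mul]
    gcongr
    have := card_erase_le (s := (univ : Finset (ZMod p))) (a := 0)
    rw [Finset.card_univ, ZMod.card] at this
    exact_mod_cast this

lemma sum_B_wt_le (hd : 3 ≤ d) (m : ℕ) (hm : 0 < m) (hmn : m ≤ n) :
    ∑ v ∈ univ.filter (fun v : Fin n → ZMod p => wt v = m), B d v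
      ≤ (Real.exp p * Real.exp ((p : ℝ) ^ (2 * d)) * √((m : ℝ) / n)) ^ m := by
  have hmR : (0:ℝ) < m := by exact_mod_cast hm
  have hnR : (0:ℝ) < n := by exact_mod_cast (by omega : 0 < n)
  set s := √((m : ℝ) / n) with hs
  have hs0 : 0 < s := Real.sqrt_pos.2 (by positivity)
  have hs2 : s ^ 2 = m / n := Real.sq_sqrt (by positivity)
  have hs1 : s ≤ 1 := by
    rw [hs, Real.sqrt_le_one, div_le_one hnR]; exact_mod_cast hmn
  have h1 : ∀ v ∈ univ.filter (fun v : Fin n → ZMod p => wt v = m), B d v ≤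
      (Real.exp ((p : ℝ) ^ (2 * d)) * s ^ 3) ^ m := by
    intro v hv
    have hv := (mem_filter.1 hv).2
    have := B_le d (by omega) v (by rintro rfl; simp [wt] at hv; omega)
    rw [hv, ← hs] at this
    refine this.trans ?_
    gcongr ?_ ^ m
    gcongr _ * ?_
    exact pow_le_pow_of_le_one hs0.le hs1 hd
  refine (sum_le_card_nsmul _ _ _ h1).trans ?_
  rw [nsmul_eq_mul]
  have h2 := card_wt_le (p := p) m hm hmn
  rw [← hs2] at h2
  calc _ = ((univ.filter fun v : Fin n → ZMod p => wt v = m).card : ℝ) * (s ^ 2) ^ m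
        * (Real.exp ((p : ℝ) ^ (2 * d)) * s) ^ m := by
        rw [mul_assoc, ← mul_pow]; congr 2; ring
    _ ≤ Real.exp p ^ m * (Real.exp ((p : ℝ) ^ (2 * d)) * s) ^ m := by gcongr
    _ = _ := by rw [← mul_pow]; ring

/-- The sum of `B` over `v ≠ 0` close to `0` tends to `0`. Weight `m` contributes at most
`(K √(m / n)) ^ m`, which is at most `2 ^ (-m)` for `m ≤ δ n` and tends to `0` for each fixed `m`. -/
lemma exists_near_zero (p d : ℕ) [Fact p.Prime] (hd : 3 ≤ d) : ∃ δ : ℝ, 0 < δ ∧ δ ≤ 1 / 2 ∧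
    Filter.Tendsto (fun n : ℕ => ∑ v ∈ univ.filter (fun v : Fin n → ZMod p =>
      v ≠ 0 ∧ (wt v : ℝ) ≤ δ * n), B d v) Filter.atTop (nhds 0) := by
  set K := Real.exp p * Real.exp ((p : ℝ) ^ (2 * d)) with hK
  have hK1 : 1 ≤ K := by
    have h1 : 1 ≤ Real.exp p := Real.one_le_exp (by positivity)
    have h2 : 1 ≤ Real.exp ((p : ℝ) ^ (2 * d)) := Real.one_le_exp (by positivity)
    nlinarith
  set δ := (1 / (2 * K)) ^ 2 with hδ
  have hsδ : K * √δ ≤ 1 / 2 := by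
    rw [hδ, Real.sqrt_sq (by positivity)]
    field_simp; rfl
  refine ⟨δ, by positivity, ?_, ?_⟩
  · have : 1 / (2 * K) ≤ 1 / 2 := by gcongr; linarith
    have h0 : 0 ≤ 1 / (2 * K) := by positivity
    rw [hδ]; nlinarith
  let f : ℕ → ℕ → ℝ := fun n m => if 0 < m ∧ (m : ℝ) ≤ δ * n then (K * √((m:ℝ) / n)) ^ m else 0
  have hf0 : ∀ n m, 0 ≤ f n m := fun n m => by
    simp only [f]; split_ifs <;> positivity
  have hfle : ∀ n m, f n m ≤ (1 / 2) ^ m := fun n m => by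
    simp only [f]
    split_ifs with h
    · gcongr
      refine le_trans ?_ hsδ
      gcongr
      rcases Nat.eq_zero_or_pos n with rfl | hn
      · simp; positivity
      · rw [div_le_iff₀ (by exact_mod_cast hn)]; exact h.2
    · positivity
  have hsum : Summable fun m : ℕ => ((1:ℝ) / 2) ^ m := summable_geometric_two
  have ht : Filter.Tendsto (fun n => ∑' m, f n m) Filter.atTop (nhds (∑' _ : ℕ, (0:ℝ))) := by
    refine tendsto_tsum_of_dominated_convergence hsum (fun m => ?_)
      (Filter.Eventually.of_forall fun n m => by rw [Real.norm_of_nonneg (hf0 n m)]; exact hfle n m)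
    rcases Nat.eq_zero_or_pos m with rfl | hm
    · simp [f]
    have hc : Filter.Tendsto (fun n : ℕ => (K * √((m:ℝ) / n)) ^ m) Filter.atTop (nhds 0) := by
      have h1 : Filter.Tendsto (fun n : ℕ => (m:ℝ) / n) Filter.atTop (nhds 0) :=
        tendsto_const_div_atTop_nhds_zero_nat _
      have h2 := ((h1.sqrt.const_mul K).pow m)
      simpa [hm.ne'] using h2
    refine squeeze_zero (fun n => hf0 n m) (fun n => ?_) hc
    simp only [f]
    split_ifs
    · rfl
    · positivity
  rw [tsum_zero] at ht
  refine squeeze_zero (fun n => sum_nonneg fun v _ => by unfold B; positivity) (fun n => ?_) ht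
  have hs : Summable (f n) := Summable.of_nonneg_of_le (hf0 n) (hfle n) hsum
  refine le_trans ?_ (hs.sum_le_tsum (range (n + 1)) fun m _ => hf0 n m)
  rw [← sum_fiberwise_of_maps_to (t := range (n+1)) (g := fun v : Fin n → ZMod p => wt v)
    (fun v _ => by simpa [Nat.lt_succ_iff] using wt_le v)]
  refine sum_le_sum fun m hm => ?_
  rw [filter_filter]
  by_cases h : 0 < m ∧ (m : ℝ) ≤ δ * n
  · simp only [f, if_pos h]
    refine le_trans ?_ (sum_B_wt_le (p := p) d hd m h.1 (by simpa [Nat.lt_succ_iff] using hm))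
    refine sum_le_sum_of_subset_of_nonneg (fun v hv => ?_) fun v _ _ => by unfold B; positivity
    simp only [mem_filter] at hv ⊢
    exact ⟨hv.1, hv.2.2⟩
  · simp only [f, if_neg h]
    refine le_of_eq (sum_eq_zero fun v hv => ?_)
    simp only [mem_filter] at hv
    exfalso
    obtain ⟨-, ⟨hv0, hv1⟩, rfl⟩ := hv
    exact h ⟨Nat.pos_of_ne_zero fun h => hv0 (wt_eq_zero.1 h), hv1⟩

end

/-! ### Types away from zero and from the uniform type -/

section
variable {p : ℕ} [Fact p.Prime] {d : ℕ}

/-- The sum over `T_{d,p}` of the weights `∏ u(α_k) ^ (d - 1)`. With `u j ^ d` the letter frequencies of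
`v`, its `n`-th power bounds the exponential growth of `#zs / #orb` relative to `Q v`. -/
def G (d : ℕ) (u : ZMod p → ℝ) : ℝ := ∑ α ∈ Tset d p, ∏ k, u (α k) ^ (d - 1)

/-- AM–GM for `d`-th powers, with its equality case. -/
lemma amgm (hd : 0 < d) (z : Fin d → ℝ) (hz : ∀ i, 0 ≤ z i) :
    ∏ i, z i ≤ ∑ i, (1 / (d : ℝ)) * z i ^ d ∧
      (∏ i, z i = ∑ i, (1 / (d : ℝ)) * z i ^ d → ∀ i j, z i = z j) := by
  have hd' : (0:ℝ) < d := by exact_mod_cast hd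
  have hw : ∑ _i : Fin d, (1 / (d : ℝ)) = 1 := by simp [hd'.ne']
  have he : ∏ i, (z i ^ d) ^ (1 / (d : ℝ)) = ∏ i, z i := by
    refine prod_congr rfl fun i _ => ?_
    rw [one_div, Real.pow_rpow_inv_natCast (hz i) hd.ne']
  constructor
  · rw [← he]
    exact Real.geom_mean_le_arith_mean_weighted univ _ _ (fun _ _ => by positivity) hw
      fun i _ => pow_nonneg (hz i) d
  · intro h i j
    rw [← he] at h
    have := (Real.geom_mean_eq_arith_mean_weighted_iff_of_pos univ (fun _ => 1 / (d:ℝ))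
      (fun i => z i ^ d) (fun _ _ => by positivity) hw fun i _ => pow_nonneg (hz i) d).1 h
      i (mem_univ _) j (mem_univ _)
    exact (pow_left_inj₀ (hz i) (hz j) hd.ne').1 this

lemma prod_prod_erase (x : Fin d → ℝ) :
    ∏ i, ∏ k ∈ univ.erase i, x k = ∏ k, x k ^ (d - 1) := by
  rw [prod_comm' (t' := univ) (s' := fun k => univ.erase k) (by simp [eq_comm])]
  refine prod_congr rfl fun k _ => ?_
  rw [prod_const, card_erase_of_mem (mem_univ _)]
  simp

/-- A zero-sum tuple is determined by its coordinates other than the `i`-th, so the sum is part of the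
expansion of `(∑ j, q j) ^ (d - 1) = 1`. -/
lemma sum_tup_erase_le (q : ZMod p → ℝ) (hq : ∀ j, 0 ≤ q j) (hq1 : ∑ j, q j = 1) (i : Fin d) :
    ∑ α ∈ Tset d p, ∏ k ∈ univ.erase i, q (α k) ≤ 1 := by
  have hinj : Set.InjOn (fun (α : Fin d → ZMod p) (k : {k // k ∈ univ.erase i}) => α k.1)
      (Tset d p) := by
    intro α hα β hβ h
    have h' : ∀ k, k ≠ i → α k = β k := fun k hk => congrFun h ⟨k, by simpa using hk⟩
    simp only [Tset, coe_filter, mem_univ, true_and, Set.mem_ofPred_eq] at hα hβ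
    rw [← add_sum_erase _ _ (mem_univ i)] at hα hβ
    rw [sum_congr rfl fun k hk => h' k (ne_of_mem_erase hk)] at hα
    funext k
    by_cases hk : k = i
    · subst hk; exact add_right_cancel (hα.trans hβ.symm)
    · exact h' k hk
  have h1 : ∀ α : Fin d → ZMod p, ∏ k ∈ univ.erase i, q (α k)
      = ∏ k : {k // k ∈ univ.erase i}, q (α k.1) := fun α => (prod_coe_sort _ _).symm
  simp_rw [h1]
  rw [← sum_image (f := fun β : {k // k ∈ univ.erase i} → ZMod p => ∏ k, q (β k)) hinj]
  refine (sum_le_univ_sum_of_nonneg fun _ => prod_nonneg fun _ _ => hq _).trans ?_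
  rw [← Fintype.piFinset_univ, ← Finset.prod_univ_sum (fun _ => univ) (fun _ => q)]
  simp [hq1]

/-- AM–GM applied to the products of `u ∘ α` omitting one coordinate gives `G d u ≤ 1`; if equality
holds, then AM–GM is an equality for every `α ∈ T_{d,p}`. -/
lemma G_le_aux (hd : 0 < d) (u : ZMod p → ℝ) (hu : ∀ j, 0 ≤ u j) (h1 : ∑ j, u j ^ d = 1)
    (hG : ¬ G d u < 1) (α : Fin d → ZMod p) (hα : ∑ i, α i = 0) (i j : Fin d) :
    ∏ k ∈ univ.erase i, u (α k) = ∏ k ∈ univ.erase j, u (α k) := by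
  have hd' : (0:ℝ) < d := by exact_mod_cast hd
  have hle : ∀ β ∈ Tset d p, ∏ k, u (β k) ^ (d - 1) ≤
      ∑ i, (1 / (d : ℝ)) * (∏ k ∈ univ.erase i, u (β k)) ^ d := fun β _ => by
    rw [← prod_prod_erase]
    exact (amgm hd _ fun i => prod_nonneg fun _ _ => hu _).1
  have hsum : ∑ β ∈ Tset d p, ∑ i, (1 / (d : ℝ)) * (∏ k ∈ univ.erase i, u (β k)) ^ d ≤ 1 := by
    rw [sum_comm]
    calc _ ≤ ∑ _i : Fin d, (1 / (d : ℝ)) := by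
          refine sum_le_sum fun i _ => ?_
          rw [← mul_sum]
          simp_rw [← prod_pow]
          have := sum_tup_erase_le (fun j => u j ^ d) (fun j => pow_nonneg (hu j) d) h1 i
          exact mul_le_of_le_one_right (by positivity) this
      _ = 1 := by simp [hd'.ne']
  have heq := (sum_eq_sum_iff_of_le hle).1
    (le_antisymm (sum_le_sum hle) (hsum.trans (not_lt.1 hG))) α (by simp [Tset, hα])
  rw [← prod_prod_erase] at heq
  exact (amgm hd _ fun i => prod_nonneg fun _ _ => hu _).2 heq i j

/-- `G d u < 1` unless `u ^ d` is uniform or concentrated at `0`. If equality held, `u` would be constant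
on its support, and the support would be closed under `x + (s - t)`, hence all of `F_p` or a single
point `s`; in the latter case `d s = 0`, so `s = 0`. -/
lemma G_lt_one (hd : 3 ≤ d) (hpd : (d : ZMod p) ≠ 0) (u : ZMod p → ℝ) (hu : ∀ j, 0 ≤ u j)
    (h1 : ∑ j, u j ^ d = 1) (h0 : u 0 ^ d < 1) (hne : ¬ ∀ i j, u i = u j) : G d u < 1 := by
  by_contra hG
  have key := G_le_aux (by omega) u hu h1 hG
  have key2 : ∀ α : Fin d → ZMod p, ∑ i, α i = 0 → ∀ i, (∀ k, k ≠ i → 0 < u (α k)) →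
      ∀ j, u (α j) = u (α i) := by
    intro α hα i hpos j
    have h := key α hα i j
    have hi : 0 < ∏ k ∈ univ.erase i, u (α k) :=
      prod_pos fun k hk => hpos k (ne_of_mem_erase hk)
    have e1 := mul_prod_erase univ (fun k => u (α k)) (mem_univ i)
    have e2 := mul_prod_erase univ (fun k => u (α k)) (mem_univ j)
    rw [← h, ← e1] at e2
    exact mul_right_cancel₀ hi.ne' e2
  obtain ⟨e, rfl⟩ : ∃ e, d = e + 3 := ⟨d - 3, by omega⟩
  have key3 : ∀ x s t, 0 < u x → 0 < u s → 0 < u t →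
      u x = u (-(x + s + e * t)) ∧ u s = u (-(x + s + e * t)) := by
    intro x s t hx hs ht
    let α : Fin (e + 3) → ZMod p :=
      Fin.cons (-(x + s + e * t)) (Fin.cons x (Fin.cons s (fun _ : Fin e => t)))
    have hα : ∑ i, α i = 0 := by
      simp [α, Fin.sum_univ_succ]; ring
    have := key2 α hα 0 (by
      intro k hk
      refine Fin.cases (fun h => absurd rfl h) (fun k _ => ?_) k hk
      refine Fin.cases (show 0 < u x from hx) (fun k => ?_) k
      refine Fin.cases (show 0 < u s from hs) (fun k => ?_) k
      exact (show 0 < u t from ht))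
    exact ⟨this 1, this 2⟩
  have hconst : ∀ x s, 0 < u x → 0 < u s → u x = u s := fun x s hx hs =>
    (key3 x s s hx hs hs).1.trans (key3 x s s hx hs hs).2.symm
  have hcl : ∀ x s t, 0 < u x → 0 < u s → 0 < u t → 0 < u (-(x + s + e * t)) :=
    fun x s t hx hs ht => by rw [← (key3 x s t hx hs ht).1]; exact hx
  have hshift : ∀ x s t, 0 < u x → 0 < u s → 0 < u t → 0 < u (x + (s - t)) := by
    intro x s t hx hs ht
    have := hcl _ t t (hcl x s t hx hs ht) ht ht
    have h : -(-(x + s + e * t) + t + e * t) = x + (s - t) := by ring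
    rwa [h] at this
  obtain ⟨s, hs⟩ : ∃ s, 0 < u s := by
    by_contra! h
    have : ∀ j, u j = 0 := fun j => le_antisymm (h j) (hu j)
    simp [this] at h1
  by_cases hall : ∀ t, 0 < u t
  · exact hne fun i j => hconst i j (hall i) (hall j)
  have hS : ∀ t, 0 < u t → t = s := by
    intro t ht
    by_contra hts
    refine hall fun y => ?_
    have hst : t - s ≠ 0 := sub_ne_zero.2 hts
    have hk : ∀ k : ℕ, 0 < u (s + k * (t - s)) := by
      intro k
      induction k with
      | zero => simpa using hs
      | succ k ih =>
        have := hshift _ t s ih ht hs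
        convert this using 2
        push_cast; ring
    have := hk ((y - s) / (t - s)).val
    rw [ZMod.natCast_zmod_val, div_mul_cancel₀ _ hst] at this
    simpa using this
  have hs0 : s = 0 := by
    have := hS _ (hcl s s s hs hs hs)
    have h : ((e + 3 : ℕ) : ZMod p) * s = 0 := by
      push_cast
      linear_combination -this
    exact (mul_eq_zero.1 h).resolve_left hpd
  rw [← add_sum_erase _ _ (mem_univ (0 : ZMod p)), sum_eq_zero (s := univ.erase 0), add_zero] at h1
  · exact h0.ne h1
  · intro j hj
    have : u j = 0 := le_antisymm (not_lt.1 fun h => ne_of_mem_erase hj (hs0 ▸ hS j h)) (hu j)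
    simp [this]

/-- `G_lt_one` made uniform by compactness. -/
lemma exists_theta (hd : 3 ≤ d) (hpd : (d : ZMod p) ≠ 0) (δ ε : ℝ) (hδ : 0 < δ) (hε : 0 < ε) :
    ∃ θ : ℝ, 0 ≤ θ ∧ θ < 1 ∧ ∀ u : ZMod p → ℝ, (∀ j, 0 ≤ u j) → ∑ j, u j ^ d = 1 →
      u 0 ^ d ≤ 1 - δ → (∃ j, (1 + ε) / p ≤ u j ^ d) → G d u ≤ θ := by
  let C : Set (ZMod p → ℝ) := {u | (∀ j, 0 ≤ u j) ∧ ∑ j, u j ^ d = 1 ∧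
      u 0 ^ d ≤ 1 - δ ∧ ∃ j, (1 + ε) / p ≤ u j ^ d}
  have hsub : C ⊆ Set.Icc 0 1 := by
    rintro u ⟨h0, h1, -⟩
    refine ⟨h0, fun j => ?_⟩
    have : u j ^ d ≤ 1 := by
      rw [← h1]; exact single_le_sum (f := fun j => u j ^ d) (fun i _ => pow_nonneg (h0 i) d) (mem_univ j)
    exact (pow_le_one_iff_of_nonneg (h0 j) (by omega)).1 this
  have hclosed : IsClosed C := by
    have e : C = (⋂ j, {u | 0 ≤ u j}) ∩ ({u | ∑ j, u j ^ d = 1} ∩ ({u | u 0 ^ d ≤ 1 - δ} ∩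
        ⋃ j, {u | (1 + ε) / p ≤ u j ^ d})) := by
      ext u; simp [C]
    rw [e]
    refine (isClosed_iInter fun j => isClosed_le (by fun_prop) (by fun_prop)).inter
      ((isClosed_eq (by fun_prop) (by fun_prop)).inter
      ((isClosed_le (by fun_prop) (by fun_prop)).inter
      (isClosed_iUnion_of_finite fun j => isClosed_le (by fun_prop) (by fun_prop))))
  have hcomp : IsCompact C := isCompact_Icc.of_isClosed_subset hclosed hsub
  have hcont : Continuous (G d : (ZMod p → ℝ) → ℝ) := by unfold G; fun_prop
  rcases C.eq_empty_or_nonempty with hC | hC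
  · refine ⟨0, le_rfl, one_pos, fun u h1 h2 h3 h4 => ?_⟩
    have : u ∈ C := ⟨h1, h2, h3, h4⟩
    rw [hC] at this; exact this.elim
  · obtain ⟨u, ⟨h1, h2, h3, j, h4⟩, hmax⟩ := hcomp.exists_isMaxOn hC hcont.continuousOn
    refine ⟨G d u, ?_, ?_, fun w g1 g2 g3 g4 => hmax ⟨g1, g2, g3, g4⟩⟩
    · exact sum_nonneg fun _ _ => prod_nonneg fun _ _ => pow_nonneg (h1 _) _
    · refine G_lt_one hd hpd u h1 h2 (by linarith) fun hall => ?_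
      have h5 : ∑ i, u i ^ d = p * u j ^ d := by
        rw [sum_congr rfl fun i _ => by rw [hall i j]]
        simp [ZMod.card]
      have hp : (0:ℝ) < p := by exact_mod_cast (Fact.out : p.Prime).pos
      rw [div_le_iff₀ hp] at h4
      linarith

lemma zs_mul_le {n : ℕ} (v : Fin n → ZMod p) (u : ZMod p → ℝ)
    (hu : ∀ j, 0 ≤ u j) (hud : ∀ j, u j ^ d = (cnt v j : ℝ) / n) :
    ((zs d v).card : ℝ) * Q v ^ (d - 1) ≤ G d u ^ n := by
  classical
  let f : (Fin n × Fin d → ZMod p) → Fin n → Fin d → ZMod p := fun A i k => A (i, k)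
  have hf : Function.Injective f := fun A A' h => by
    funext ⟨i, k⟩; exact congrFun (congrFun h i) k
  have h1 := gen_bound (Tset d p) (fun α => ∏ k, u (α k) ^ (d - 1))
    (fun _ => prod_nonneg fun _ _ => pow_nonneg (hu _) _) ((zs d v).image f) (Q v ^ (d - 1)) ?_ ?_
  · rw [card_image_of_injective _ hf, Fintype.card_fin] at h1
    exact h1
  · intro A hA i
    obtain ⟨a, ha, rfl⟩ := mem_image.1 hA
    simp only [zs, mem_filter] at ha
    simpa [Tset, f] using congrFun ha.2 i
  · intro A hA
    obtain ⟨a, ha, rfl⟩ := mem_image.1 hA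
    simp only [zs, mem_filter] at ha
    refine le_of_eq ?_
    simp only [f]
    rw [← Fintype.prod_prod_type' (f := fun i k => u (a (i, k)) ^ (d - 1)), prod_pow,
      prod_cnt u a, mem_orb.1 ha.1]
    congr 1
    unfold Q
    refine prod_congr rfl fun j _ => ?_
    rw [cnt_lft, pow_mul, hud, Fintype.card_fin]

/-- The polynomial factor lost in the entropy estimate `one_le_card_orb_mul_Q` for words of length `n * d`. -/
noncomputable def poly (d p n : ℕ) : ℝ := (Real.exp 1 * ((n * d : ℕ) + 1)) ^ p

lemma one_le_orb_Q (hd : 0 < d) {n : ℕ} (v : Fin n → ZMod p) :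
    1 ≤ poly d p n * ((orb (lft d v)).card * Q v ^ d) := by
  have := one_le_card_orb_mul_Q (lft d v)
  rw [Q_lft d hd] at this
  simpa [poly] using this

lemma poly_nonneg (d p n : ℕ) : 0 ≤ poly d p n := by unfold poly; positivity

lemma zs_div_le (hd : 3 ≤ d) {n : ℕ} (hn : 0 < n) (v : Fin n → ZMod p) {δ ε θ : ℝ}
    (hθ : ∀ u : ZMod p → ℝ, (∀ j, 0 ≤ u j) → ∑ j, u j ^ d = 1 →
      u 0 ^ d ≤ 1 - δ → (∃ j, (1 + ε) / p ≤ u j ^ d) → G d u ≤ θ)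
    (h0 : (cnt v 0 : ℝ) ≤ (1 - δ) * n) (hj : ∃ j, (1 + ε) / p * n ≤ cnt v j) :
    ((zs d v).card : ℝ) / (orb (lft d v)).card ≤ poly d p n * θ ^ n * Q v := by
  have hnR : (0:ℝ) < n := by exact_mod_cast hn
  let u : ZMod p → ℝ := fun j => ((cnt v j : ℝ) / n) ^ ((d : ℝ)⁻¹)
  have hu : ∀ j, 0 ≤ u j := fun j => by positivity
  have hud : ∀ j, u j ^ d = (cnt v j : ℝ) / n := fun j =>
    Real.rpow_inv_natCast_pow (by positivity) (by omega)
  have hG : G d u ≤ θ := by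
    refine hθ u hu ?_ ?_ ?_
    · simp_rw [hud]
      rw [← sum_div, ← Nat.cast_sum, sum_cnt]
      simp [hnR.ne']
    · rw [hud, div_le_iff₀ hnR]; exact h0
    · obtain ⟨j, hj⟩ := hj
      exact ⟨j, by rw [hud, le_div_iff₀ hnR]; exact hj⟩
  have h1 := (zs_mul_le v u hu hud).trans (pow_le_pow_left₀
    (sum_nonneg fun _ _ => prod_nonneg fun _ _ => pow_nonneg (hu _) _) hG n)
  have h2 := one_le_orb_Q (d := d) (by omega) v
  have h3 : (0:ℝ) < (orb (lft d v)).card := by exact_mod_cast card_orb_pos _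
  have hQ := Q_nonneg v
  have hP := poly_nonneg d p n
  have hQd : Q v ^ d = Q v ^ (d - 1) * Q v := by
    rw [← pow_succ]; congr 1; omega
  rw [div_le_iff₀ h3]
  calc ((zs d v).card : ℝ) = (zs d v).card * 1 := by ring
    _ ≤ (zs d v).card * (poly d p n * ((orb (lft d v)).card * Q v ^ d)) := by gcongr
    _ = ((zs d v).card * Q v ^ (d - 1)) * (poly d p n * (orb (lft d v)).card * Q v) := by
        rw [hQd]; ring
    _ ≤ θ ^ n * (poly d p n * (orb (lft d v)).card * Q v) := by gcongr
    _ = _ := by ring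

lemma tendsto_poly (d p : ℕ) {θ : ℝ} (h0 : 0 ≤ θ) (h1 : θ < 1) :
    Filter.Tendsto (fun n : ℕ => poly d p n * ((n : ℝ) + 1) ^ p * θ ^ n) Filter.atTop (nhds 0) := by
  have h := (tendsto_pow_const_mul_const_pow_of_lt_one (2 * p) h0 h1).const_mul
    ((Real.exp 1 * (d + 1)) ^ p * 2 ^ p)
  rw [mul_zero] at h
  refine squeeze_zero' (Filter.Eventually.of_forall fun n => ?_) ?_ h
  · have := poly_nonneg d p n; positivity
  filter_upwards [Filter.eventually_ge_atTop 1] with n hn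
  have hnR : (1:ℝ) ≤ n := by exact_mod_cast hn
  have e : (Real.exp 1 * (d + 1)) ^ p * 2 ^ p * ((n:ℝ) ^ (2 * p) * θ ^ n)
      = (Real.exp 1 * ((d + 1) * n)) ^ p * (2 * n) ^ p * θ ^ n := by
    rw [two_mul, pow_add]; simp only [mul_pow]; ring
  rw [e]
  unfold poly
  gcongr
  · push_cast; nlinarith
  · linarith

/-- The types that are neither close to `0` nor close to uniform contribute exponentially little. -/
lemma tendsto_bulk (hd : 3 ≤ d) (hpd : (d : ZMod p) ≠ 0) (δ ε : ℝ) (hδ : 0 < δ) (hε : 0 < ε) :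
    Filter.Tendsto (fun n : ℕ => ∑ v ∈ univ.filter (fun v : Fin n → ZMod p =>
      (cnt v 0 : ℝ) ≤ (1 - δ) * n ∧ ∃ j, (1 + ε) / p * n ≤ cnt v j),
        ((zs d v).card : ℝ) / (orb (lft d v)).card) Filter.atTop (nhds 0) := by
  obtain ⟨θ, h0, h1, hθ⟩ := exists_theta (d := d) (p := p) hd hpd δ ε hδ hε
  refine squeeze_zero' (Filter.Eventually.of_forall fun n => sum_nonneg fun _ _ => by positivity) ?_
    (tendsto_poly d p h0 h1)
  filter_upwards [Filter.eventually_ge_atTop 1] with n hn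
  have hP := poly_nonneg d p n
  calc _ ≤ ∑ v ∈ univ.filter (fun v : Fin n → ZMod p =>
      (cnt v 0 : ℝ) ≤ (1 - δ) * n ∧ ∃ j, (1 + ε) / p * n ≤ cnt v j), poly d p n * θ ^ n * Q v := by
        refine sum_le_sum fun v hv => ?_
        have hv := (mem_filter.1 hv).2
        exact zs_div_le hd hn v hθ hv.1 hv.2
    _ ≤ ∑ v : Fin n → ZMod p, poly d p n * θ ^ n * Q v :=
        sum_le_univ_sum_of_nonneg fun v => by have := Q_nonneg v; positivity
    _ ≤ poly d p n * θ ^ n * ((n : ℝ) + 1) ^ p := by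
        rw [← mul_sum]
        gcongr
        simpa using sum_Q_le (ι := Fin n) (κ := ZMod p)
    _ = _ := by ring

end

/-! ### Types close to uniform -/

section
variable {p : ℕ} [Fact p.Prime] {d : ℕ}

/-- The words in which no letter occurs with frequency `(1 + ε) / p` or more. -/
noncomputable def balanced (p n : ℕ) [NeZero p] (ε : ℝ) : Finset (Fin n → ZMod p) :=
  univ.filter fun v => ∀ j, (cnt v j : ℝ) < (1 + ε) / p * n

/-- Chernoff bound with exponential tilt `1 + ε` for the letter `j`; the rate is below one since
`ε < (1 + ε) log (1 + ε)`. -/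
lemma card_large_le (p : ℕ) [Fact p.Prime] (ε : ℝ) (hε : 0 < ε) :
    ∃ r : ℝ, 0 ≤ r ∧ r < 1 ∧ ∀ (n : ℕ) (j : ZMod p),
      ((univ.filter fun v : Fin n → ZMod p => (1 + ε) / p * n ≤ cnt v j).card : ℝ)
        ≤ (p : ℝ) ^ n * r ^ n := by
  have hp : (0:ℝ) < p := by exact_mod_cast (Fact.out : p.Prime).pos
  set t : ℝ := 1 + ε with ht
  have ht0 : 0 < t := by linarith
  refine ⟨(1 + ε / p) * t ^ (-(t / p)), by positivity, ?_, fun n j => ?_⟩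
  · have h1 : ε < t * Real.log t := by
      have := Real.log_lt_sub_one_of_pos (x := t⁻¹) (by positivity) (by
        rw [ne_eq, inv_eq_one]; linarith)
      rw [Real.log_inv] at this
      have h2 := mul_lt_mul_of_pos_left this ht0
      rw [mul_sub, mul_inv_cancel₀ ht0.ne'] at h2
      linarith
    have h2 : 1 + ε / p ≤ Real.exp (ε / p) := by linarith [Real.add_one_le_exp (ε / p)]
    calc (1 + ε / p) * t ^ (-(t / p)) ≤ Real.exp (ε / p) * t ^ (-(t / p)) := by gcongr
      _ = Real.exp ((ε - t * Real.log t) / p) := by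
          rw [Real.rpow_def_of_pos ht0, ← Real.exp_add]; congr 1; ring
      _ < 1 := by
          rw [Real.exp_lt_one_iff]
          exact div_neg_of_neg_of_pos (by linarith) hp
  · have h := gen_bound (ι := Fin n) (univ : Finset (ZMod p)) (fun b => if b = j then t else 1)
      (fun r => by split_ifs <;> positivity)
      (univ.filter fun v : Fin n → ZMod p => t / p * n ≤ cnt v j) (t ^ (t / p * n)) (by simp)
      (fun v hv => by
        have e : ∏ i, (if v i = j then t else 1) = t ^ cnt v j := by
          rw [prod_ite]; simp [cnt]
        rw [e, ← Real.rpow_natCast]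
        exact Real.rpow_le_rpow_of_exponent_le (by linarith) (mem_filter.1 hv).2)
    have e : ∑ b : ZMod p, (if b = j then t else 1) = p * (1 + ε / p) := by
      have : ∀ b : ZMod p, (if b = j then t else 1) = 1 + if b = j then ε else 0 := fun b => by
        split_ifs <;> simp [ht]
      simp_rw [this, sum_add_distrib]
      simp [ZMod.card]
      field_simp
    rw [e, Fintype.card_fin] at h
    have hx : 0 < t ^ (t / p * n) := by positivity
    rw [← le_div_iff₀ hx] at h
    refine h.trans (le_of_eq ?_)
    rw [mul_pow, mul_pow, ← Real.rpow_natCast (t ^ (-(t/p))), ← Real.rpow_mul ht0.le, neg_mul,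
      Real.rpow_neg ht0.le]
    ring

lemma tendsto_unbalanced (p : ℕ) [Fact p.Prime] (ε : ℝ) (hε : 0 < ε) :
    Filter.Tendsto (fun n : ℕ => (((balanced p n ε)ᶜ.card : ℕ) : ℝ) / (p : ℝ) ^ n)
      Filter.atTop (nhds 0) := by
  obtain ⟨r, h0, h1, hr⟩ := card_large_le p ε hε
  have hp : (0:ℝ) < p := by exact_mod_cast (Fact.out : p.Prime).pos
  have ht := (tendsto_pow_atTop_nhds_zero_of_lt_one h0 h1).const_mul (p : ℝ)
  rw [mul_zero] at ht
  refine squeeze_zero (fun n => by positivity) (fun n => ?_) ht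
  rw [div_le_iff₀ (by positivity)]
  have hsub : (balanced p n ε)ᶜ ⊆ univ.biUnion fun j : ZMod p =>
      univ.filter fun v : Fin n → ZMod p => (1 + ε) / p * n ≤ cnt v j := by
    intro v hv
    simp only [balanced, mem_compl, mem_filter, mem_univ, true_and, not_forall, not_lt] at hv
    simpa using hv
  have h2 := (card_le_card hsub).trans card_biUnion_le
  calc (((balanced p n ε)ᶜ.card : ℕ) : ℝ)
      ≤ ∑ j : ZMod p, ((univ.filter fun v : Fin n → ZMod p =>
          (1 + ε) / p * n ≤ cnt v j).card : ℝ) := by exact_mod_cast h2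
    _ ≤ ∑ _j : ZMod p, (p : ℝ) ^ n * r ^ n := sum_le_sum fun j _ => hr n j
    _ = _ := by simp [ZMod.card]; ring

lemma card_sum_eq_zero (p : ℕ) [Fact p.Prime] {n : ℕ} (hn : 0 < n) :
    (p : ℝ) * (univ.filter fun v : Fin n → ZMod p => ∑ i, v i = 0).card = (p : ℝ) ^ n := by
  let i₀ : Fin n := ⟨0, hn⟩
  have h : ∀ s : ZMod p, (univ.filter fun v : Fin n → ZMod p => ∑ i, v i = s).card
      = (univ.filter fun v : Fin n → ZMod p => ∑ i, v i = 0).card := by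
    intro s
    refine Finset.card_bij' (fun v _ => v - Pi.single i₀ s) (fun v _ => v + Pi.single i₀ s) ?_ ?_
      (by simp) (by simp)
    · intro v hv
      simp only [mem_filter, mem_univ, true_and] at hv ⊢
      simp [hv]
    · intro v hv
      simp only [mem_filter, mem_univ, true_and] at hv ⊢
      simp [sum_add_distrib, hv]
  have h2 := Finset.card_eq_sum_card_fiberwise (f := fun v : Fin n → ZMod p => ∑ i, v i)
    (s := univ) (t := univ) (by simp)
  simp only [h] at h2
  simp [ZMod.card] at h2
  exact_mod_cast h2.symm

/-- Fourier inversion for `#zs`. The constant frequencies contribute `p` if `∑ v = 0` and `0` otherwise,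
the other ones are bounded by `ker`. -/
lemma abs_zs_sub_le (hpd : (d : ZMod p) ≠ 0) {n : ℕ} (hn : 0 < n) (v : Fin n → ZMod p) :
    |((zs d v).card : ℝ) / (orb (lft d v)).card - (if ∑ i, v i = 0 then (p:ℝ) else 0) / (p:ℝ) ^ n|
      ≤ (∑ w ∈ univ.filter (fun w : Fin n → ZMod p => ¬ ∃ c, w = fun _ => c), ker d w v)
          / (p:ℝ) ^ n := by
  have hp : (0:ℝ) < p := by exact_mod_cast (Fact.out : p.Prime).pos
  have hp' : (p:ℂ) ≠ 0 := by exact_mod_cast hp.ne'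
  have ho : (0:ℝ) < (orb (lft d v)).card := by exact_mod_cast card_orb_pos _
  have ho' : ((orb (lft d v)).card : ℂ) ≠ 0 := by exact_mod_cast ho.ne'
  have h1 := sum_Ks d v
  rw [← sum_filter_add_sum_filter_not univ (fun w : Fin n → ZMod p => ∃ c, w = fun _ => c)] at h1
  have h2 : univ.filter (fun w : Fin n → ZMod p => ∃ c, w = fun _ => c)
      = univ.image (fun c : ZMod p => (fun _ : Fin n => c)) := by
    ext w; simp [eq_comm]
  have h3 : ∑ w ∈ univ.filter (fun w : Fin n → ZMod p => ∃ c, w = fun _ => c),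
      Ks (lft d w) (lft d v) = (if ∑ i, v i = 0 then (p:ℂ) else 0) * (orb (lft d v)).card := by
    rw [h2, sum_image (fun c _ c' _ h => congrFun h ⟨0, hn⟩)]
    have hs : ∑ x, lft d v x = (d : ZMod p) * ∑ i, v i := by
      rw [Fintype.sum_prod_type]; simp [lft, mul_sum]
    have h4 : ∀ c : ZMod p, Ks (lft d fun _ : Fin n => c) (lft d v)
        = ZMod.stdAddChar (c * ((d : ZMod p) * ∑ i, v i)) * (orb (lft d v)).card := by
      intro c
      rw [← hs, ← Ks_zero, ← Ks_shift]
      congr 1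
      funext x; simp [lft]
    simp_rw [h4]
    rw [← sum_mul, AddChar.sum_mulShift _ (ZMod.isPrimitive_stdAddChar p)]
    simp [hpd, ZMod.card]
  rw [h3] at h1
  set R := ∑ w ∈ univ.filter (fun w : Fin n → ZMod p => ¬ ∃ c, w = fun _ => c),
      Ks (lft d w) (lft d v) with hR
  have h5 : ((((zs d v).card : ℝ) / (orb (lft d v)).card
      - (if ∑ i, v i = 0 then (p:ℝ) else 0) / (p:ℝ) ^ n : ℝ) : ℂ)
      = R / (orb (lft d v)).card / (p:ℂ) ^ n := by
    have : R = (p : ℂ) ^ n * (zs d v).card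
        - (if ∑ i, v i = 0 then (p:ℂ) else 0) * (orb (lft d v)).card := by
      rw [← h1]; ring
    rw [this]
    push_cast
    split_ifs <;> push_cast <;> field_simp
  rw [← Real.norm_eq_abs, ← Complex.norm_real, h5, norm_div, norm_div]
  simp only [norm_pow, Complex.norm_natCast, ker]
  rw [← sum_div]
  gcongr
  exact norm_sum_le _ _

lemma cnt_sub {n : ℕ} (w : Fin n → ZMod p) (c : ZMod p) :
    cnt (fun i => w i + -c) 0 = cnt w c := by
  unfold cnt; congr 1; ext i; simp [add_neg_eq_zero]

lemma ker_nonneg {n : ℕ} (w v : Fin n → ZMod p) : 0 ≤ ker d w v := by unfold ker; positivity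

/-- A nonconstant frequency in which some letter `c` has frequency above `1 - δ` is `c` plus a nonzero word
of small weight, and `ker` is invariant under this translation. -/
lemma sum_nonconst_le {n : ℕ} (δ : ℝ) (U : Finset (Fin n → ZMod p)) :
    ∑ w ∈ univ.filter (fun w : Fin n → ZMod p => ¬ ∃ c, w = fun _ => c), ∑ v ∈ U, ker d w v
      ≤ ∑ w ∈ univ.filter (fun w : Fin n → ZMod p => ∀ j, (cnt w j : ℝ) ≤ (1 - δ) * n),
          ∑ v ∈ U, ker d w v
        + p * ((p:ℝ) ^ n * ∑ w ∈ univ.filter (fun w : Fin n → ZMod p =>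
            w ≠ 0 ∧ (wt w : ℝ) ≤ δ * n), B d w) := by
  classical
  set F : (Fin n → ZMod p) → ℝ := fun w => ∑ v ∈ U, ker d w v with hF
  have hF0 : ∀ w, 0 ≤ F w := fun w => sum_nonneg fun v _ => ker_nonneg w v
  have hFs : ∀ w (c : ZMod p), F (fun i => w i + c) = F w := fun w c => by
    simp only [hF, ker_shift]
  have hFB : ∀ w, F w ≤ (p:ℝ) ^ n * B d w := fun w =>
    (sum_le_univ_sum_of_nonneg fun v => ker_nonneg w v).trans (sum_ker_le d w)
  let P : (Fin n → ZMod p) → Prop := fun w => w ≠ 0 ∧ (wt w : ℝ) ≤ δ * n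
  have h1 : ∀ w : Fin n → ZMod p, (if ¬ ∃ c, w = fun _ => c then F w else 0)
      ≤ (if ∀ j, (cnt w j : ℝ) ≤ (1 - δ) * n then F w else 0)
        + ∑ c : ZMod p, if P (fun i => w i + -c) then F w else 0 := by
    intro w
    have hnn : ∀ c : ZMod p, 0 ≤ if P (fun i => w i + -c) then F w else 0 := fun c => by
      split_ifs
      exacts [hF0 w, le_refl _]
    by_cases hb : ∀ j, (cnt w j : ℝ) ≤ (1 - δ) * n
    · rw [if_pos hb]
      refine le_add_of_le_of_nonneg ?_ (sum_nonneg fun c _ => hnn c)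
      split_ifs
      exacts [hF0 w, le_refl _]
    rw [if_neg hb, zero_add]
    by_cases hc : ∃ c, w = fun _ => c
    · rw [if_neg (not_not.2 hc)]; exact sum_nonneg fun c _ => hnn c
    rw [if_pos hc]
    push Not at hb
    obtain ⟨c, hcw⟩ := hb
    have hP : P (fun i => w i + -c) := by
      refine ⟨fun h => hc ⟨c, ?_⟩, ?_⟩
      · funext i
        have := congrFun h i
        simpa [add_neg_eq_zero] using this
      · have := cnt_add_wt (fun i => w i + -c)
        rw [cnt_sub, Fintype.card_fin] at this
        have : (cnt w c : ℝ) + wt (fun i => w i + -c) = n := by exact_mod_cast this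
        linarith
    refine le_trans ?_ (single_le_sum (fun c _ => hnn c) (mem_univ c))
    rw [if_pos hP]
  rw [sum_filter, sum_filter]
  refine (sum_le_sum fun w _ => h1 w).trans ?_
  rw [sum_add_distrib]
  refine add_le_add le_rfl ?_
  rw [sum_comm]
  have h2 : ∀ c : ZMod p, ∑ w : Fin n → ZMod p, (if P (fun i => w i + -c) then F w else 0)
      ≤ (p:ℝ) ^ n * ∑ w ∈ univ.filter (fun w : Fin n → ZMod p =>
            w ≠ 0 ∧ (wt w : ℝ) ≤ δ * n), B d w := by
    intro c
    rw [← Equiv.sum_comp (Equiv.addRight (fun _ : Fin n => c)), mul_sum, sum_filter]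
    refine sum_le_sum fun w _ => ?_
    have e1 : (fun i => (Equiv.addRight (fun _ : Fin n => c)) w i + -c) = w := by
      funext i; simp
    have e2 : F ((Equiv.addRight (fun _ : Fin n => c)) w) = F w := hFs w c
    rw [e1, e2]
    split_ifs
    exacts [hFB w, le_rfl]
  refine (sum_le_sum fun c _ => h2 c).trans ?_
  simp [ZMod.card]

/-- `norm_Ks_sq_le` gives `ker² ≤ p ^ (n d) / (#orb (lft d w) * #orb (lft d v))`, and the orbit sizes are
bounded below by entropy. As `d ≥ 3`, one of the `d` factors `Q w` is available for decay after taking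
the square root and leaving the summable factor `Q w`. -/
lemma ker_bulk_le (hd : 3 ≤ d) {n : ℕ} (hn : 0 < n) {δ ε : ℝ} (hδ1 : δ ≤ 1) (hε : 0 < ε)
    (w v : Fin n → ZMod p) (hv : v ∈ balanced p n ε) (hw : ∀ j, (cnt w j : ℝ) ≤ (1 - δ) * n) :
    ker d w v ≤ poly d p n * Q w * √((1 + ε) ^ d * (1 - δ)) ^ n := by
  have hp : (0:ℝ) < p := by exact_mod_cast (Fact.out : p.Prime).pos
  have hnR : (0:ℝ) < n := by exact_mod_cast hn
  have how : (0:ℝ) < (orb (lft d w)).card := by exact_mod_cast card_orb_pos _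
  have hov : (0:ℝ) < (orb (lft d v)).card := by exact_mod_cast card_orb_pos _
  have hP := poly_nonneg d p n
  have hQw := Q_nonneg w
  have hQv := Q_nonneg v
  have hδ' : 0 ≤ 1 - δ := by linarith
  have h1 := norm_Ks_sq_le (lft d w) (lft d v)
  have hv' : Q v ≤ ((1 + ε) / p) ^ n := by
    have := Q_le_pow v ((1 + ε) / p) fun j => by
      rw [Fintype.card_fin, div_le_iff₀ hnR]
      exact ((mem_filter.1 hv).2 j).le
    simpa using this
  have hw' : Q w ≤ (1 - δ) ^ n := by
    have := Q_le_pow w (1 - δ) fun j => by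
      rw [Fintype.card_fin, div_le_iff₀ hnR]
      exact hw j
    simpa using this
  have h2 := one_le_orb_Q (d := d) (by omega) w
  have h3 := one_le_orb_Q (d := d) (by omega) v
  have hker : ker d w v ^ 2 * ((orb (lft d w)).card * (orb (lft d v)).card) ≤ (p:ℝ) ^ (n * d) := by
    unfold ker
    rw [div_pow]
    simp only [Fintype.card_prod, Fintype.card_fin] at h1
    have : ‖Ks (lft d w) (lft d v)‖ ^ 2 / ((orb (lft d v)).card : ℝ) ^ 2 *
        ((orb (lft d w)).card * (orb (lft d v)).card)
        = ((orb (lft d w)).card * ‖Ks (lft d w) (lft d v)‖ ^ 2) / (orb (lft d v)).card := by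
      field_simp
    rw [this, div_le_iff₀ hov]
    exact h1
  have hQd : Q w ^ d ≤ Q w ^ 2 * (1 - δ) ^ n := by
    obtain ⟨e, rfl⟩ : ∃ e, d = e + 3 := ⟨d - 3, by omega⟩
    calc Q w ^ (e + 3) = Q w ^ 2 * (Q w ^ e * Q w) := by ring
      _ ≤ Q w ^ 2 * (1 * (1 - δ) ^ n) := by
          gcongr
          exact pow_le_one₀ hQw (Q_le_one w)
      _ = _ := by ring
  have hQvd : (p:ℝ) ^ (n * d) * Q v ^ d ≤ ((1 + ε) ^ d) ^ n := by
    calc (p:ℝ) ^ (n * d) * Q v ^ d ≤ (p:ℝ) ^ (n * d) * (((1 + ε) / p) ^ n) ^ d := by gcongr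
      _ = _ := by
          rw [← pow_mul, div_pow, mul_div_cancel₀ _ (by positivity), ← pow_mul, mul_comm n]
  refine le_of_sq_le_sq ?_ (by positivity)
  calc ker d w v ^ 2 = ker d w v ^ 2 * (1 * 1) := by ring
    _ ≤ ker d w v ^ 2 * ((poly d p n * ((orb (lft d w)).card * Q w ^ d)) *
          (poly d p n * ((orb (lft d v)).card * Q v ^ d))) := by gcongr
    _ = (ker d w v ^ 2 * ((orb (lft d w)).card * (orb (lft d v)).card)) *
          (poly d p n ^ 2 * Q w ^ d * Q v ^ d) := by ring
    _ ≤ (p:ℝ) ^ (n * d) * (poly d p n ^ 2 * Q w ^ d * Q v ^ d) := by gcongr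
    _ = poly d p n ^ 2 * Q w ^ d * ((p:ℝ) ^ (n * d) * Q v ^ d) := by ring
    _ ≤ poly d p n ^ 2 * (Q w ^ 2 * (1 - δ) ^ n) * ((1 + ε) ^ d) ^ n := by gcongr
    _ = poly d p n ^ 2 * Q w ^ 2 * ((1 + ε) ^ d * (1 - δ)) ^ n := by rw [mul_pow]; ring
    _ = _ := by
        rw [mul_pow _ (_ ^ n) 2, mul_pow _ (Q w) 2, pow_right_comm, Real.sq_sqrt (by positivity)]

lemma sum_bulk_le (hd : 3 ≤ d) {n : ℕ} (hn : 0 < n) {δ ε : ℝ} (hδ1 : δ ≤ 1) (hε : 0 < ε) :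
    ∑ w ∈ univ.filter (fun w : Fin n → ZMod p => ∀ j, (cnt w j : ℝ) ≤ (1 - δ) * n),
          ∑ v ∈ balanced p n ε, ker d w v
      ≤ (p:ℝ) ^ n * (poly d p n * ((n:ℝ) + 1) ^ p * √((1 + ε) ^ d * (1 - δ)) ^ n) := by
  have hP := poly_nonneg d p n
  have hcard : ((balanced p n ε).card : ℝ) ≤ (p:ℝ) ^ n := by
    have := card_le_univ (balanced p n ε)
    simp [ZMod.card] at this
    exact_mod_cast this
  calc _ ≤ ∑ w ∈ univ.filter (fun w : Fin n → ZMod p => ∀ j, (cnt w j : ℝ) ≤ (1 - δ) * n),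
          (p:ℝ) ^ n * (poly d p n * Q w * √((1 + ε) ^ d * (1 - δ)) ^ n) := by
        refine sum_le_sum fun w hw => ?_
        have hQ := Q_nonneg w
        refine (sum_le_card_nsmul _ _ _ fun v hv =>
          ker_bulk_le hd hn hδ1 hε w v hv (mem_filter.1 hw).2).trans ?_
        rw [nsmul_eq_mul]
        gcongr
    _ ≤ ∑ w : Fin n → ZMod p, (p:ℝ) ^ n * (poly d p n * Q w * √((1 + ε) ^ d * (1 - δ)) ^ n) :=
        sum_le_univ_sum_of_nonneg fun w => by have := Q_nonneg w; positivity
    _ = (p:ℝ) ^ n * (poly d p n * (∑ w : Fin n → ZMod p, Q w) *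
          √((1 + ε) ^ d * (1 - δ)) ^ n) := by
        rw [← mul_sum, ← sum_mul, ← mul_sum]
    _ ≤ _ := by
        gcongr
        simpa using sum_Q_le (ι := Fin n) (κ := ZMod p)

lemma abs_sum_sub_one_le (hd : 3 ≤ d) (hpd : (d : ZMod p) ≠ 0) {n : ℕ} (hn : 0 < n) {δ ε : ℝ}
    (hδ1 : δ ≤ 1) (hε : 0 < ε) (hε1 : ε < 1) :
    |∑ v ∈ univ.filter (fun v : Fin n → ZMod p => v ≠ 0),
        ((zs d v).card : ℝ) / (orb (lft d v)).card - 1| ≤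
      poly d p n * ((n:ℝ) + 1) ^ p * √((1 + ε) ^ d * (1 - δ)) ^ n
      + p * ∑ w ∈ univ.filter (fun w : Fin n → ZMod p => w ≠ 0 ∧ (wt w : ℝ) ≤ δ * n), B d w
      + p * ((((balanced p n ε)ᶜ.card : ℕ) : ℝ) / (p : ℝ) ^ n)
      + ∑ w ∈ univ.filter (fun w : Fin n → ZMod p => w ≠ 0 ∧ (wt w : ℝ) ≤ δ * n), B d w
      + ∑ v ∈ univ.filter (fun v : Fin n → ZMod p =>
          (cnt v 0 : ℝ) ≤ (1 - δ) * n ∧ ∃ j, (1 + ε) / p * n ≤ cnt v j),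
            ((zs d v).card : ℝ) / (orb (lft d v)).card := by
  classical
  have hp : (0:ℝ) < p := by exact_mod_cast (Fact.out : p.Prime).pos
  have hp2 : (2:ℝ) ≤ p := by exact_mod_cast (Fact.out : p.Prime).two_le
  have hnR : (0:ℝ) < n := by exact_mod_cast hn
  have hpn : (0:ℝ) < (p:ℝ) ^ n := by positivity
  set a : (Fin n → ZMod p) → ℝ := fun v => ((zs d v).card : ℝ) / (orb (lft d v)).card with ha
  have ha0 : ∀ v, 0 ≤ a v := fun v => by simp only [ha]; positivity
  set U := balanced p n ε with hU
  set E := ∑ w ∈ univ.filter (fun w : Fin n → ZMod p => w ≠ 0 ∧ (wt w : ℝ) ≤ δ * n), B d w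
  set M := ∑ v ∈ univ.filter (fun v : Fin n → ZMod p =>
          (cnt v 0 : ℝ) ≤ (1 - δ) * n ∧ ∃ j, (1 + ε) / p * n ≤ cnt v j), a v
  have h0U : (0 : Fin n → ZMod p) ∉ U := by
    intro h
    have := (mem_filter.1 h).2 0
    have e : cnt (0 : Fin n → ZMod p) 0 = n := by simp [cnt]
    rw [e] at this
    have h2 : (1 + ε) / p < 1 := by rw [div_lt_one hp]; linarith
    nlinarith
  have hsplit : ∑ v ∈ univ.filter (fun v : Fin n → ZMod p => v ≠ 0), a v
      = ∑ v ∈ U, a v + ∑ v ∈ univ.filter (fun v : Fin n → ZMod p => v ≠ 0 ∧ v ∉ U), a v := by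
    rw [← sum_filter_add_sum_filter_not (univ.filter (fun v : Fin n → ZMod p => v ≠ 0)) (· ∈ U),
      filter_filter, filter_filter]
    congr 2
    ext v
    simp only [mem_filter, mem_univ, true_and]
    exact ⟨fun h => h.2, fun h => ⟨fun h' => h0U (h' ▸ h), h⟩⟩
  have hout : ∑ v ∈ univ.filter (fun v : Fin n → ZMod p => v ≠ 0 ∧ v ∉ U), a v ≤ E + M := by
    have h1 : univ.filter (fun v : Fin n → ZMod p => v ≠ 0 ∧ v ∉ U) ⊆
        univ.filter (fun w : Fin n → ZMod p => w ≠ 0 ∧ (wt w : ℝ) ≤ δ * n) ∪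
        univ.filter (fun v : Fin n → ZMod p =>
          (cnt v 0 : ℝ) ≤ (1 - δ) * n ∧ ∃ j, (1 + ε) / p * n ≤ cnt v j) := by
      intro v hv
      simp only [mem_filter, mem_univ, true_and, mem_union, hU, balanced, not_forall, not_lt]
        at hv ⊢
      by_cases h : (wt v : ℝ) ≤ δ * n
      · exact Or.inl ⟨hv.1, h⟩
      · refine Or.inr ⟨?_, hv.2⟩
        have := cnt_add_wt v
        rw [Fintype.card_fin] at this
        have : (cnt v 0 : ℝ) + wt v = n := by exact_mod_cast this
        linarith
    refine (sum_le_sum_of_subset_of_nonneg h1 fun v _ _ => ha0 v).trans ?_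
    have h2 : ∀ s t : Finset (Fin n → ZMod p), ∑ v ∈ s ∪ t, a v ≤ ∑ v ∈ s, a v + ∑ v ∈ t, a v := by
      intro s t
      rw [← sum_union_inter]
      exact le_add_of_nonneg_right (sum_nonneg fun v _ => ha0 v)
    refine (h2 _ _).trans ?_
    gcongr ?_ + ?_
    · exact sum_le_sum fun v _ => zs_div_le_B d v
    · exact le_rfl
  have hout0 : 0 ≤ ∑ v ∈ univ.filter (fun v : Fin n → ZMod p => v ≠ 0 ∧ v ∉ U), a v :=
    sum_nonneg fun v _ => ha0 v
  have hUsum : |∑ v ∈ U, a v - ∑ v ∈ U, (if ∑ i, v i = 0 then (p:ℝ) else 0) / (p:ℝ) ^ n|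
      ≤ poly d p n * ((n:ℝ) + 1) ^ p * √((1 + ε) ^ d * (1 - δ)) ^ n + p * E := by
    rw [← sum_sub_distrib]
    refine (abs_sum_le_sum_abs _ _).trans ?_
    refine (sum_le_sum fun v _ => abs_zs_sub_le hpd hn v).trans ?_
    rw [← sum_div, div_le_iff₀ hpn, sum_comm]
    refine (sum_nonconst_le δ U).trans ?_
    have := sum_bulk_le (p := p) hd hn hδ1 hε
    linarith
  have hmain : |∑ v ∈ U, (if ∑ i, v i = 0 then (p:ℝ) else 0) / (p:ℝ) ^ n - 1|
      ≤ p * ((((balanced p n ε)ᶜ.card : ℕ) : ℝ) / (p : ℝ) ^ n) := by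
    have hall : ∑ v : Fin n → ZMod p, (if ∑ i, v i = 0 then (p:ℝ) else 0) / (p:ℝ) ^ n = 1 := by
      rw [← sum_div, ← sum_filter, sum_const, nsmul_eq_mul, mul_comm, card_sum_eq_zero p hn,
        div_self hpn.ne']
    rw [← hall, ← sum_add_sum_compl U, sub_add_cancel_left, abs_neg]
    refine (abs_sum_le_sum_abs _ _).trans ?_
    refine (sum_le_card_nsmul _ _ ((p:ℝ) / (p:ℝ) ^ n) fun v _ => ?_).trans (le_of_eq ?_)
    · rw [abs_of_nonneg (by split_ifs <;> positivity)]
      gcongr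
      split_ifs
      exacts [le_rfl, hp.le]
    · rw [nsmul_eq_mul]; ring
  rw [hsplit]
  rw [abs_le] at *
  constructor <;> linarith [hUsum.1, hUsum.2, hmain.1, hmain.2]

theorem tendsto_sum (hd : 3 ≤ d) (hpd : (d : ZMod p) ≠ 0) :
    Filter.Tendsto (fun n : ℕ => ∑ v ∈ univ.filter (fun v : Fin n → ZMod p => v ≠ 0),
        ((zs d v).card : ℝ) / (orb (lft d v)).card) Filter.atTop (nhds 1) := by
  obtain ⟨δ, hδ, hδ2, hnear⟩ := exists_near_zero p d hd
  obtain ⟨ε, hε, hε1, hlt⟩ : ∃ ε : ℝ, 0 < ε ∧ ε < 1 ∧ (1 + ε) ^ d * (1 - δ) < 1 := by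
    have hc : Filter.Tendsto (fun ε : ℝ => (1 + ε) ^ d * (1 - δ)) (nhdsWithin 0 (Set.Ioi 0))
        (nhds ((1 + 0) ^ d * (1 - δ))) :=
      (Continuous.tendsto (by fun_prop) 0).mono_left nhdsWithin_le_nhds
    have h1 := hc.eventually_lt_const (u := 1) (by simpa using hδ)
    have h2 : ∀ᶠ ε : ℝ in nhdsWithin 0 (Set.Ioi 0), ε ∈ Set.Ioo (0:ℝ) 1 :=
      Ioo_mem_nhdsGT one_pos
    obtain ⟨ε, h⟩ := (h1.and h2).exists
    exact ⟨ε, h.2.1, h.2.2, h.1⟩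
  have hθ : √((1 + ε) ^ d * (1 - δ)) < 1 := by
    rw [Real.sqrt_lt' one_pos]; simpa using hlt
  have ht := ((((tendsto_poly d p (Real.sqrt_nonneg _) hθ).add (hnear.const_mul (p:ℝ))).add
    ((tendsto_unbalanced p ε hε).const_mul (p:ℝ))).add hnear).add
    (tendsto_bulk (p := p) hd hpd δ ε hδ hε)
  simp only [mul_zero, add_zero] at ht
  rw [← tendsto_sub_nhds_zero_iff]
  refine squeeze_zero_norm' ?_ ht
  filter_upwards [Filter.eventually_ge_atTop 1] with n hn
  exact abs_sum_sub_one_le hd hpd hn (by linarith) hε hε1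

end

/-! ### From types to words -/

section
variable {p : ℕ} [Fact p.Prime] {d : ℕ}

/-- The bijection `j ↦ j mod p` from `Fin p` to `ZMod p`. -/
noncomputable def finZ (p : ℕ) [Fact p.Prime] : Fin p ≃ ZMod p :=
  Equiv.ofBijective (fun j => ((j : ℕ) : ZMod p)) (by
    refine (Fintype.bijective_iff_surjective_and_card _).2 ⟨fun x => ?_, by simp [ZMod.card]⟩
    exact ⟨⟨x.val, ZMod.val_lt x⟩, by simp⟩)

lemma finZ_apply (j : Fin p) : finZ p j = ((j : ℕ) : ZMod p) := rfl

/-- Multinomial coefficients do not change when the letters are relabelled by `finZ`. -/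
lemma multinomial_finZ (τ : ZMod p → ℕ) :
    Nat.multinomial univ (fun j : Fin p => τ (finZ p j)) = Nat.multinomial univ τ := by
  simp only [Nat.multinomial]
  rw [Equiv.sum_comp (finZ p) τ, Equiv.prod_comp (finZ p) (fun j => (τ j).factorial)]

lemma card_rows {n : ℕ} (v : Fin n → ZMod p) (ν : Fin p → ℕ)
    (hν : ∀ j, cnt v (finZ p j) = ν j) :
    Nat.card {a : Fin n → Fin d → ZMod p // (∀ i, ∑ k, a i k = 0) ∧
      ∀ j : Fin p, ∑ i, phi (a i) ((j : ℕ) : ZMod p) = d * ν j} = (zs d v).card := by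
  rw [← Nat.card_eq_finsetCard]
  refine (Nat.card_congr ((Equiv.curry (Fin n) (Fin d) (ZMod p)).subtypeEquiv fun A => ?_)).symm
  have hphi : ∀ j, ∑ i, phi (Equiv.curry (Fin n) (Fin d) (ZMod p) A i) j = cnt A j := by
    intro j
    simp only [phi, Nat.card_eq_fintype_card, Fintype.card_subtype, cnt, card_filter,
      Fintype.sum_prod_type]
    rfl
  simp only [zs, mem_filter, mem_orb, hphi, ← finZ_apply, ← hν]
  rw [and_comm]
  refine and_congr ?_ ?_
  · rw [funext_iff]; rfl
  · rw [funext_iff, ← (finZ p).forall_congr_right]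
    simp only [cnt_lft]

/-- The sum over types, each counted with the multinomial number of words of that type, is a sum over
nonzero words. -/
theorem sum_antidiagonal_eq (n : ℕ) :
    ∑ ν ∈ (Finset.Nat.antidiagonalTuple p n).filter (fun ν => ν 0 < n),
          (Nat.multinomial Finset.univ ν : ℝ)
            / (Nat.multinomial Finset.univ (fun j => d * ν j) : ℝ)
            * (Nat.card {a : Fin n → Fin d → ZMod p //
                (∀ i, ∑ k, a i k = 0) ∧
                  ∀ j : Fin p, ∑ i, phi (a i) ((j : ℕ) : ZMod p) = d * ν j} : ℝ)
      = ∑ v ∈ univ.filter (fun v : Fin n → ZMod p => v ≠ 0),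
        ((zs d v).card : ℝ) / (orb (lft d v)).card := by
  have h0 : finZ p 0 = 0 := by
    rw [finZ_apply, Fin.val_zero, Nat.cast_zero]
  rw [← sum_fiberwise_of_maps_to (t := (Finset.Nat.antidiagonalTuple p n).filter (fun ν => ν 0 < n))
    (g := fun v : Fin n → ZMod p => fun j => cnt v (finZ p j))]
  · refine sum_congr rfl fun ν hν => ?_
    rw [mem_filter, Finset.Nat.mem_antidiagonalTuple] at hν
    have hfib : (univ.filter (fun v : Fin n → ZMod p => v ≠ 0)).filter
        (fun v => (fun j => cnt v (finZ p j)) = ν)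
        = univ.filter fun v : Fin n → ZMod p => cnt v = fun j => ν ((finZ p).symm j) := by
      ext v
      simp only [mem_filter, mem_univ, true_and]
      constructor
      · rintro ⟨-, rfl⟩; funext j; simp
      · intro h
        refine ⟨?_, by rw [h]; simp⟩
        rintro rfl
        have := congrFun h 0
        simp only [(finZ p).symm_apply_eq.2 h0.symm] at this
        simp [cnt] at this
        omega
    have hcard : ((univ.filter (fun v : Fin n → ZMod p => v ≠ 0)).filter
        (fun v => (fun j => cnt v (finZ p j)) = ν)).card = Nat.multinomial univ ν := by
      rw [hfib, card_filter_cnt, ← multinomial_finZ]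
      · simp
      · rw [Equiv.sum_comp (finZ p).symm ν, hν.1]; simp
    rw [← hcard, div_mul_eq_mul_div, mul_div_assoc, ← nsmul_eq_mul, ← sum_const]
    refine sum_congr rfl fun v hv => ?_
    have hv' := (mem_filter.1 hv).2
    rw [card_rows v ν (congrFun hv'), card_orb, ← multinomial_finZ]
    simp_rw [cnt_lft]
    simp [← hv']
  · intro v hv
    simp only [mem_filter, mem_univ, true_and] at hv
    rw [mem_filter, Finset.Nat.mem_antidiagonalTuple]
    refine ⟨?_, ?_⟩
    · rw [Equiv.sum_comp (finZ p) (cnt v), sum_cnt]; simp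
    · simp only [h0]
      have := cnt_add_wt v
      have h2 := mt wt_eq_zero.1 hv
      simp at this
      omega

end

end KeyEst

/-- **key estimate.** For fixed `d ≥ 3` and a prime `p` with `gcd(p,d)=1`,
the sum over all `p`-tuples `(n_0,…,n_{p-1})` of nonnegative integers with `∑ n_j = n` and
`n_0 < n` of `(n choose n_0,…,n_{p-1}) · (dn choose dn_0,…,dn_{p-1})⁻¹ · N_n(n_0,…,n_{p-1})`
converges to `1` as `n → ∞`. -/
theorem stmt4 (d p : ℕ) (hd : 3 ≤ d) [Fact p.Prime] (hgcd : Nat.gcd p d = 1) :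
    Filter.Tendsto
      (fun n : ℕ =>
        ∑ ν ∈ (Finset.Nat.antidiagonalTuple p n).filter (fun ν => ν 0 < n),
          (Nat.multinomial Finset.univ ν : ℝ)
            / (Nat.multinomial Finset.univ (fun j => d * ν j) : ℝ)
            * (Nat.card {a : Fin n → Fin d → ZMod p //
                (∀ i, ∑ k, a i k = 0) ∧
                  ∀ j : Fin p, ∑ i, phi (a i) ((j : ℕ) : ZMod p) = d * ν j} : ℝ))
      Filter.atTop (nhds 1) := by
  have hpd : (d : ZMod p) ≠ 0 := by
    rw [ne_eq, ZMod.natCast_eq_zero_iff]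
    exact (Nat.Prime.coprime_iff_not_dvd Fact.out).1 hgcd
  exact (KeyEst.tendsto_sum hd hpd).congr fun n => (KeyEst.sum_antidiagonal_eq n).symm
end

section
/- Let d ≥ 3 be a fixed integer and p a prime with gcd(p,d) = 1. There exists 𝔟₀ > 0 such that for every 𝔟 ≥ 𝔟₀ there is a constant C > 0 with the following property: for all n ≥ 2, | (1/(nd)!) · Σ_{(n_0,…,n_{p−1}) ∈ E_𝔟(n)} Σ_{v ∈ F_p^n : Φ(v) = (n_0,…,n_{p−1})} #{ permutations 𝒫 of {1,…,n}×{1,…,d} : A(𝒫)·v ≡ 0 (mod p) } − 1 | ≤ C (ln n)^{3/2} / n^{1/2}, where E_𝔟(n) is the set of p-tuples (n_0,…,n_{p−1}) of nonnegative integers with Σ_j n_j = n and Σ_{j=0}^{p−1} (n_j/n − 1/p)² ≤ 𝔟 ln n / n. -/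
set_option linter.unusedSectionVars false

namespace LocalCLT

open Finset

/-! ### Permutations and recolourings -/

/-- The number of points of `α` coloured `b` by `f`. -/
def cnt {α β : Type*} [Fintype α] [DecidableEq β] (f : α → β) (b : β) : ℕ :=
  #{a | f a = b}

section Counting

variable {α β : Type*} [Fintype α] [DecidableEq α] [Fintype β] [DecidableEq β]

lemma exists_perm_of_cnt_eq {f g : α → β} (h : cnt f = cnt g) :
    ∃ σ : Equiv.Perm α, f ∘ σ = g := by
  have e : ∀ b, Nonempty ({a // g a = b} ≃ {a // f a = b}) := fun b => by
    refine ⟨Fintype.equivOfCardEq ?_⟩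
    rw [Fintype.card_subtype, Fintype.card_subtype]
    exact (congrFun h b).symm
  replace e : ∀ b, {a // g a = b} ≃ {a // f a = b} := fun b => (e b).some
  refine ⟨Equiv.ofFiberEquiv e, ?_⟩
  ext a
  exact Equiv.ofFiberEquiv_map e a

lemma cnt_comp_perm (f : α → β) (σ : Equiv.Perm α) : cnt (f ∘ σ) = cnt f := by
  funext b
  unfold cnt
  exact Finset.card_equiv σ (by simp)

/-- A recolouring `g` of `f` is `f ∘ σ` for `∏ b, (cnt f b)!` permutations `σ` when the colour counts
agree (a coset of the stabilizer of `f`), and for none otherwise. -/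
lemma card_perm_fiber (f g : α → β) :
    #{σ : Equiv.Perm α | f ∘ σ = g} = if cnt g = cnt f then ∏ b, (cnt f b).factorial else 0 := by
  split_ifs with h
  · obtain ⟨τ, hτ⟩ := exists_perm_of_cnt_eq h.symm
    have h1 := DomMulAct.stabilizer_card f
    rw [Fintype.card_subtype] at h1
    simp only [Fintype.card_subtype] at h1
    unfold cnt
    rw [← h1]
    refine (Finset.card_equiv (Equiv.mulRight τ) ?_).symm
    intro σ
    simp only [mem_filter, mem_univ, true_and, Equiv.coe_mulRight, Equiv.Perm.coe_mul, ← hτ,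
      ← Function.comp_assoc]
    exact ⟨fun h => by rw [h], fun h => τ.surjective.injective_comp_right h⟩
  · rw [Finset.card_eq_zero, Finset.filter_eq_empty_iff]
    intro σ _ hσ
    exact h (by rw [← hσ, cnt_comp_perm])

/-- Averaging over permutations is averaging over recolourings with the same colour counts. -/
lemma sum_perm_comp (f : α → β) (h : (α → β) → ℝ) :
    ∑ σ : Equiv.Perm α, h (f ∘ σ) =
      (∏ b, ((cnt f b).factorial : ℝ)) * ∑ w ∈ univ.filter (fun w => cnt w = cnt f), h w := by
  rw [← Finset.sum_fiberwise univ (fun σ : Equiv.Perm α => f ∘ σ), Finset.mul_sum,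
    Finset.sum_filter]
  refine Finset.sum_congr rfl fun w _ => ?_
  have : ∀ σ ∈ univ.filter (fun σ : Equiv.Perm α => f ∘ σ = w), h (f ∘ σ) = h w := by
    intro σ hσ
    rw [(mem_filter.1 hσ).2]
  rw [Finset.sum_congr rfl this, Finset.sum_const, card_perm_fiber, nsmul_eq_mul]
  split_ifs with hc <;> simp

lemma prod_comp_eq_pow_cnt {M : Type*} [CommMonoid M] (w : α → β) (q : β → M) :
    ∏ x, q (w x) = ∏ b, q b ^ cnt w b := by
  rw [Finset.prod_comp]
  refine Finset.prod_subset (subset_univ _) fun b _ hb => ?_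
  have : cnt w b = 0 := by
    unfold cnt
    rw [card_eq_zero, filter_eq_empty_iff]
    intro x _ hx
    exact hb (mem_image.2 ⟨x, mem_univ _, hx⟩)
  unfold cnt at this
  rw [this, pow_zero]

lemma sum_cnt (w : α → β) : ∑ b, cnt w b = Fintype.card α := by
  unfold cnt
  rw [← Finset.card_univ]
  exact (Finset.card_eq_sum_card_fiberwise (fun _ _ => mem_univ _)).symm

lemma cnt_comp_fst {n d : ℕ} (v : Fin n → β) (b : β) :
    cnt (fun x : Fin n × Fin d => v x.1) b = d * cnt v b := by
  unfold cnt
  have : (univ.filter fun x : Fin n × Fin d => v x.1 = b) =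
      (univ.filter fun k => v k = b) ×ˢ univ := by
    ext x; simp
  rw [this, card_product, card_univ, Fintype.card_fin, mul_comm]

end Counting

/-- The `k`-th coordinate of `A(P) v` is the sum over the fiber of `k` of the colouring
`x ↦ v x.1` composed with `P`. -/
lemma adjMat_mulVec {n d p : ℕ} (P : Equiv.Perm (Fin n × Fin d)) (v : Fin n → ZMod p)
    (k : Fin n) : ((adjMat n d P).map (Int.cast : ℤ → ZMod p)).mulVec v k =
      ∑ i, v (P (k, i)).1 := by
  simp only [Matrix.mulVec, dotProduct, Matrix.map_apply, adjMat, Matrix.of_apply, Int.cast_natCast,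
    Nat.card_eq_fintype_card, Fintype.card_subtype]
  rw [← Finset.sum_fiberwise univ (fun i => (P (k, i)).1)]
  refine Finset.sum_congr rfl fun l _ => ?_
  have : ∀ i ∈ univ.filter (fun i => (P (k, i)).1 = l), v (P (k, i)).1 = v l := by
    intro i hi
    rw [(mem_filter.1 hi).2]
  rw [Finset.sum_congr rfl this, Finset.sum_const, nsmul_eq_mul]

/-! ### Fourier expansion of the defect -/

section Fourier

/-- The standard additive character `x ↦ exp (2πi x / N)` of `ZMod N`. -/
noncomputable abbrev e {N : ℕ} [NeZero N] (x : ZMod N) : ℂ := ZMod.stdAddChar x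

lemma norm_e {N : ℕ} [NeZero N] (x : ZMod N) : ‖e x‖ = 1 := by
  rw [e, ZMod.stdAddChar_apply]
  exact Circle.norm_coe _

lemma e_add {N : ℕ} [NeZero N] (x y : ZMod N) : e (x + y) = e x * e y :=
  AddChar.map_add_eq_mul _ _ _

lemma e_zero {N : ℕ} [NeZero N] : e (0 : ZMod N) = 1 := AddChar.map_zero_eq_one _

lemma conj_e {N : ℕ} [NeZero N] (x : ZMod N) : (starRingEnd ℂ) (e x) = e (-x) := by
  have h1 : e x * e (-x) = 1 := by rw [← e_add, add_neg_cancel, e_zero]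
  have h2 : e x * (starRingEnd ℂ) (e x) = 1 := by
    rw [Complex.mul_conj', norm_e]; simp
  have h0 : e x ≠ 0 := fun h => by simpa [h] using norm_e x
  exact mul_left_cancel₀ h0 (h2.trans h1.symm)

lemma sum_e_mul {N : ℕ} [NeZero N] (b : ZMod N) :
    ∑ x, e (x * b) = if b = 0 then (N : ℂ) else 0 := by
  have := AddChar.sum_mulShift b (ZMod.isPrimitive_stdAddChar N)
  rw [this, ZMod.card]
  push_cast
  rfl

variable {α β : Type*} [Fintype α] [DecidableEq α] [Fintype β] [DecidableEq β]

/-- Orthogonality of characters of `(ZMod N) ^ β`: colour counts are below `N`, so they are determined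
by their residues. -/
lemma sum_char_cnt {N : ℕ} [NeZero N] (w : α → β) (m : β → ℕ) (hw : Fintype.card α < N)
    (hm : ∀ b, m b < N) :
    ∑ t : β → ZMod N, (∏ b, e (-(t b * (m b : ZMod N)))) * ∏ x, e (t (w x)) =
      if cnt w = m then (N : ℂ) ^ Fintype.card β else 0 := by
  have h1 : ∀ t : β → ZMod N, (∏ b, e (-(t b * (m b : ZMod N)))) * ∏ x, e (t (w x)) =
      ∏ b, e (t b * ((cnt w b : ZMod N) - (m b : ZMod N))) := by
    intro t
    rw [prod_comp_eq_pow_cnt w (fun b => e (t b)), ← Finset.prod_mul_distrib]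
    refine Finset.prod_congr rfl fun b _ => ?_
    rw [← AddChar.map_nsmul_eq_pow, ← AddChar.map_add_eq_mul]
    congr 1
    rw [nsmul_eq_mul]
    ring
  simp only [h1]
  rw [← Fintype.prod_sum (fun b (s : ZMod N) => e (s * ((cnt w b : ZMod N) - (m b : ZMod N))))]
  simp only [sum_e_mul]
  have h2 : ∀ b, ((cnt w b : ZMod N) - (m b : ZMod N) = 0 ↔ cnt w b = m b) := by
    intro b
    have hc : cnt w b < N := lt_of_le_of_lt (Finset.card_le_univ _) hw
    rw [sub_eq_zero, ZMod.natCast_eq_natCast_iff', Nat.mod_eq_of_lt hc, Nat.mod_eq_of_lt (hm b)]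
  simp only [h2]
  split_ifs with h
  · simp [h]
  · have : ∃ b, cnt w b ≠ m b := by
      by_contra hcon
      push Not at hcon
      exact h (funext hcon)
    obtain ⟨b, hb⟩ := this
    exact Finset.prod_eq_zero (mem_univ b) (if_neg hb)

/-- Extraction of the colourings with colour counts `m` by a discrete Fourier transform; no aliasing
occurs because `N` exceeds the number of points. -/
lemma norm_sum_cnt_le {N : ℕ} [NeZero N] (m : β → ℕ) (H : (α → β) → ℂ) (hw : Fintype.card α < N)
    (hm : ∀ b, m b < N) :
    ‖∑ w ∈ univ.filter (fun w => cnt w = m), H w‖ ≤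
      ((N : ℝ) ^ Fintype.card β)⁻¹ *
        ∑ t : β → ZMod N, ‖∑ w : α → β, H w * ∏ x, e (t (w x))‖ := by
  have hN : (N : ℝ) ^ Fintype.card β ≠ 0 := by
    have := NeZero.ne N
    positivity
  have key : (N : ℂ) ^ Fintype.card β * ∑ w ∈ univ.filter (fun w => cnt w = m), H w =
      ∑ t : β → ZMod N, (∏ b, e (-(t b * (m b : ZMod N)))) * ∑ w : α → β, H w * ∏ x, e (t (w x)) := by
    simp only [Finset.mul_sum]
    rw [Finset.sum_comm, Finset.sum_filter]
    refine Finset.sum_congr rfl fun w _ => ?_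
    have := sum_char_cnt w m hw hm
    calc (if cnt w = m then (N : ℂ) ^ Fintype.card β * H w else 0)
        = H w * (if cnt w = m then (N : ℂ) ^ Fintype.card β else 0) := by
          split_ifs <;> ring
      _ = _ := by
          rw [← this, Finset.mul_sum]
          exact Finset.sum_congr rfl fun t _ => by ring
  have h2 : ((N : ℝ) ^ Fintype.card β) * ‖∑ w ∈ univ.filter (fun w => cnt w = m), H w‖ ≤
      ∑ t : β → ZMod N, ‖∑ w : α → β, H w * ∏ x, e (t (w x))‖ := by
    have h3 := congrArg norm key
    rw [norm_mul, norm_pow, Complex.norm_natCast] at h3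
    rw [h3]
    refine (norm_sum_le _ _).trans (Finset.sum_le_sum fun t _ => ?_)
    rw [norm_mul, norm_prod]
    simp
  rw [inv_mul_eq_div, le_div_iff₀ (by positivity), mul_comm]
  exact h2

end Fourier

section Factor

variable {n d p N : ℕ} [NeZero p] [NeZero N]

/-- The characteristic function of the colour law `q`, evaluated at the frequency `t` shifted by the
character `j ↦ exp (2πi c j / p)` of `ZMod p`. -/
noncomputable def psi (q : ZMod p → ℝ) (t : ZMod p → ZMod N) (c : ZMod p) : ℂ :=
  ∑ j, (q j : ℂ) * e (t j) * e (c * j)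

/-- `p ^ n` times the indicator that all fibres sum to zero, minus `p` times the indicator that the
total sum is zero, both written with characters. -/
noncomputable def fiberDefect (n d p : ℕ) [NeZero p] (w : Fin n × Fin d → ZMod p) : ℂ :=
  ∏ k, (∑ c, e (c * ∑ i, w (k, i))) - ∑ c, e (c * ∑ x, w x)

lemma fiberDefect_eq (w : Fin n × Fin d → ZMod p) :
    fiberDefect n d p w = (if ∀ k, ∑ i, w (k, i) = 0 then (p : ℂ) ^ n else 0) -
      if ∑ x, w x = 0 then (p : ℂ) else 0 := by
  unfold fiberDefect
  simp only [sum_e_mul]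
  congr 1
  split_ifs with h
  · simp [h]
  · push Not at h
    obtain ⟨k, hk⟩ := h
    exact Finset.prod_eq_zero (mem_univ k) (if_neg hk)

lemma e_sum {ι : Type*} (s : Finset ι) (f : ι → ZMod p) : e (∑ i ∈ s, f i) = ∏ i ∈ s, e (f i) := by
  classical
  induction s using Finset.induction_on with
  | empty => simp
  | insert a s ha ih => rw [sum_insert ha, prod_insert ha, e_add, ih]

/-- The characteristic function of the tilted defect is explicit: the fibers are independent under a
product weight, and expanding each indicator in characters of `ZMod p` shifts the frequency. -/
lemma sum_fiberDefect (q : ZMod p → ℝ) (t : ZMod p → ZMod N) :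
    ∑ w, (fiberDefect n d p w * ∏ x, (q (w x) : ℂ)) * ∏ x, e (t (w x)) =
      (∑ c, psi q t c ^ d) ^ n - ∑ c, psi q t c ^ (n * d) := by
  unfold fiberDefect
  simp only [sub_mul, Finset.sum_sub_distrib]
  congr 1
  · rw [← Equiv.sum_comp (Equiv.curry (Fin n) (Fin d) (ZMod p)).symm]
    have : ∑ c, psi q t c ^ d = ∑ u : Fin d → ZMod p,
        ((∑ c, e (c * ∑ i, u i)) * ∏ i, (q (u i) : ℂ)) * ∏ i, e (t (u i)) := by
      simp only [Finset.sum_mul]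
      rw [Finset.sum_comm]
      refine Finset.sum_congr rfl fun c _ => ?_
      unfold psi
      rw [Fintype.sum_pow]
      refine Finset.sum_congr rfl fun u _ => ?_
      rw [Finset.mul_sum, e_sum, ← Finset.prod_mul_distrib, ← Finset.prod_mul_distrib]
      exact Finset.prod_congr rfl fun i _ => by ring
    rw [this, Fintype.sum_pow]
    refine Finset.sum_congr rfl fun u _ => ?_
    simp only [Fintype.prod_prod_type, Finset.prod_mul_distrib, Equiv.curry_symm_apply,
      Function.uncurry_apply_pair]
  · simp only [Finset.sum_mul]
    rw [Finset.sum_comm]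
    refine Finset.sum_congr rfl fun c _ => ?_
    have hc : Fintype.card (Fin n × Fin d) = n * d := by simp
    rw [← hc, ← Finset.card_univ, ← Finset.prod_const]
    unfold psi
    rw [Fintype.prod_sum]
    refine Finset.sum_congr rfl fun u _ => ?_
    rw [Finset.mul_sum, e_sum, ← Finset.prod_mul_distrib, ← Finset.prod_mul_distrib]
    exact Finset.prod_congr rfl fun i _ => by ring

/-- Parseval's identity on `ZMod p`. -/
lemma sum_norm_psi_sq (q : ZMod p → ℝ) (t : ZMod p → ZMod N) :
    ∑ c, ‖psi q t c‖ ^ 2 = p * ∑ j, q j ^ 2 := by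
  have h1 : ∀ c, ((‖psi q t c‖ ^ 2 : ℝ) : ℂ) =
      ∑ j, ∑ k, ((q j : ℂ) * e (t j)) * ((q k : ℂ) * e (-t k)) * e (c * (j - k)) := by
    intro c
    push_cast
    rw [← Complex.mul_conj']
    unfold psi
    rw [map_sum, Finset.sum_mul_sum]
    refine Finset.sum_congr rfl fun j _ => Finset.sum_congr rfl fun k _ => ?_
    rw [map_mul, map_mul, conj_e, conj_e, Complex.conj_ofReal, mul_sub, sub_eq_add_neg,
      e_add]
    ring
  have h2 : ((∑ c, ‖psi q t c‖ ^ 2 : ℝ) : ℂ) = ((p * ∑ j, q j ^ 2 : ℝ) : ℂ) := by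
    rw [Complex.ofReal_sum]
    simp only [h1]
    rw [Finset.sum_comm]
    push_cast
    rw [Finset.mul_sum]
    refine Finset.sum_congr rfl fun j _ => ?_
    rw [Finset.sum_comm]
    simp only [← Finset.mul_sum, sum_e_mul, sub_eq_zero]
    rw [Finset.sum_eq_single j (fun k _ hk => by simp [hk.symm]) (by simp), if_pos rfl]
    have : e (t j) * e (-t j) = 1 := by rw [← e_add, add_neg_cancel, e_zero]
    linear_combination ((q j : ℂ) ^ 2 * p) * this
  exact_mod_cast h2

end Factor

/-! ### Comparison of powers -/

lemma norm_pow_sub_pow_le (a b : ℂ) (M : ℝ) (ha : ‖a‖ ≤ M) (hb : ‖b‖ ≤ M) (n : ℕ) :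
    ‖a ^ (n + 1) - b ^ (n + 1)‖ ≤ (n + 1) * M ^ n * ‖a - b‖ := by
  have hM : 0 ≤ M := (norm_nonneg a).trans ha
  induction n with
  | zero => simp
  | succ n ih =>
    have h1 : a ^ (n + 1 + 1) - b ^ (n + 1 + 1) =
        a * (a ^ (n + 1) - b ^ (n + 1)) + (a - b) * b ^ (n + 1) := by ring
    rw [h1]
    have h2 : ‖a * (a ^ (n + 1) - b ^ (n + 1))‖ ≤ M * ((n + 1) * M ^ n * ‖a - b‖) := by
      rw [norm_mul]; gcongr
    have h3 : ‖(a - b) * b ^ (n + 1)‖ ≤ ‖a - b‖ * M ^ (n + 1) := by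
      rw [norm_mul, norm_pow]; gcongr
    refine (norm_add_le _ _).trans ((add_le_add h2 h3).trans (le_of_eq ?_))
    push_cast
    ring

/-- If the squares of `‖z c‖` add up to nearly one, then replacing `(∑ z ^ d) ^ n` by
`∑ z ^ (n d)` costs only a cubic error in `s` and in `√(1 - ‖z c‖ ^ 2)`, where `z c` is the largest
term. This is where `d ≥ 3` enters. -/
lemma power_compare {ι : Type*} [Fintype ι] [DecidableEq ι] [Nonempty ι] (z : ι → ℂ) (s : ℝ)
    (hs0 : 0 ≤ s) (hs : s ≤ 1 / 16) (hz : ∑ c, ‖z c‖ ^ 2 = 1 + s ^ 2) (h1 : ∀ c, ‖z c‖ ≤ 1)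
    (d : ℕ) (hd : 3 ≤ d) (n : ℕ) (hn : 2 ≤ n) :
    ∃ c, ‖(∑ c, z c ^ d) ^ n - ∑ c, z c ^ (n * d)‖ ≤
      4 * n * (s ^ 3 + √(1 - ‖z c‖ ^ 2) ^ 3) *
        Real.exp (-(n * (1 - ‖z c‖ ^ 2) / 8) + 2 * n * s ^ 3) := by
  obtain ⟨c, -, hc⟩ := exists_max_image univ (fun c => ‖z c‖) univ_nonempty
  refine ⟨c, ?_⟩
  set y := ‖z c‖ with hy
  have hy0 : 0 ≤ y := norm_nonneg _
  have hy1 : y ≤ 1 := h1 c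
  set u := √(1 - y ^ 2) with hu
  have hu0 : 0 ≤ u := Real.sqrt_nonneg _
  have huy : u ^ 2 = 1 - y ^ 2 := Real.sq_sqrt (by nlinarith)
  have hu1 : u ≤ 1 := by nlinarith
  have hrest : ∑ c' ∈ univ.erase c, ‖z c'‖ ^ 2 = s ^ 2 + u ^ 2 := by
    have := Finset.add_sum_erase univ (fun c => ‖z c‖ ^ 2) (mem_univ c)
    have h' : ‖z c‖ ^ 2 + ∑ c' ∈ univ.erase c, ‖z c'‖ ^ 2 = 1 + s ^ 2 := this.trans hz
    linarith
  set ρ := ∑ c' ∈ univ.erase c, ‖z c'‖ ^ 3 with hρ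
  have hρ0 : 0 ≤ ρ := Finset.sum_nonneg fun _ _ => by positivity
  have hρle : ρ ≤ 2 * (s ^ 3 + u ^ 3) := by
    have : ρ ≤ (s + u) * (s ^ 2 + u ^ 2) := by
      rw [← hrest, Finset.mul_sum]
      refine Finset.sum_le_sum fun c' hc' => ?_
      have h2 : ‖z c'‖ ^ 2 ≤ s ^ 2 + u ^ 2 := by
        rw [← hrest]
        exact Finset.single_le_sum (f := fun c => ‖z c‖ ^ 2) (fun _ _ => by positivity) hc'
      have h3 : ‖z c'‖ ≤ s + u := 
        abs_le_of_sq_le_sq' (by linarith [mul_nonneg hs0 hu0, add_sq s u]) (by positivity) |>.2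
      calc ‖z c'‖ ^ 3 = ‖z c'‖ * ‖z c'‖ ^ 2 := by ring
        _ ≤ _ := by gcongr
    nlinarith [mul_nonneg (add_nonneg hs0 hu0) (sq_nonneg (s - u))]
  have hpow3 : ∀ c', ‖z c'‖ ^ d ≤ ‖z c'‖ ^ 3 := fun c' =>
    pow_le_pow_of_le_one (norm_nonneg _) (h1 c') hd
  have hrestd : ∑ c' ∈ univ.erase c, ‖z c'‖ ^ d ≤ ρ := Finset.sum_le_sum fun c' _ => hpow3 c'
  set S := ∑ c, z c ^ d with hS
  have hSsplit : z c ^ d + ∑ c' ∈ univ.erase c, z c' ^ d = S :=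
    Finset.add_sum_erase univ (fun c => z c ^ d) (mem_univ c)
  have hSa : ‖S - z c ^ d‖ ≤ ρ := by
    rw [← hSsplit, add_sub_cancel_left]
    refine (norm_sum_le _ _).trans ?_
    simpa only [norm_pow] using hrestd
  set M := Real.exp (-(u ^ 2 / 4) + 2 * s ^ 3) with hM
  have hM1 : 1 + (-(u ^ 2 / 4) + 2 * s ^ 3) ≤ M := by
    have := Real.add_one_le_exp (-(u ^ 2 / 4) + 2 * s ^ 3)
    linarith
  have hs3 : 0 ≤ s ^ 3 := by positivity
  have hy32 : y ^ 3 ≤ y ^ 2 := pow_le_pow_of_le_one hy0 hy1 (by norm_num)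
  have hyd : y ^ d ≤ M := by
    have : y ^ d ≤ y ^ 3 := hpow3 c
    linarith [sq_nonneg u]
  have hSM : ‖S‖ ≤ M := by
    have hS3 : ‖S‖ ≤ ∑ c, ‖z c‖ ^ 3 := by
      refine (norm_sum_le _ _).trans (Finset.sum_le_sum fun c' _ => ?_)
      rw [norm_pow]; exact hpow3 c'
    rcases le_or_gt u (1 / 8) with hu8 | hu8
    · have h4 : ∑ c, ‖z c‖ ^ 3 = y ^ 3 + ρ :=
        (Finset.add_sum_erase univ (fun c => ‖z c‖ ^ 3) (mem_univ c)).symm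
      have : u ^ 3 ≤ u ^ 2 / 8 := by
        have := mul_le_mul_of_nonneg_right hu8 (sq_nonneg u)
        linarith [show u * u ^ 2 = u ^ 3 by ring]
      linarith [sq_nonneg u]
    · have h4 : ∑ c, ‖z c‖ ^ 3 ≤ y * (1 + s ^ 2) := by
        rw [← hz, Finset.mul_sum]
        refine Finset.sum_le_sum fun c' _ => ?_
        calc ‖z c'‖ ^ 3 = ‖z c'‖ * ‖z c'‖ ^ 2 := by ring
          _ ≤ _ := by gcongr; exact hc c' (mem_univ _)
      have h5 : y ≤ 1 - u ^ 2 / 2 := 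
        abs_le_of_sq_le_sq'
          (by linarith [sq_nonneg (u ^ 2), show (1 - u ^ 2 / 2) ^ 2 = 1 - u ^ 2 + (u ^ 2) ^ 2 / 4 by ring])
          (by linarith [sq_nonneg y]) |>.2
      have h6 : s ^ 2 ≤ u ^ 2 / 4 := by
        have h7 : s ^ 2 ≤ (1 / 16) ^ 2 := pow_le_pow_left₀ hs0 hs 2
        have h8 : (1 / 8) ^ 2 ≤ u ^ 2 := pow_le_pow_left₀ (by norm_num) hu8.le 2
        linarith
      have h9 : y * s ^ 2 ≤ 1 * s ^ 2 := by gcongr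
      linarith [sq_nonneg u, show y * (1 + s ^ 2) = y + y * s ^ 2 by ring]
  obtain ⟨k, rfl⟩ : ∃ k, n = k + 1 := ⟨n - 1, by omega⟩
  have hM0 : 0 ≤ M := (Real.exp_pos _).le
  have e1 : ‖S ^ (k + 1) - (z c ^ d) ^ (k + 1)‖ ≤ (k + 1) * M ^ k * ρ :=
    (norm_pow_sub_pow_le S (z c ^ d) M hSM (by rw [norm_pow]; exact hyd) k).trans (by gcongr)
  have e2 : ‖∑ c' ∈ univ.erase c, z c' ^ ((k + 1) * d)‖ ≤ M ^ k * ρ := by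
    rw [hρ, Finset.mul_sum]
    refine (norm_sum_le _ _).trans (Finset.sum_le_sum fun c' _ => ?_)
    rw [norm_pow, show (k + 1) * d = d * k + d by ring, pow_add, pow_mul]
    have : ‖z c'‖ ^ d ≤ M := (pow_le_pow_left₀ (norm_nonneg _) (hc c' (mem_univ _)) d).trans hyd
    exact mul_le_mul (pow_le_pow_left₀ (by positivity) this k) (hpow3 c') (by positivity)
      (by positivity)
  have e3 : S ^ (k + 1) - ∑ c, z c ^ ((k + 1) * d) =
      (S ^ (k + 1) - (z c ^ d) ^ (k + 1)) - ∑ c' ∈ univ.erase c, z c' ^ ((k + 1) * d) := by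
    rw [← Finset.add_sum_erase univ (fun c => z c ^ ((k + 1) * d)) (mem_univ c)]
    ring
  have hk : (1 : ℝ) ≤ k := by exact_mod_cast (by omega : 1 ≤ k)
  have e4 : M ^ k ≤ Real.exp (-(((k + 1 : ℕ) : ℝ) * (1 - y ^ 2) / 8) + 2 * ((k + 1 : ℕ) : ℝ) * s ^ 3) := by
    rw [hM, ← Real.exp_nat_mul, Real.exp_le_exp, ← huy]
    push_cast
    nlinarith [mul_nonneg (sub_nonneg.2 hk) (sq_nonneg u)]
  rw [e3]
  calc _ ≤ (k + 1) * M ^ k * ρ + M ^ k * ρ := (norm_sub_le _ _).trans (add_le_add e1 e2)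
    _ = (k + 2) * ρ * M ^ k := by ring
    _ ≤ (4 * ((k + 1 : ℕ) : ℝ) * (s ^ 3 + u ^ 3)) * M ^ k := by
        refine mul_le_mul_of_nonneg_right ?_ (by positivity)
        have h0 : 0 ≤ s ^ 3 + u ^ 3 := by positivity
        have h5 : (k + 2) * ρ ≤ (k + 2) * (2 * (s ^ 3 + u ^ 3)) := by gcongr
        push_cast
        linarith [mul_nonneg (by positivity : (0 : ℝ) ≤ k) h0]
    _ ≤ _ := by gcongr

/-- The cubic defect is absorbed by half of the exponential. -/
lemma cube_mul_exp_le (x : ℝ) (hx : 0 ≤ x) :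
    x ^ 3 * Real.exp (-(x ^ 2 / 8)) ≤ 513 * Real.exp (-(x ^ 2 / 16)) := by
  have h1 : x ^ 3 ≤ 513 * Real.exp (x ^ 2 / 16) := by
    have h2 := Real.quadratic_le_exp_of_nonneg (x := x ^ 2 / 16) (by positivity)
    have h3 : x ^ 3 ≤ 1 + x ^ 4 := by nlinarith [sq_nonneg (x ^ 2 - x), sq_nonneg x, sq_nonneg (x ^ 2), sq_nonneg (x - 1)]
    nlinarith [sq_nonneg x]
  calc x ^ 3 * Real.exp (-(x ^ 2 / 8)) ≤ 513 * Real.exp (x ^ 2 / 16) * Real.exp (-(x ^ 2 / 8)) := by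
        gcongr
    _ = 513 * (Real.exp (x ^ 2 / 16) * Real.exp (-(x ^ 2 / 8))) := by ring
    _ = _ := by
        rw [← Real.exp_add]; congr 2; ring

/-- The estimate of `power_compare` at a scale `r` dominating both `n * s ^ 3` and `1 / √n`: the
first absorbs the error in `s`, the second the error in the defect of the largest term. Summing over
all `c` on the right avoids tracking which term is the largest. -/
lemma power_compare_rate {ι : Type*} [Fintype ι] [DecidableEq ι] [Nonempty ι] (z : ι → ℂ) (s : ℝ)
    (hs0 : 0 ≤ s) (hs : s ≤ 1 / 16) (hz : ∑ c, ‖z c‖ ^ 2 = 1 + s ^ 2) (h1 : ∀ c, ‖z c‖ ≤ 1)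
    (d : ℕ) (hd : 3 ≤ d) (n : ℕ) (hn : 2 ≤ n) (A r : ℝ) (hr1 : r ≤ 1) (hA : 0 ≤ A)
    (hsr : n * s ^ 3 ≤ A * r) (hnr : 1 / √n ≤ r) :
    ‖(∑ c, z c ^ d) ^ n - ∑ c, z c ^ (n * d)‖ ≤
      4 * (A + 513) * Real.exp (2 * A) * r * ∑ c, Real.exp (-(n * (1 - ‖z c‖ ^ 2) / 16)) := by
  obtain ⟨c, hc⟩ := power_compare z s hs0 hs hz h1 d hd n hn
  have hn0 : (0 : ℝ) < n := by exact_mod_cast (by omega : 0 < n)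
  have hD : 0 ≤ 1 - ‖z c‖ ^ 2 := by nlinarith [h1 c, norm_nonneg (z c)]
  set D := 1 - ‖z c‖ ^ 2 with hDdef
  set E := Real.exp (-(n * D / 16)) with hE
  have hsn : 0 < √(n : ℝ) := Real.sqrt_pos.2 hn0
  have hr0 : 0 ≤ r := le_trans (by positivity) hnr
  have hcube : n * √D ^ 3 * Real.exp (-(n * D / 8)) ≤ 513 * r * E := by
    have h2 := cube_mul_exp_le (√n * √D) (by positivity)
    have h3 : (√(n : ℝ) * √D) ^ 2 = n * D := by
      rw [mul_pow, Real.sq_sqrt hn0.le, Real.sq_sqrt hD]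
    rw [h3] at h2
    have h4 : n * √D ^ 3 = (√(n : ℝ) * √D) ^ 3 * (1 / √n) := by
      have : (n : ℝ) = √n ^ 2 := (Real.sq_sqrt hn0.le).symm
      rw [mul_pow]
      nth_rewrite 1 [this]
      field_simp
    calc n * √D ^ 3 * Real.exp (-(n * D / 8))
        = (√(n : ℝ) * √D) ^ 3 * Real.exp (-(n * D / 8)) * (1 / √n) := by rw [h4]; ring
      _ ≤ 513 * E * r := by gcongr
      _ = _ := by ring
  have hlin : n * s ^ 3 * Real.exp (-(n * D / 8)) ≤ A * r * E := by
    have : Real.exp (-(n * D / 8)) ≤ E := by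
      rw [hE, Real.exp_le_exp]
      have : 0 ≤ n * D := by positivity
      linarith
    gcongr
  have hexp : Real.exp (2 * n * s ^ 3) ≤ Real.exp (2 * A) := by
    rw [Real.exp_le_exp]
    nlinarith
  have hEsum : E ≤ ∑ c, Real.exp (-(n * (1 - ‖z c‖ ^ 2) / 16)) :=
    Finset.single_le_sum (f := fun c => Real.exp (-(n * (1 - ‖z c‖ ^ 2) / 16)))
      (fun _ _ => (Real.exp_pos _).le) (mem_univ c)
  calc _ ≤ _ := hc
    _ = 4 * (n * s ^ 3 * Real.exp (-(n * D / 8)) + n * √D ^ 3 * Real.exp (-(n * D / 8))) *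
        Real.exp (2 * n * s ^ 3) := by
        rw [Real.exp_add]; ring
    _ ≤ 4 * (A * r * E + 513 * r * E) * Real.exp (2 * A) := by gcongr
    _ = 4 * (A + 513) * Real.exp (2 * A) * r * E := by ring
    _ ≤ _ := by gcongr

/-! ### Discrete Gaussian integrals -/

/-- The discrete half-line Gaussian sum, by comparison with a geometric series. -/
lemma sum_exp_sq_le (x : ℝ) (hx : 0 < x) (K : ℕ) :
    ∑ k ∈ range K, Real.exp (-(x ^ 2 * k ^ 2)) ≤ 3 * (1 + 1 / (2 * x)) := by
  set r := Real.exp (-(2 * x)) with hr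
  have hr0 : 0 < r := Real.exp_pos _
  have hr1 : r * (1 + 2 * x) ≤ 1 := by
    have h1 : 1 + 2 * x ≤ Real.exp (2 * x) := by linarith [Real.add_one_le_exp (2 * x)]
    calc r * (1 + 2 * x) ≤ r * Real.exp (2 * x) := by gcongr
      _ = 1 := by rw [hr, ← Real.exp_add]; simp
  have hterm : ∀ k ∈ range K, Real.exp (-(x ^ 2 * k ^ 2)) ≤ 3 * r ^ k := by
    intro k _
    -- complete the square: `x² k² ≥ 2 x k - 1`
    have h1 : Real.exp (-(x ^ 2 * k ^ 2)) ≤ Real.exp 1 * r ^ k := by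
      rw [hr, ← Real.exp_nat_mul, ← Real.exp_add, Real.exp_le_exp]
      nlinarith [sq_nonneg (x * k - 1)]
    refine h1.trans ?_
    gcongr
    linarith [Real.exp_one_lt_d9]
  refine (Finset.sum_le_sum hterm).trans ?_
  rw [← Finset.mul_sum]
  gcongr
  have h2 := mul_neg_geom_sum r K
  have h3 : 0 ≤ ∑ i ∈ range K, r ^ i := Finset.sum_nonneg fun _ _ => by positivity
  have h4 : 0 < r ^ K := by positivity
  have h5 : (1 - r) * (1 + 2 * x) ≥ 2 * x := by linarith
  have h6 : 1 + 1 / (2 * x) = (1 + 2 * x) / (2 * x) := by field_simp; ring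
  rw [h6, le_div_iff₀ (by positivity)]
  nlinarith

section Gaussian

variable {N : ℕ} [NeZero N]

lemma sum_zmod_eq_sum_range (f : ℕ → ℝ) : ∑ r : ZMod N, f r.val = ∑ k ∈ range N, f k := by
  refine Finset.sum_nbij' (fun r => r.val) (fun k => (k : ZMod N)) ?_ ?_ ?_ ?_ ?_
  · intro r _; exact mem_range.2 (ZMod.val_lt r)
  · simp
  · intro r _; simp
  · intro k hk; exact ZMod.val_cast_of_lt (mem_range.1 hk)
  · simp

lemma four_mul_min_le_norm_e_sub_one (r : ZMod N) :
    4 * min (r.val : ℝ) (N - r.val) / N ≤ ‖e r - 1‖ := by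
  have hN : (0 : ℝ) < N := by exact_mod_cast Nat.pos_of_ne_zero (NeZero.ne N)
  have hk : (r.val : ℝ) ≤ N := by exact_mod_cast (ZMod.val_lt r).le
  have h0 : (0 : ℝ) ≤ r.val := by positivity
  set k : ℝ := (r.val : ℝ) with hkdef
  have h1 : e r = Complex.exp (Complex.I * ((2 * Real.pi * k / N : ℝ) : ℂ)) := by
    have := ZMod.stdAddChar_coe (N := N) (r.val : ℤ)
    simp only [Int.cast_natCast, ZMod.natCast_zmod_val] at this
    rw [e, this]
    congr 1
    push_cast [hkdef]
    ring
  rw [h1, Complex.norm_exp_I_mul_ofReal_sub_one, Real.norm_eq_abs]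
  have h2 : 2 * Real.pi * k / N / 2 = Real.pi * (k / N) := by ring
  rw [h2]
  refine le_trans ?_ (le_abs_self _)
  have hpi := Real.pi_pos
  rcases le_total (2 * k) N with h | h
  · have h3 : 2 / Real.pi * (Real.pi * (k / N)) ≤ Real.sin (Real.pi * (k / N)) := by
      refine Real.mul_le_sin (by positivity) ?_
      have : k / N ≤ 1 / 2 := by rw [div_le_iff₀ hN]; linarith
      nlinarith
    have h4 : 2 / Real.pi * (Real.pi * (k / N)) = 2 * k / N := by field_simp
    have h5 : 4 * min k (N - k) / N ≤ 4 * k / N := by gcongr; exact min_le_left _ _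
    have h6 : 4 * k / N = 2 * (2 * k / N) := by ring
    linarith
  · have hs : Real.sin (Real.pi * (k / N)) = Real.sin (Real.pi * ((N - k) / N)) := by
      rw [← Real.sin_pi_sub]
      congr 1
      field_simp
    have hnk : 0 ≤ N - k := by linarith
    have h3 : 2 / Real.pi * (Real.pi * ((N - k) / N)) ≤ Real.sin (Real.pi * ((N - k) / N)) := by
      refine Real.mul_le_sin (by positivity) ?_
      have : (N - k) / N ≤ 1 / 2 := by rw [div_le_iff₀ hN]; linarith
      nlinarith
    have h4 : 2 / Real.pi * (Real.pi * ((N - k) / N)) = 2 * (N - k) / N := by field_simp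
    have h5 : 4 * min k (N - k) / N ≤ 4 * (N - k) / N := by gcongr; exact min_le_right _ _
    have h6 : 4 * (N - k) / N = 2 * (2 * (N - k) / N) := by ring
    rw [hs]
    linarith

/-- The discrete Gaussian integral over one frequency: the sum is `O(1 + N / x)`. -/
lemma sum_exp_norm_e_sub_one_le (x : ℝ) (hx : 0 < x) :
    ∑ r : ZMod N, Real.exp (-(x ^ 2 * ‖e r - 1‖ ^ 2)) ≤ 6 * (1 + N / (8 * x)) := by
  have hN : (0 : ℝ) < N := by exact_mod_cast Nat.pos_of_ne_zero (NeZero.ne N)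
  set y := 4 * x / N with hy
  have hy0 : 0 < y := by positivity
  have hterm : ∀ r : ZMod N, Real.exp (-(x ^ 2 * ‖e r - 1‖ ^ 2)) ≤
      Real.exp (-(y ^ 2 * (r.val : ℝ) ^ 2)) + Real.exp (-(y ^ 2 * ((N - r.val : ℕ) : ℝ) ^ 2)) := by
    intro r
    have hlt := ZMod.val_lt r
    have h1 := four_mul_min_le_norm_e_sub_one r
    rw [Nat.cast_sub hlt.le]
    have hk : (r.val : ℝ) ≤ N := by exact_mod_cast hlt.le
    have hmin0 : 0 ≤ min (r.val : ℝ) (N - r.val) := le_min (by positivity) (by linarith)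
    have h2 : Real.exp (-(x ^ 2 * ‖e r - 1‖ ^ 2)) ≤
        Real.exp (-(y ^ 2 * (min (r.val : ℝ) (N - r.val)) ^ 2)) := by
      rw [Real.exp_le_exp, neg_le_neg_iff]
      calc y ^ 2 * (min (r.val : ℝ) (N - r.val)) ^ 2
          = x ^ 2 * (4 * min (r.val : ℝ) (N - r.val) / N) ^ 2 := by rw [hy]; ring
        _ ≤ _ := by gcongr
    refine h2.trans ?_
    rcases min_choice (r.val : ℝ) (N - r.val) with h | h <;> rw [h]
    · linarith [Real.exp_pos (-(y ^ 2 * ((N : ℝ) - r.val) ^ 2))]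
    · linarith [Real.exp_pos (-(y ^ 2 * (r.val : ℝ) ^ 2))]
  refine (Finset.sum_le_sum fun r _ => hterm r).trans ?_
  rw [Finset.sum_add_distrib, sum_zmod_eq_sum_range (fun k => Real.exp (-(y ^ 2 * (k : ℝ) ^ 2))),
    sum_zmod_eq_sum_range (fun k => Real.exp (-(y ^ 2 * ((N - k : ℕ) : ℝ) ^ 2)))]
  have h1 := sum_exp_sq_le y hy0 N
  have h2 : ∑ k ∈ range N, Real.exp (-(y ^ 2 * ((N - k : ℕ) : ℝ) ^ 2)) ≤ 3 * (1 + 1 / (2 * y)) := by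
    refine le_trans ?_ (sum_exp_sq_le y hy0 (N + 1))
    rw [← Finset.sum_range_reflect _ (N + 1), Finset.sum_range_succ]
    simp only [Nat.add_sub_cancel]
    exact le_add_of_nonneg_right (Real.exp_pos _).le
  have h3 : 1 / (2 * y) = N / (8 * x) := by rw [hy]; field_simp; norm_num
  rw [h3] at h1 h2
  linarith

/-- The product is invariant under translating all frequencies at once, so the sum factors into the
choice of `t b` and independent differences `t k - t b`. -/
lemma sum_prod_sub {β : Type*} [Fintype β] [DecidableEq β] (b : β) (G : ZMod N → ℝ) (hG : G 0 = 1) :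
    ∑ t : β → ZMod N, ∏ k, G (t k - t b) = N * (∑ r, G r) ^ (Fintype.card β - 1) := by
  rw [← Finset.sum_fiberwise univ (fun t : β → ZMod N => t b)]
  have h1 : ∀ a : ZMod N, ∑ t ∈ univ.filter (fun t : β → ZMod N => t b = a), ∏ k, G (t k - t b) =
      (∑ r, G r) ^ (Fintype.card β - 1) := by
    intro a
    rw [Finset.sum_filter]
    have h2 : ∀ t : β → ZMod N, (if t b = a then ∏ k, G (t k - t b) else 0) =
        ∏ k, if k = b then (if t k = a then 1 else 0) else G (t k - a) := by
      intro t
      rw [← Finset.mul_prod_erase univ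
        (fun k => if k = b then (if t k = a then 1 else 0) else G (t k - a)) (mem_univ b), if_pos rfl]
      split_ifs with h
      · rw [← Finset.mul_prod_erase univ _ (mem_univ b), sub_self, hG, h]
        congr 1
        refine Finset.prod_congr rfl fun k hk => ?_
        rw [if_neg (Finset.ne_of_mem_erase hk)]
      · simp
    simp only [h2]
    rw [← Fintype.prod_sum (fun k s => if k = b then (if s = a then (1 : ℝ) else 0) else G (s - a)),
      ← Finset.mul_prod_erase univ _ (mem_univ b)]
    have h3 : ∀ k ∈ univ.erase b, (∑ s : ZMod N, if k = b then (if s = a then (1 : ℝ) else 0)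
        else G (s - a)) = ∑ r, G r := by
      intro k hk
      simp only [if_neg (Finset.ne_of_mem_erase hk)]
      exact Equiv.sum_comp (Equiv.subRight a) G
    rw [Finset.prod_congr rfl h3, Finset.prod_const, card_erase_of_mem (mem_univ b), card_univ]
    simp
  simp only [h1]
  rw [Finset.sum_const, card_univ, ZMod.card, nsmul_eq_mul]

/-- Decay of a characteristic function with all weights at least `a`: symmetrization writes `1 - |φ|²`
as an average of squared chords. -/
lemma one_sub_norm_sum_sq_ge {β : Type*} [Fintype β] (q : β → ℝ) (z : β → ℂ) (a : ℝ)
    (ha : 0 ≤ a) (hq : ∀ j, a ≤ q j) (hsum : ∑ j, q j = 1) (hz : ∀ j, ‖z j‖ = 1) (b : β) :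
    a ^ 2 / 2 * ∑ k, ‖z k - z b‖ ^ 2 ≤ 1 - ‖∑ j, (q j : ℂ) * z j‖ ^ 2 := by
  have hid : ∑ j, ∑ k, q j * q k * ‖z k - z j‖ ^ 2 = 2 - 2 * ‖∑ j, (q j : ℂ) * z j‖ ^ 2 := by
    have h1 : ∀ j k, ‖z k - z j‖ ^ 2 = 2 - 2 * (z k * (starRingEnd ℂ) (z j)).re := by
      intro j k
      rw [← Complex.normSq_eq_norm_sq, Complex.normSq_sub, Complex.normSq_eq_norm_sq,
        Complex.normSq_eq_norm_sq, hz, hz]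
      ring
    have h2 : ‖∑ j, (q j : ℂ) * z j‖ ^ 2 =
        ∑ j, ∑ k, q j * q k * (z k * (starRingEnd ℂ) (z j)).re := by
      have h3 : ((‖∑ j, (q j : ℂ) * z j‖ ^ 2 : ℝ) : ℂ) =
          ∑ j, ∑ k, ((q j * q k : ℝ) : ℂ) * (z k * (starRingEnd ℂ) (z j)) := by
        push_cast
        rw [← Complex.conj_mul', map_sum, Finset.sum_mul_sum]
        refine Finset.sum_congr rfl fun j _ => Finset.sum_congr rfl fun k _ => ?_
        rw [map_mul, Complex.conj_ofReal]
        ring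
      have h4 := congrArg Complex.re h3
      rw [Complex.ofReal_re] at h4
      rw [h4, Complex.re_sum]
      refine Finset.sum_congr rfl fun j _ => ?_
      rw [Complex.re_sum]
      exact Finset.sum_congr rfl fun k _ => Complex.re_ofReal_mul _ _
    rw [h2]
    simp only [h1, mul_sub, Finset.sum_sub_distrib, Finset.mul_sum]
    congr 1
    · have : ∀ j, ∑ k, q j * q k * 2 = 2 * q j := by
        intro j
        rw [← Finset.sum_mul, ← Finset.mul_sum, hsum]; ring
      simp only [this]
      rw [← Finset.mul_sum, hsum]; ring
    · exact Finset.sum_congr rfl fun j _ => Finset.sum_congr rfl fun k _ => by ring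
  have hq0 : ∀ j, 0 ≤ q j := fun j => ha.trans (hq j)
  have hle : a ^ 2 * ∑ k, ‖z k - z b‖ ^ 2 ≤ ∑ j, ∑ k, q j * q k * ‖z k - z j‖ ^ 2 := by
    refine le_trans ?_ (Finset.single_le_sum (f := fun j => ∑ k, q j * q k * ‖z k - z j‖ ^ 2)
      (fun j _ => Finset.sum_nonneg fun k _ =>
        mul_nonneg (mul_nonneg (hq0 j) (hq0 k)) (by positivity)) (mem_univ b))
    rw [Finset.mul_sum]
    refine Finset.sum_le_sum fun k _ => ?_
    rw [sq a]
    have := mul_le_mul (hq b) (hq k) ha (hq0 b)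
    gcongr
  linarith

/-- Characters of `ZMod p` are characters of `ZMod (p * M)`, so the shift by `c` in `psi` is a
translation of the frequency `t`. -/
lemma e_eq_e_lift {p M : ℕ} [NeZero p] [NeZero (p * M)] (x : ZMod p) :
    e x = e ((M * x.val : ℕ) : ZMod (p * M)) := by
  have h1 := ZMod.stdAddChar_coe (N := p) (x.val : ℤ)
  have h2 := ZMod.stdAddChar_coe (N := p * M) ((M * x.val : ℕ) : ℤ)
  simp only [Int.cast_natCast, ZMod.natCast_zmod_val] at h1 h2
  rw [e, e, h1, h2]
  congr 1
  have hM : (M : ℂ) ≠ 0 := by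
    have := NeZero.ne (p * M)
    exact_mod_cast (Nat.mul_ne_zero_iff.1 this).2
  have hp : (p : ℂ) ≠ 0 := by exact_mod_cast NeZero.ne p
  push_cast
  field_simp

/-- The multidimensional discrete Gaussian integral. Its dimension is `p - 1`, since `‖psi‖` does not
change when a constant is added to `t`; that direction contributes the factor `p * M`. -/
lemma sum_exp_psi_le {p M : ℕ} [NeZero p] [NeZero (p * M)] (q : ZMod p → ℝ) (a : ℝ) (ha : 0 < a)
    (hq : ∀ j, a ≤ q j) (hsum : ∑ j, q j = 1) (x : ℝ) (hx : 0 < x) (c : ZMod p) :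
    ∑ t : ZMod p → ZMod (p * M), Real.exp (-(x ^ 2 * (1 - ‖psi q t c‖ ^ 2))) ≤
      ((p * M : ℕ) : ℝ) * (6 * (1 + ((p * M : ℕ) : ℝ) / (4 * (a * x)))) ^ (p - 1) := by
  set sh : ZMod p → ZMod (p * M) := fun j => ((M * (c * j).val : ℕ) : ZMod (p * M)) with hsh
  set G : ZMod (p * M) → ℝ := fun r => Real.exp (-((a * x / 2) ^ 2 * ‖e r - 1‖ ^ 2)) with hG
  have hG0 : G 0 = 1 := by simp [hG]
  have h1 : ∀ t : ZMod p → ZMod (p * M), Real.exp (-(x ^ 2 * (1 - ‖psi q t c‖ ^ 2))) ≤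
      ∏ k, G ((t + sh) k - (t + sh) 0) := by
    intro t
    rw [hG, ← Real.exp_sum, Real.exp_le_exp, Finset.sum_neg_distrib, neg_le_neg_iff,
      ← Finset.mul_sum]
    have h2 : psi q t c = ∑ j, (q j : ℂ) * e ((t + sh) j) := by
      unfold psi
      refine Finset.sum_congr rfl fun j _ => ?_
      rw [e_eq_e_lift (M := M) (c * j), Pi.add_apply, e_add, mul_assoc]
    have h3 := one_sub_norm_sum_sq_ge q (fun j => e ((t + sh) j)) a ha.le hq hsum
      (fun j => norm_e _) 0
    rw [← h2] at h3
    have h4 : ∀ k, ‖e ((t + sh) k) - e ((t + sh) 0)‖ = ‖e ((t + sh) k - (t + sh) 0) - 1‖ := by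
      intro k
      have : e ((t + sh) k) - e ((t + sh) 0) =
          (e ((t + sh) k - (t + sh) 0) - 1) * e ((t + sh) 0) := by
        rw [sub_mul, ← e_add]; simp
      rw [this, norm_mul, norm_e, mul_one]
    simp only [h4] at h3
    have h5 : 0 ≤ ∑ k, ‖e ((t + sh) k - (t + sh) 0) - 1‖ ^ 2 :=
      Finset.sum_nonneg fun _ _ => by positivity
    calc (a * x / 2) ^ 2 * ∑ k, ‖e ((t + sh) k - (t + sh) 0) - 1‖ ^ 2
        ≤ x ^ 2 * (a ^ 2 / 2 * ∑ k, ‖e ((t + sh) k - (t + sh) 0) - 1‖ ^ 2) := by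
          nlinarith [mul_nonneg (sq_nonneg (a * x)) h5]
      _ ≤ _ := by gcongr
  refine (Finset.sum_le_sum fun t _ => h1 t).trans ?_
  have hshift : ∑ t : ZMod p → ZMod (p * M), ∏ k, G ((t + sh) k - (t + sh) 0) =
      ∑ t : ZMod p → ZMod (p * M), ∏ k, G (t k - t 0) :=
    Equiv.sum_comp (Equiv.addRight sh) (fun t => ∏ k, G (t k - t 0))
  rw [hshift, sum_prod_sub 0 G hG0, ZMod.card]
  have h6 := sum_exp_norm_e_sub_one_le (N := p * M) (a * x / 2) (by positivity)
  have h7 : 8 * (a * x / 2) = 4 * (a * x) := by ring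
  rw [h7] at h6
  have h8 : 0 ≤ ∑ r, G r := Finset.sum_nonneg fun _ _ => (Real.exp_pos _).le
  gcongr

end Gaussian

/-! ### Stirling and Chernoff bounds -/

lemma factorial_le_stirling (n : ℕ) (hn : n ≠ 0) :
    (n.factorial : ℝ) ≤ Real.exp 1 * √n * (n / Real.exp 1) ^ n := by
  obtain ⟨m, rfl⟩ := Nat.exists_eq_succ_of_ne_zero hn
  have h1 := Stirling.stirlingSeq'_antitone (Nat.zero_le m)
  simp only [Function.comp_apply, Nat.succ_eq_add_one, zero_add, Stirling.stirlingSeq_one] at h1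
  rw [Stirling.stirlingSeq, div_le_iff₀ (by positivity)] at h1
  refine h1.trans (le_of_eq ?_)
  rw [Real.sqrt_mul (by norm_num : (0 : ℝ) ≤ 2)]
  have : √(2 : ℝ) ≠ 0 := by positivity
  rw [Nat.succ_eq_add_one]
  field_simp

lemma stirling_le_factorial (n : ℕ) :
    √n * (n / Real.exp 1) ^ n ≤ (n.factorial : ℝ) := by
  refine le_trans ?_ (Stirling.le_factorial_stirling n)
  gcongr
  have := Real.pi_gt_three
  nlinarith [(Nat.cast_nonneg n : (0 : ℝ) ≤ n)]

/-- Lower bound of order `√K ^ (1 - card β)` for the largest multinomial probability, by Stirling. -/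
lemma multinomial_lower {β : Type*} [Fintype β] (K : ℕ) (m : β → ℕ) (hm : ∀ b, m b ≠ 0)
    (hsum : ∑ b, m b = K) :
    (Real.exp 1)⁻¹ ^ Fintype.card β * √K / √K ^ Fintype.card β ≤
      (K.factorial : ℝ) / (∏ b, ((m b).factorial : ℝ)) * ∏ b, ((m b : ℝ) / K) ^ m b := by
  rcases isEmpty_or_nonempty β with hβ | ⟨⟨b0⟩⟩
  · subst hsum
    simp
  have hle : ∀ b, m b ≤ K := fun b => hsum ▸ Finset.single_le_sum (f := m) (by simp) (mem_univ b)
  have hK : (0 : ℝ) < K := by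
    have := hle b0
    have := hm b0
    exact_mod_cast (by omega : 0 < K)
  have he := Real.exp_pos 1
  have hprod : ∏ b, ((m b).factorial : ℝ) ≤
      (Real.exp 1) ^ Fintype.card β * √K ^ Fintype.card β *
        ((K / Real.exp 1) ^ K * ∏ b, ((m b : ℝ) / K) ^ m b) := by
    have h1 : (K / Real.exp 1) ^ K = ∏ b, ((K : ℝ) / Real.exp 1) ^ m b := by
      rw [Finset.prod_pow_eq_pow_sum, hsum]
    rw [h1, ← Finset.prod_mul_distrib, ← mul_pow, ← Finset.card_univ, ← Finset.prod_const,
      ← Finset.prod_mul_distrib]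
    refine Finset.prod_le_prod (fun _ _ => by positivity) fun b _ => ?_
    refine (factorial_le_stirling (m b) (hm b)).trans ?_
    have h2 : (m b : ℝ) ≤ K := by exact_mod_cast hle b
    rw [← mul_pow]
    have h3 : (K : ℝ) / Real.exp 1 * (m b / K) = m b / Real.exp 1 := by field_simp
    rw [h3]
    gcongr
  have hP : 0 < ∏ b, ((m b).factorial : ℝ) :=
    Finset.prod_pos fun b _ => by exact_mod_cast Nat.factorial_pos _
  have hQ : 0 < ∏ b, ((m b : ℝ) / K) ^ m b := Finset.prod_pos fun b _ => by
    have : (0 : ℝ) < m b := by exact_mod_cast Nat.pos_of_ne_zero (hm b)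
    positivity
  have hS := stirling_le_factorial K
  rw [div_mul_eq_mul_div, le_div_iff₀ hP]
  calc (Real.exp 1)⁻¹ ^ Fintype.card β * √K / √K ^ Fintype.card β * ∏ b, ((m b).factorial : ℝ)
      ≤ (Real.exp 1)⁻¹ ^ Fintype.card β * √K / √K ^ Fintype.card β *
        ((Real.exp 1) ^ Fintype.card β * √K ^ Fintype.card β *
        ((K / Real.exp 1) ^ K * ∏ b, ((m b : ℝ) / K) ^ m b)) := by gcongr
    _ = (√K * (K / Real.exp 1) ^ K) * ∏ b, ((m b : ℝ) / K) ^ m b := by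
        have : √(K : ℝ) ≠ 0 := by positivity
        rw [inv_pow]
        field_simp
    _ ≤ _ := by gcongr

/-- The number of entries equal to `j` is subgaussian about `n / p`. -/
lemma sum_exp_cnt_le {p n : ℕ} [NeZero p] (l : ℝ) (hl : |l| ≤ 1) (j : ZMod p) :
    ∑ v : Fin n → ZMod p, Real.exp (l * ((cnt v j : ℝ) - n / p)) ≤
      (p : ℝ) ^ n * Real.exp (n * l ^ 2) := by
  have hp : (1 : ℝ) ≤ p := by exact_mod_cast Nat.pos_of_ne_zero (NeZero.ne p)
  have h1 : ∀ v : Fin n → ZMod p, Real.exp (l * ((cnt v j : ℝ) - n / p)) =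
      ∏ i, Real.exp (l * ((if v i = j then 1 else 0) - 1 / p)) := by
    intro v
    rw [← Real.exp_sum, ← Finset.mul_sum, Finset.sum_sub_distrib]
    congr 3
    · simp [cnt]
    · simp [div_eq_mul_inv]
  simp only [h1]
  rw [← Fintype.sum_pow (fun a : ZMod p => Real.exp (l * ((if a = j then 1 else 0) - 1 / p)))]
  have h2 : ∑ a : ZMod p, Real.exp (l * ((if a = j then 1 else 0) - 1 / p)) ≤
      p * Real.exp (l ^ 2) := by
    have h3 : ∀ a : ZMod p, Real.exp (l * ((if a = j then 1 else 0) - 1 / p)) ≤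
        1 + l * ((if a = j then 1 else 0) - 1 / p) + l ^ 2 := by
      intro a
      have hb : |(if a = j then (1 : ℝ) else 0) - 1 / p| ≤ 1 := by
        have : 0 < 1 / (p : ℝ) := by positivity
        have : 1 / (p : ℝ) ≤ 1 := by rw [div_le_one (by positivity)]; exact hp
        rw [abs_le]
        split_ifs <;> constructor <;> linarith
      have hx : |l * ((if a = j then (1 : ℝ) else 0) - 1 / p)| ≤ |l| := by
        rw [abs_mul]
        exact mul_le_of_le_one_right (abs_nonneg _) hb
      have h4 := (abs_le.1 (Real.abs_exp_sub_one_sub_id_le (hx.trans hl))).2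
      have h5 : (l * ((if a = j then (1 : ℝ) else 0) - 1 / p)) ^ 2 ≤ l ^ 2 := sq_le_sq.2 hx
      linarith
    refine (Finset.sum_le_sum fun a _ => h3 a).trans ?_
    rw [Finset.sum_add_distrib, Finset.sum_add_distrib, ← Finset.mul_sum, Finset.sum_sub_distrib]
    simp only [Finset.sum_const, card_univ, ZMod.card, nsmul_eq_mul, Finset.sum_ite_eq', mem_univ,
      if_true]
    have h6 : (p : ℝ) * (1 / p) = 1 := by field_simp
    rw [h6]
    have := Real.add_one_le_exp (l ^ 2)
    nlinarith
  calc _ ≤ (p * Real.exp (l ^ 2)) ^ n :=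
        pow_le_pow_left₀ (Finset.sum_nonneg fun _ _ => (Real.exp_pos _).le) h2 n
    _ = _ := by rw [mul_pow, ← Real.exp_nat_mul]

/-- Concentration: vectors that are not `b`-equidistributed have proportion `O(1 / n)`. A vector
counted here has some colour deviating by more than `2 √(n log n)`, which the exponential moments with
`l = ±√(log n / n)` make unlikely. -/
lemma card_bad_le {p n : ℕ} [NeZero p] (hn : 2 ≤ n) (b : ℝ) (hb : 4 * p ≤ b) :
    (#{v : Fin n → ZMod p | ¬ ∑ j, ((cnt v j : ℝ) / n - 1 / p) ^ 2 ≤ b * Real.log n / n} : ℝ) ≤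
      2 * p / n * (p : ℝ) ^ n := by
  have hn0 : (0 : ℝ) < n := by exact_mod_cast (by omega : 0 < n)
  have hp : (0 : ℝ) < p := by exact_mod_cast Nat.pos_of_ne_zero (NeZero.ne p)
  have hL : 0 < Real.log n := Real.log_pos (by exact_mod_cast (by omega : 1 < n))
  set L := Real.log n with hLdef
  set l := √(L / n) with hl
  have hl0 : 0 ≤ l := Real.sqrt_nonneg _
  have hl2 : l ^ 2 = L / n := Real.sq_sqrt (by positivity)
  have hl1 : l ≤ 1 := by
    refine Real.sqrt_le_one.2 ?_
    rw [div_le_one hn0]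
    exact (Real.log_le_sub_one_of_pos hn0).trans (by linarith)
  have hexpL : Real.exp L = n := Real.exp_log hn0
  have hmain : ∀ v : Fin n → ZMod p,
      ¬ ∑ j, ((cnt v j : ℝ) / n - 1 / p) ^ 2 ≤ b * L / n →
      (n : ℝ) ^ 2 ≤ ∑ j, (Real.exp (l * ((cnt v j : ℝ) - n / p)) +
        Real.exp (-l * ((cnt v j : ℝ) - n / p))) := by
    intro v hv
    have hex : ∃ j, 4 * L / n < ((cnt v j : ℝ) / n - 1 / p) ^ 2 := by
      by_contra hcon
      push Not at hcon
      apply hv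
      refine (Finset.sum_le_sum fun j _ => hcon j).trans ?_
      rw [Finset.sum_const, card_univ, ZMod.card, nsmul_eq_mul]
      calc (p : ℝ) * (4 * L / n) = (4 * p) * L / n := by ring
        _ ≤ _ := by gcongr
    obtain ⟨j, hj⟩ := hex
    have h1 : 2 * L ≤ |l * ((cnt v j : ℝ) - n / p)| := by
      refine abs_le_of_sq_le_sq' ?_ (abs_nonneg _) |>.2
      rw [sq_abs, mul_pow l, hl2]
      have h2 : (cnt v j : ℝ) - n / p = n * ((cnt v j : ℝ) / n - 1 / p) := by field_simp
      rw [h2, mul_pow (n : ℝ)]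
      calc (2 * L) ^ 2 = L / n * (n ^ 2 * (4 * L / n)) := by field_simp; norm_num
        _ ≤ _ := by gcongr
    have h3 : (n : ℝ) ^ 2 = Real.exp (2 * L) := by
      rw [two_mul, Real.exp_add, hexpL, sq]
    refine le_trans ?_ (Finset.single_le_sum (f := fun j => Real.exp (l * ((cnt v j : ℝ) - n / p)) +
        Real.exp (-l * ((cnt v j : ℝ) - n / p))) (fun _ _ => by positivity) (mem_univ j))
    simp only [h3, neg_mul]
    rcases le_abs'.1 h1 with h | h
    · have : Real.exp (2 * L) ≤ Real.exp (-(l * ((cnt v j : ℝ) - n / p))) :=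
        Real.exp_le_exp.2 (by linarith)
      linarith [Real.exp_pos (l * ((cnt v j : ℝ) - n / p))]
    · have : Real.exp (2 * L) ≤ Real.exp (l * ((cnt v j : ℝ) - n / p)) := Real.exp_le_exp.2 h
      linarith [Real.exp_pos (-(l * ((cnt v j : ℝ) - n / p)))]
  have hsum : (#{v : Fin n → ZMod p | ¬ ∑ j, ((cnt v j : ℝ) / n - 1 / p) ^ 2 ≤ b * L / n} : ℝ) *
      (n : ℝ) ^ 2 ≤ p * (2 * ((p : ℝ) ^ n * n)) := by
    have hexp2 : Real.exp (n * l ^ 2) = n := by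
      rw [hl2, mul_div_cancel₀ _ hn0.ne', hexpL]
    calc _ = ∑ v ∈ univ.filter (fun v : Fin n → ZMod p =>
          ¬ ∑ j, ((cnt v j : ℝ) / n - 1 / p) ^ 2 ≤ b * L / n), (n : ℝ) ^ 2 := by
          rw [Finset.sum_const, nsmul_eq_mul]
      _ ≤ ∑ v ∈ univ.filter (fun v : Fin n → ZMod p =>
          ¬ ∑ j, ((cnt v j : ℝ) / n - 1 / p) ^ 2 ≤ b * L / n),
          ∑ j, (Real.exp (l * ((cnt v j : ℝ) - n / p)) +
            Real.exp (-l * ((cnt v j : ℝ) - n / p))) :=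
          Finset.sum_le_sum fun v hv => hmain v (mem_filter.1 hv).2
      _ ≤ ∑ v : Fin n → ZMod p, ∑ j, (Real.exp (l * ((cnt v j : ℝ) - n / p)) +
            Real.exp (-l * ((cnt v j : ℝ) - n / p))) :=
          Finset.sum_le_sum_of_subset_of_nonneg (filter_subset _ _)
            fun _ _ _ => Finset.sum_nonneg fun _ _ => by positivity
      _ = ∑ j, ((∑ v : Fin n → ZMod p, Real.exp (l * ((cnt v j : ℝ) - n / p))) +
            ∑ v : Fin n → ZMod p, Real.exp (-l * ((cnt v j : ℝ) - n / p))) := by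
          rw [Finset.sum_comm]
          simp only [Finset.sum_add_distrib]
      _ ≤ ∑ j : ZMod p, 2 * ((p : ℝ) ^ n * n) := by
          refine Finset.sum_le_sum fun j _ => ?_
          have e1 := sum_exp_cnt_le (n := n) l (by rwa [abs_of_nonneg hl0]) j
          have e2 := sum_exp_cnt_le (n := n) (-l) (by rwa [abs_neg, abs_of_nonneg hl0]) j
          rw [neg_sq] at e2
          rw [hexp2] at e1 e2
          linarith
      _ = _ := by rw [Finset.sum_const, card_univ, ZMod.card, nsmul_eq_mul]
  have h4 : 2 * p / n * (p : ℝ) ^ n = p * (2 * ((p : ℝ) ^ n * n)) / n ^ 2 := by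
    field_simp
  rw [h4, le_div_iff₀ (by positivity)]
  exact hsum

/-! ### The local estimate for a fixed vector -/

/-- The Fourier-side bound: with `q` the colour frequencies, the tilted defect sum over the
colourings with prescribed counts is at most a constant times `r / √n ^ (p - 1)`. -/
lemma norm_sum_fiberDefect_le {n d p : ℕ} [Fact p.Prime] (hd : 3 ≤ d) (hn : 2 ≤ n)
    (q : ZMod p → ℝ) (m : ZMod p → ℕ) (hm : ∀ j, m j ≤ n * d) (hq : ∀ j, 1 / (2 * p : ℝ) ≤ q j)
    (hsum : ∑ j, q j = 1) (s A r : ℝ) (hs0 : 0 ≤ s) (hs : s ≤ 1 / 16)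
    (hqs : p * ∑ j, q j ^ 2 = 1 + s ^ 2) (hr1 : r ≤ 1) (hA : 0 ≤ A) (hsr : n * s ^ 3 ≤ A * r)
    (hnr : 1 / √n ≤ r) :
    ‖∑ w ∈ univ.filter (fun w : Fin n × Fin d → ZMod p => cnt w = m),
        fiberDefect n d p w * ∏ x, (q (w x) : ℂ)‖ ≤
      4 * (A + 513) * Real.exp (2 * A) * r * p * ((6 * (1 + 2 * p)) / √n) ^ (p - 1) := by
  have hp : p.Prime := Fact.out
  have hp0 : (0 : ℝ) < p := by exact_mod_cast hp.pos
  have hn0 : (0 : ℝ) < n := by exact_mod_cast (by omega : 0 < n)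
  have hnd : 0 < n * d := by positivity
  have hsn : 0 < √(n : ℝ) := Real.sqrt_pos.2 hn0
  have hr0 : 0 ≤ r := le_trans (by positivity) hnr
  -- the modulus exceeds the number `n * d` of points and is a multiple of `p`, so that frequencies
  -- can be shifted by the characters of `ZMod p`
  set M := n * d + 1 with hM
  have : NeZero (p * M) := ⟨by have := hp.pos; positivity⟩
  have hNM : n * d < p * M := by
    have : M ≤ p * M := Nat.le_mul_of_pos_left _ hp.pos
    omega
  have hq0 : ∀ j, 0 ≤ q j := fun j => le_trans (by positivity) (hq j)
  have hpsi1 : ∀ t : ZMod p → ZMod (p * M), ∀ c, ‖psi q t c‖ ≤ 1 := by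
    intro t c
    refine (norm_sum_le _ _).trans ?_
    rw [← hsum]
    refine Finset.sum_le_sum fun j _ => ?_
    rw [norm_mul, norm_mul, norm_e, norm_e, mul_one, mul_one, Complex.norm_real, Real.norm_eq_abs,
      abs_of_nonneg (hq0 j)]
  set B := 4 * (A + 513) * Real.exp (2 * A) * r with hB
  have hB0 : 0 ≤ B := by positivity
  refine (norm_sum_cnt_le (N := p * M) m _ (by simpa using hNM)
    (fun b => (hm b).trans_lt hNM)).trans ?_
  have h1 : ∀ t : ZMod p → ZMod (p * M), ‖∑ w : Fin n × Fin d → ZMod p,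
      (fiberDefect n d p w * ∏ x, (q (w x) : ℂ)) * ∏ x, e (t (w x))‖ ≤
      B * ∑ c, Real.exp (-((√n / 4) ^ 2 * (1 - ‖psi q t c‖ ^ 2))) := by
    intro t
    rw [sum_fiberDefect]
    have := power_compare_rate (fun c => psi q t c) s hs0 hs
      (by rw [sum_norm_psi_sq, hqs]) (hpsi1 t) d hd n hn A r hr1 hA hsr hnr
    convert this using 6
    rw [div_pow, Real.sq_sqrt hn0.le]
    ring
  have h2 : ∑ t : ZMod p → ZMod (p * M), ‖∑ w : Fin n × Fin d → ZMod p,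
      (fiberDefect n d p w * ∏ x, (q (w x) : ℂ)) * ∏ x, e (t (w x))‖ ≤
      B * (p * (((p * M : ℕ) : ℝ) *
        (6 * (1 + ((p * M : ℕ) : ℝ) / (4 * (1 / (2 * p : ℝ) * (√n / 4))))) ^ (p - 1))) := by
    refine (Finset.sum_le_sum fun t _ => h1 t).trans ?_
    rw [← Finset.mul_sum, Finset.sum_comm]
    refine mul_le_mul_of_nonneg_left ?_ hB0
    refine (Finset.sum_le_sum fun c _ => sum_exp_psi_le q (1 / (2 * p : ℝ)) (by positivity) hq hsum
      (√n / 4) (by positivity) c).trans ?_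
    rw [Finset.sum_const, card_univ, ZMod.card, nsmul_eq_mul]
  rw [ZMod.card]
  set N : ℝ := ((p * M : ℕ) : ℝ) with hN
  have hN0 : 0 < N := by rw [hN]; exact_mod_cast Nat.pos_of_ne_zero (NeZero.ne (p * M))
  have h3 : 6 * (1 + N / (4 * (1 / (2 * p : ℝ) * (√n / 4)))) ≤ N * ((6 * (1 + 2 * p)) / √n) := by
    have hnN : √n ≤ N := by
      have h4 : (n : ℝ) ≤ N := by
        rw [hN]
        have : n ≤ n * d := Nat.le_mul_of_pos_right _ (by omega)
        exact_mod_cast this.trans hNM.le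
      refine le_trans ?_ h4
      rw [Real.sqrt_le_left hn0.le]
      have : (1 : ℝ) ≤ n := by exact_mod_cast (by omega : 1 ≤ n)
      nlinarith
    have h5 : N / (4 * (1 / (2 * p : ℝ) * (√n / 4))) = 2 * p * N / √n := by field_simp
    rw [h5]
    have h6 : 1 ≤ N / √n := by rwa [le_div_iff₀ hsn, one_mul]
    calc 6 * (1 + 2 * p * N / √n) ≤ 6 * (N / √n + 2 * p * N / √n) := by gcongr
      _ = _ := by field_simp
  have hpp : N ^ p = N * N ^ (p - 1) := by
    rw [← pow_succ', Nat.sub_add_cancel hp.one_le]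
  calc (N ^ p)⁻¹ * _ ≤ (N ^ p)⁻¹ * (B * (p * (N * (N * ((6 * (1 + 2 * p)) / √n)) ^ (p - 1)))) := by
        refine mul_le_mul_of_nonneg_left (h2.trans ?_) (by positivity)
        gcongr
    _ = _ := by
        rw [mul_pow, hpp]
        field_simp

/-- The number of permutations `P` with `A(P) v = 0`. -/
noncomputable def kerCount (n d p : ℕ) (v : Fin n → ZMod p) : ℝ :=
  (Nat.card {P : Equiv.Perm (Fin n × Fin d) //
    ((adjMat n d P).map (Int.cast : ℤ → ZMod p)).mulVec v = 0} : ℝ)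

lemma kerCount_eq (n d p : ℕ) (v : Fin n → ZMod p) :
    kerCount n d p v =
      ∑ σ : Equiv.Perm (Fin n × Fin d), if ∀ k, ∑ i, v (σ (k, i)).1 = 0 then (1 : ℝ) else 0 := by
  classical
  unfold kerCount
  rw [Nat.card_eq_fintype_card, Fintype.card_subtype, Finset.sum_boole]
  congr 2
  ext σ
  simp only [mem_filter, mem_univ, true_and]
  rw [funext_iff]
  simp only [adjMat_mulVec, Pi.zero_apply]

/-- Counting permutations through recolourings: up to the number of permutations realising a given
recolouring, the defect sum is `p ^ n` times the kernel count minus its main term. -/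
lemma prod_factorial_mul_sum_fiberDefect {n d p : ℕ} [Fact p.Prime] (hgcd : Nat.Coprime p d)
    (v : Fin n → ZMod p) :
    ((∏ b, ((cnt (fun x : Fin n × Fin d => v x.1) b).factorial : ℝ) : ℝ) : ℂ) *
      ∑ w ∈ univ.filter (fun w : Fin n × Fin d → ZMod p =>
        cnt w = cnt (fun x : Fin n × Fin d => v x.1)), fiberDefect n d p w =
    (((p : ℝ) ^ n * kerCount n d p v -
      (if ∑ k, v k = 0 then (p : ℝ) else 0) * (n * d).factorial : ℝ) : ℂ) := by
  set f : Fin n × Fin d → ZMod p := fun x => v x.1 with hf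
  have h1 := sum_perm_comp f (fun w : Fin n × Fin d → ZMod p =>
    (if ∀ k, ∑ i, w (k, i) = 0 then (p : ℝ) ^ n else 0) - if ∑ x, w x = 0 then (p : ℝ) else 0)
  have h2 : ∑ w ∈ univ.filter (fun w : Fin n × Fin d → ZMod p => cnt w = cnt f),
      fiberDefect n d p w = ((∑ w ∈ univ.filter (fun w : Fin n × Fin d → ZMod p => cnt w = cnt f),
      ((if ∀ k, ∑ i, w (k, i) = 0 then (p : ℝ) ^ n else 0) -
        if ∑ x, w x = 0 then (p : ℝ) else 0) : ℝ) : ℂ) := by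
    push_cast
    refine Finset.sum_congr rfl fun w _ => ?_
    rw [fiberDefect_eq]
    split_ifs <;> simp
  rw [h2, ← Complex.ofReal_mul, ← h1]
  congr 1
  rw [Finset.sum_sub_distrib]
  congr 1
  · rw [kerCount_eq, Finset.mul_sum]
    refine Finset.sum_congr rfl fun σ _ => ?_
    simp [hf]
  · have h3 : ∀ σ : Equiv.Perm (Fin n × Fin d), ∑ x, (f ∘ σ) x = d * ∑ k, v k := by
      intro σ
      simp only [Function.comp_apply]
      rw [Equiv.sum_comp σ f, Fintype.sum_prod_type]
      simp [hf, Finset.mul_sum]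
    have hd0 : (d : ZMod p) ≠ 0 := by
      intro h
      rw [ZMod.natCast_eq_zero_iff] at h
      have := Nat.Coprime.eq_one_of_dvd hgcd h
      exact (Fact.out : p.Prime).one_lt.ne' this
    simp only [h3, mul_eq_zero, hd0, false_or]
    rw [Finset.sum_const, card_univ, Fintype.card_perm, Fintype.card_prod, Fintype.card_fin,
      Fintype.card_fin, nsmul_eq_mul, mul_comm]

/-- The constant of the local limit estimate. -/
noncomputable def locConst (d p : ℕ) (A : ℝ) : ℝ :=
  4 * (A + 513) * Real.exp (2 * A) * p * (6 * (1 + 2 * p) * √d) ^ (p - 1) * Real.exp 1 ^ p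

/-- For a vector `v` with nearly uniform entry frequencies, the probability that `A(P) v = 0` is
`p ^ (1 - n)` or `0` up to relative error `O(r)`, depending on whether `v` has zero sum. -/
lemma kerCount_estimate {n d p : ℕ} [Fact p.Prime] (hd : 3 ≤ d) (hn : 2 ≤ n)
    (hgcd : Nat.Coprime p d) (v : Fin n → ZMod p)
    (hq : ∀ j, 1 / (2 * p : ℝ) ≤ (cnt v j : ℝ) / n) (s A r : ℝ) (hs0 : 0 ≤ s) (hs : s ≤ 1 / 16)
    (hqs : p * ∑ j, ((cnt v j : ℝ) / n) ^ 2 = 1 + s ^ 2) (hr1 : r ≤ 1) (hA : 0 ≤ A)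
    (hsr : n * s ^ 3 ≤ A * r) (hnr : 1 / √n ≤ r) :
    |(p : ℝ) ^ n * (kerCount n d p v / (n * d).factorial) -
      (if ∑ k, v k = 0 then (p : ℝ) else 0)| ≤ locConst d p A * r := by
  have hp : p.Prime := Fact.out
  have hp0 : (0 : ℝ) < p := by exact_mod_cast hp.pos
  have hn0 : (0 : ℝ) < n := by exact_mod_cast (by omega : 0 < n)
  have hd0 : (0 : ℝ) < d := by exact_mod_cast (by omega : 0 < d)
  have hsn : 0 < √(n : ℝ) := Real.sqrt_pos.2 hn0
  set f : Fin n × Fin d → ZMod p := fun x => v x.1 with hf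
  have hcf : ∀ b, cnt f b = d * cnt v b := fun b => cnt_comp_fst v b
  set q : ZMod p → ℝ := fun j => (cnt v j : ℝ) / n with hqdef
  have hqpos : ∀ j, 0 < q j := fun j => lt_of_lt_of_le (by positivity) (hq j)
  have hsum : ∑ j, q j = 1 := by
    rw [hqdef, ← Finset.sum_div, ← Nat.cast_sum, sum_cnt, Fintype.card_fin]
    exact div_self hn0.ne'
  have hsumf : ∑ j, cnt f j = n * d := by rw [sum_cnt]; simp
  have hmle : ∀ j, cnt f j ≤ n * d := fun j => by
    rw [← hsumf]
    exact Finset.single_le_sum (f := fun j => cnt f j) (fun _ _ => Nat.zero_le _) (mem_univ j)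
  have hmne : ∀ j, cnt f j ≠ 0 := by
    intro j h
    rw [hcf] at h
    have h2 : cnt v j = 0 := by
      rcases Nat.mul_eq_zero.1 h with h | h
      · omega
      · exact h
    have := hqpos j
    simp [hqdef, h2] at this
  have hb := norm_sum_fiberDefect_le hd hn q (cnt f) hmle hq hsum s A r hs0 hs hqs hr1 hA hsr hnr
  set Q : ℝ := ∏ j, q j ^ cnt f j with hQ
  have hconst : ∑ w ∈ univ.filter (fun w : Fin n × Fin d → ZMod p => cnt w = cnt f),
        fiberDefect n d p w * ∏ x, (q (w x) : ℂ) =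
      (Q : ℂ) * ∑ w ∈ univ.filter (fun w : Fin n × Fin d → ZMod p => cnt w = cnt f),
        fiberDefect n d p w := by
    rw [Finset.mul_sum]
    refine Finset.sum_congr rfl fun w hw => ?_
    have hw' : cnt w = cnt f := (mem_filter.1 hw).2
    rw [prod_comp_eq_pow_cnt w (fun j => (q j : ℂ)), hw', hQ]
    push_cast
    ring
  have hmain := prod_factorial_mul_sum_fiberDefect (d := d) hgcd v
  set W : ℝ := ∏ b, ((cnt f b).factorial : ℝ) with hW
  have hW0 : 0 < W := Finset.prod_pos fun b _ => by positivity
  have hF0 : (0 : ℝ) < (n * d).factorial := by positivity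
  set D : ℝ := (p : ℝ) ^ n * (kerCount n d p v / (n * d).factorial) -
      (if ∑ k, v k = 0 then (p : ℝ) else 0) with hD
  set S := ∑ w ∈ univ.filter (fun w : Fin n × Fin d → ZMod p => cnt w = cnt f),
        fiberDefect n d p w with hS
  have hWS : (W : ℂ) * S = (((n * d).factorial * D : ℝ) : ℂ) := by
    rw [hmain]
    congr 1
    rw [hD]
    field_simp
  have hSn : ‖S‖ = (n * d).factorial * |D| / W := by
    have := congrArg norm hWS
    rw [norm_mul, Complex.norm_real, Complex.norm_real, Real.norm_eq_abs, Real.norm_eq_abs,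
      abs_of_pos hW0, abs_mul, abs_of_pos hF0] at this
    rw [← this]
    field_simp
  have hQ0 : 0 < Q := Finset.prod_pos fun j _ => pow_pos (hqpos j) _
  rw [hconst, norm_mul, Complex.norm_real, Real.norm_eq_abs, abs_of_pos hQ0, hSn] at hb
  have hlow := multinomial_lower (n * d) (cnt f) hmne hsumf
  have hQ' : ∏ b, ((cnt f b : ℝ) / ((n * d : ℕ) : ℝ)) ^ cnt f b = Q := by
    refine Finset.prod_congr rfl fun b _ => ?_
    congr 1
    rw [hqdef, hcf]
    push_cast
    field_simp
  rw [hQ', ZMod.card] at hlow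
  have hnds : √((n * d : ℕ) : ℝ) = √n * √d := by
    push_cast
    exact Real.sqrt_mul hn0.le _
  have hsd : 0 < √(d : ℝ) := Real.sqrt_pos.2 hd0
  rw [hnds] at hlow
  have hpp : (√(n : ℝ) * √d) ^ p = (√n * √d) * (√n * √d) ^ (p - 1) := by
    rw [← pow_succ', Nat.sub_add_cancel hp.one_le]
  have hlow2 : (Real.exp 1 ^ p)⁻¹ / (√n * √d) ^ (p - 1) ≤ (n * d).factorial / W * Q := by
    refine le_trans (le_of_eq ?_) hlow
    rw [hpp, inv_pow]
    field_simp
  have hcomb : (Real.exp 1 ^ p)⁻¹ / (√n * √d) ^ (p - 1) * |D| ≤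
      4 * (A + 513) * Real.exp (2 * A) * r * p * ((6 * (1 + 2 * p)) / √n) ^ (p - 1) := by
    calc _ ≤ (n * d).factorial / W * Q * |D| := by gcongr
      _ = Q * ((n * d).factorial * |D| / W) := by ring
      _ ≤ _ := hb
  have hE : 0 < Real.exp 1 ^ p := by positivity
  have : |D| = (Real.exp 1 ^ p * (√n * √d) ^ (p - 1)) *
      ((Real.exp 1 ^ p)⁻¹ / (√n * √d) ^ (p - 1) * |D|) := by
    field_simp
  rw [this]
  calc _ ≤ (Real.exp 1 ^ p * (√n * √d) ^ (p - 1)) *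
      (4 * (A + 513) * Real.exp (2 * A) * r * p * ((6 * (1 + 2 * p)) / √n) ^ (p - 1)) := by gcongr
    _ = _ := by
      unfold locConst
      rw [div_pow, mul_pow √(n : ℝ), mul_pow (6 * (1 + 2 * (p : ℝ)))]
      field_simp

/-! ### Summation over equidistributed vectors -/

lemma phi_eq_cnt {p k : ℕ} (a : Fin k → ZMod p) (j : ZMod p) : phi a j = cnt a j := by
  unfold phi cnt
  rw [Nat.card_eq_fintype_card, Fintype.card_subtype]

lemma sum_zmod_eq_sum_fin {p : ℕ} [NeZero p] (F : ZMod p → ℝ) :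
    ∑ j, F j = ∑ j : Fin p, F ((j : ℕ) : ZMod p) := by
  have h := sum_zmod_eq_sum_range (N := p) (fun k => F (k : ZMod p))
  simp only [ZMod.natCast_zmod_val] at h
  rw [h, Finset.sum_range]

/-- The quadratic deviation of the empirical law of `v` from the uniform one. -/
noncomputable def dev {n p : ℕ} [NeZero p] (v : Fin n → ZMod p) : ℝ :=
  ∑ j, ((cnt v j : ℝ) / n - 1 / p) ^ 2

lemma sum_fin_eq_dev {n p : ℕ} [NeZero p] (v : Fin n → ZMod p) :
    ∑ j : Fin p, ((phi v ((j : ℕ) : ZMod p) : ℝ) / n - 1 / p) ^ 2 = dev v := by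
  unfold dev
  rw [sum_zmod_eq_sum_fin]
  simp only [phi_eq_cnt]

lemma sum_phi {n p : ℕ} [NeZero p] (v : Fin n → ZMod p) :
    ∑ j : Fin p, phi v ((j : ℕ) : ZMod p) = n := by
  have h := sum_cnt v
  have h2 : ((∑ j, cnt v j : ℕ) : ℝ) = ∑ j : Fin p, (phi v ((j : ℕ) : ZMod p) : ℝ) := by
    push_cast
    rw [sum_zmod_eq_sum_fin]
    simp only [phi_eq_cnt]
  rw [h, Fintype.card_fin] at h2
  exact_mod_cast h2.symm

/-- Grouping vectors by their counting vector: the double sum runs over the vectors whose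
quadratic deviation is at most `B`. -/
lemma double_sum_eq {n p : ℕ} [NeZero p] (B : ℝ) (g : (Fin n → ZMod p) → ℝ) :
    ∑ ν ∈ (Finset.Nat.antidiagonalTuple p n).filter
        (fun ν => ∑ j, ((ν j : ℝ) / n - 1 / p) ^ 2 ≤ B),
      ∑ v ∈ univ.filter (fun v : Fin n → ZMod p => ∀ j : Fin p, phi v ((j : ℕ) : ZMod p) = ν j),
        g v = ∑ v ∈ univ.filter (fun v : Fin n → ZMod p => dev v ≤ B), g v := by
  classical
  rw [← Finset.sum_fiberwise_of_maps_to (s := univ.filter (fun v : Fin n → ZMod p => dev v ≤ B))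
    (t := (Finset.Nat.antidiagonalTuple p n).filter
        (fun ν => ∑ j, ((ν j : ℝ) / n - 1 / p) ^ 2 ≤ B))
    (g := fun v (j : Fin p) => phi v ((j : ℕ) : ZMod p))]
  · refine Finset.sum_congr rfl fun ν hν => Finset.sum_congr ?_ fun _ _ => rfl
    ext v
    simp only [mem_filter, mem_univ, true_and, funext_iff]
    refine ⟨fun h => ⟨?_, h⟩, fun h => h.2⟩
    rw [← sum_fin_eq_dev]
    simp only [h]
    exact (mem_filter.1 hν).2
  · intro v hv
    rw [mem_filter, Finset.Nat.mem_antidiagonalTuple]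
    refine ⟨sum_phi v, ?_⟩
    rw [sum_fin_eq_dev]
    exact (mem_filter.1 hv).2

/-- Exactly the proportion `1 / p` of all vectors has zero sum. -/
lemma mul_card_sum_eq_zero {n p : ℕ} [NeZero p] (hn : n ≠ 0) :
    (p : ℝ) * (#{v : Fin n → ZMod p | ∑ k, v k = 0} : ℝ) = (p : ℝ) ^ n := by
  have h1 : (p : ℂ) * (#{v : Fin n → ZMod p | ∑ k, v k = 0} : ℂ) = (p : ℂ) ^ n := by
    calc _ = ∑ v : Fin n → ZMod p, ∑ c : ZMod p, e (c * ∑ k, v k) := by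
          simp only [sum_e_mul]
          rw [← Finset.sum_filter, Finset.sum_const, nsmul_eq_mul, mul_comm]
      _ = ∑ c : ZMod p, (∑ x : ZMod p, e (x * c)) ^ n := by
          rw [Finset.sum_comm]
          refine Finset.sum_congr rfl fun c _ => ?_
          rw [Fintype.sum_pow]
          refine Finset.sum_congr rfl fun v _ => ?_
          rw [Finset.mul_sum, e_sum]
          simp only [mul_comm]
      _ = _ := by
          simp only [sum_e_mul]
          rw [Finset.sum_eq_single 0 (fun c _ hc => by simp [hc, hn]) (by simp), if_pos rfl]
  exact_mod_cast h1

/-- The rate `(log n) ^ (3 / 2) / √n`. -/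
noncomputable def rate (n : ℕ) : ℝ := √(Real.log n) ^ 3 / √n

lemma rate_eq (n : ℕ) : (Real.log n) ^ ((3 : ℝ) / 2) / √n = rate n := by
  have hL : 0 ≤ Real.log n := Real.log_natCast_nonneg n
  unfold rate
  rw [Real.sqrt_eq_rpow (Real.log n), ← Real.rpow_natCast, ← Real.rpow_mul hL]
  norm_num

lemma rate_pos {n : ℕ} (hn : 2 ≤ n) : 0 < rate n := by
  have : 0 < Real.log n := Real.log_pos (by exact_mod_cast hn)
  have h0 : (0 : ℝ) < n := by positivity
  unfold rate
  positivity

lemma eventually_log_le (ε : ℝ) (hε : 0 < ε) :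
    ∀ᶠ n : ℕ in Filter.atTop, Real.log n ^ 3 ≤ ε * n := by
  have h := (Real.isLittleO_pow_log_id_atTop (n := 3)).comp_tendsto
    (tendsto_natCast_atTop_atTop (R := ℝ))
  filter_upwards [h.bound hε] with n hn
  simp only [Function.comp_apply, id, Real.norm_eq_abs, Nat.abs_cast] at hn
  exact (le_abs_self _).trans hn

lemma dev_eq {n p : ℕ} [NeZero p] (hn : n ≠ 0) (v : Fin n → ZMod p) :
    (p : ℝ) * ∑ j, ((cnt v j : ℝ) / n) ^ 2 = 1 + p * dev v := by
  have hp0 : (p : ℝ) ≠ 0 := by exact_mod_cast NeZero.ne p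
  have hn0 : (n : ℝ) ≠ 0 := by exact_mod_cast hn
  have h1 : ∑ j, (cnt v j : ℝ) / n = 1 := by
    rw [← Finset.sum_div, ← Nat.cast_sum, sum_cnt, Fintype.card_fin]
    exact div_self hn0
  have h2 : dev v = ∑ j, ((cnt v j : ℝ) / n) ^ 2 - 2 / p * ∑ j, (cnt v j : ℝ) / n + 1 / p := by
    unfold dev
    simp only [sub_sq, Finset.sum_add_distrib, Finset.sum_sub_distrib, Finset.mul_sum]
    congr 1
    · congr 1
      exact Finset.sum_congr rfl fun j _ => by ring
    · rw [Finset.sum_const, card_univ, ZMod.card, nsmul_eq_mul]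
      field_simp
  rw [h2, h1]
  field_simp
  ring

/-- The local estimate, uniformly over the `b`-equidistributed vectors. -/
lemma eventually_kerCount_estimate {d p : ℕ} [Fact p.Prime] (hd : 3 ≤ d) (hgcd : Nat.Coprime p d)
    (b : ℝ) (hb : 0 < b) : ∀ᶠ n : ℕ in Filter.atTop, 1 / √n ≤ rate n ∧
      ∀ v : Fin n → ZMod p, dev v ≤ b * Real.log n / n →
      |(p : ℝ) ^ n * (kerCount n d p v / (n * d).factorial) -
        (if ∑ k, v k = 0 then (p : ℝ) else 0)| ≤ locConst d p (√(p * b) ^ 3) * rate n := by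
  have hp : p.Prime := Fact.out
  have hp0 : (0 : ℝ) < p := by exact_mod_cast hp.pos
  filter_upwards [eventually_log_le 1 one_pos,
    eventually_log_le (1 / (256 * (p * b))) (by positivity),
    eventually_log_le (1 / (4 * p ^ 2 * b)) (by positivity),
    Filter.eventually_ge_atTop 3] with n h1 h2 h3 hn
  have hn0 : (0 : ℝ) < n := by exact_mod_cast (by omega : 0 < n)
  set L := Real.log n with hL
  have hL1 : 1 ≤ L := by
    rw [hL, Real.le_log_iff_exp_le hn0]
    have h4 : (3 : ℝ) ≤ n := by exact_mod_cast hn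
    linarith [Real.exp_one_lt_d9]
  have hL3 : L ≤ L ^ 3 := le_self_pow₀ hL1 (by norm_num)
  have hsn : 0 < √(n : ℝ) := Real.sqrt_pos.2 hn0
  have hsL : 1 ≤ √L := Real.one_le_sqrt.2 hL1
  have hnr : 1 / √n ≤ rate n := by
    unfold rate
    gcongr
    exact one_le_pow₀ hsL
  refine ⟨hnr, fun v hv => ?_⟩
  have hr1 : rate n ≤ 1 := by
    unfold rate
    rw [div_le_one hsn]
    refine Real.le_sqrt_of_sq_le ?_
    rw [← pow_mul, mul_comm 3 2, pow_mul, Real.sq_sqrt (by linarith)]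
    linarith
  have hdev0 : 0 ≤ dev v := Finset.sum_nonneg fun _ _ => sq_nonneg _
  have hs2 : √(p * dev v) ^ 2 = p * dev v := Real.sq_sqrt (by positivity)
  have hd1 : p * dev v ≤ 1 / 256 := by
    calc p * dev v ≤ p * (b * L / n) := by gcongr
      _ ≤ p * (b * (1 / (256 * (p * b)) * n) / n) := by gcongr; linarith
      _ = 1 / 256 := by field_simp
  have hd2 : dev v ≤ (1 / (2 * p)) ^ 2 := by
    calc dev v ≤ b * L / n := hv
      _ ≤ b * (1 / (4 * p ^ 2 * b) * n) / n := by gcongr; linarith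
      _ = (1 / (2 * p)) ^ 2 := by field_simp; norm_num
  refine kerCount_estimate hd (by omega) hgcd v ?_ √(p * dev v) _ _ (Real.sqrt_nonneg _) ?_ ?_ hr1
    (by positivity) ?_ hnr
  · intro j
    have h4 : ((cnt v j : ℝ) / n - 1 / p) ^ 2 ≤ (1 / (2 * p)) ^ 2 :=
      le_trans (Finset.single_le_sum (f := fun j => ((cnt v j : ℝ) / n - 1 / p) ^ 2)
        (fun _ _ => sq_nonneg _) (mem_univ j)) hd2
    have h5 := (abs_le_of_sq_le_sq' h4 (by positivity)).1
    have h6 : (1 : ℝ) / p = 1 / (2 * p) + 1 / (2 * p) := by field_simp; norm_num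
    linarith
  · rw [Real.sqrt_le_left (by norm_num)]
    linarith
  · rw [hs2]
    exact dev_eq (by omega) v
  · have h7 : √(p * dev v) ≤ √(p * b) * √L / √n := by
      rw [← Real.sqrt_mul (by positivity), ← Real.sqrt_div' _ hn0.le]
      refine Real.sqrt_le_sqrt ?_
      calc p * dev v ≤ p * (b * L / n) := by gcongr
        _ = _ := by ring
    calc (n : ℝ) * √(p * dev v) ^ 3 ≤ n * (√(p * b) * √L / √n) ^ 3 := by gcongr
      _ = √n ^ 2 * (√(p * b) * √L / √n) ^ 3 := by rw [Real.sq_sqrt hn0.le]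
      _ = √(p * b) ^ 3 * rate n := by
        unfold rate
        rw [← hL]
        field_simp

/-- Summing the local estimate over all equidistributed vectors; the main terms add up to `1`
except for the zero-sum vectors that are not equidistributed. -/
lemma eventually_total {d p : ℕ} [Fact p.Prime] (hd : 3 ≤ d) (hgcd : Nat.Coprime p d)
    (b : ℝ) (hb : 4 * p ≤ b) : ∀ᶠ n : ℕ in Filter.atTop,
      |(∑ v ∈ univ.filter (fun v : Fin n → ZMod p => dev v ≤ b * Real.log n / n),
        kerCount n d p v) / ((n * d).factorial : ℝ) - 1| ≤
      (locConst d p (√(p * b) ^ 3) + 2 * p ^ 2) * rate n := by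
  have hp : p.Prime := Fact.out
  have hp0 : (0 : ℝ) < p := by exact_mod_cast hp.pos
  filter_upwards [eventually_kerCount_estimate hd hgcd b (by linarith),
    Filter.eventually_ge_atTop 2] with n ⟨hnr, hest⟩ hn
  have hn0 : (0 : ℝ) < n := by exact_mod_cast (by omega : 0 < n)
  set C := locConst d p (√(p * b) ^ 3) with hC
  set G := univ.filter (fun v : Fin n → ZMod p => dev v ≤ b * Real.log n / n) with hG
  set z : (Fin n → ZMod p) → ℝ := fun v => if ∑ k, v k = 0 then (p : ℝ) else 0 with hz
  have hz0 : ∀ v, 0 ≤ z v := fun v => by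
    simp only [hz]
    split_ifs <;> positivity
  have hzp : ∀ v, z v ≤ p := fun v => by
    simp only [hz]
    split_ifs
    · exact le_rfl
    · positivity
  have hztot : ∑ v, z v = (p : ℝ) ^ n := by
    rw [← mul_card_sum_eq_zero (n := n) (by omega), hz, ← Finset.sum_filter, Finset.sum_const,
      nsmul_eq_mul, mul_comm]
  have hpn : (0 : ℝ) < (p : ℝ) ^ n := by positivity
  have hgood : |∑ v ∈ G, ((p : ℝ) ^ n * (kerCount n d p v / (n * d).factorial) - z v)| ≤
      (p : ℝ) ^ n * (C * rate n) := by
    refine (Finset.abs_sum_le_sum_abs _ _).trans ?_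
    refine (Finset.sum_le_sum fun v hv => hest v (mem_filter.1 hv).2).trans ?_
    rw [Finset.sum_const, nsmul_eq_mul]
    refine mul_le_mul_of_nonneg_right ?_ ?_
    · have : #G ≤ p ^ n := by
        refine (Finset.card_le_univ _).trans (le_of_eq ?_)
        simp [ZMod.card]
      exact_mod_cast this
    · have := rate_pos hn
      have : 0 ≤ C := by rw [hC]; unfold locConst; positivity
      positivity
  have hbad : ∑ v ∈ univ.filter (fun v : Fin n → ZMod p => ¬ dev v ≤ b * Real.log n / n), z v ≤
      (p : ℝ) ^ n * (2 * p ^ 2 * rate n) := by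
    refine (Finset.sum_le_sum fun v _ => hzp v).trans ?_
    rw [Finset.sum_const, nsmul_eq_mul]
    have h1 := card_bad_le hn b hb
    have h2 : (1 : ℝ) / n ≤ rate n := by
      refine le_trans ?_ hnr
      have h3 : √(n : ℝ) ≤ n := by
        rw [Real.sqrt_le_left hn0.le]
        have : (1 : ℝ) ≤ n := by exact_mod_cast (by omega : 1 ≤ n)
        nlinarith
      exact one_div_le_one_div_of_le (Real.sqrt_pos.2 hn0) h3
    calc _ ≤ 2 * p / n * (p : ℝ) ^ n * p := mul_le_mul_of_nonneg_right h1 hp0.le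
      _ = (p : ℝ) ^ n * (2 * p ^ 2 * (1 / n)) := by ring
      _ ≤ _ := by gcongr
  have hbad0 : 0 ≤ ∑ v ∈ univ.filter (fun v : Fin n → ZMod p => ¬ dev v ≤ b * Real.log n / n),
      z v := Finset.sum_nonneg fun v _ => hz0 v
  have hsplit := Finset.sum_filter_add_sum_filter_not univ
    (fun v : Fin n → ZMod p => dev v ≤ b * Real.log n / n) z
  rw [hztot] at hsplit
  have hkey : (p : ℝ) ^ n * ((∑ v ∈ G, kerCount n d p v) / ((n * d).factorial : ℝ) - 1) =
      ∑ v ∈ G, ((p : ℝ) ^ n * (kerCount n d p v / (n * d).factorial) - z v) -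
      ∑ v ∈ univ.filter (fun v : Fin n → ZMod p => ¬ dev v ≤ b * Real.log n / n), z v := by
    rw [Finset.sum_sub_distrib, ← Finset.mul_sum, ← Finset.sum_div]
    linarith
  refine le_of_mul_le_mul_left ?_ hpn
  rw [← abs_of_pos hpn, ← abs_mul, abs_of_pos hpn, hkey]
  refine (abs_sub _ _).trans ?_
  rw [abs_of_nonneg hbad0]
  linarith

/-- An eventual bound by a multiple of a positive rate extends to all `n ≥ 2`. -/
lemma exists_const_of_eventually (F g : ℕ → ℝ) (hg : ∀ n, 2 ≤ n → 0 < g n) (C : ℝ)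
    (h : ∀ᶠ n in Filter.atTop, |F n| ≤ C * g n) :
    ∃ C' : ℝ, 0 < C' ∧ ∀ n, 2 ≤ n → |F n| ≤ C' * g n := by
  obtain ⟨n₀, hn₀⟩ := Filter.eventually_atTop.1 h
  have hS : 0 ≤ ∑ k ∈ range n₀, |F k / g k| := Finset.sum_nonneg fun _ _ => abs_nonneg _
  refine ⟨|C| + ∑ k ∈ range n₀, |F k / g k| + 1, by positivity, fun n hn => ?_⟩
  have hgn := hg n hn
  by_cases hc : n₀ ≤ n
  · refine (hn₀ n hc).trans (mul_le_mul_of_nonneg_right ?_ hgn.le)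
    linarith [le_abs_self C]
  · have h1 : |F n / g n| ≤ ∑ k ∈ range n₀, |F k / g k| :=
      Finset.single_le_sum (f := fun k => |F k / g k|) (fun _ _ => abs_nonneg _)
        (mem_range.2 (by omega))
    rw [abs_div, abs_of_pos hgn, div_le_iff₀ hgn] at h1
    refine h1.trans (mul_le_mul_of_nonneg_right ?_ hgn.le)
    linarith [abs_nonneg C]

end LocalCLT

/-- **local CLT estimate, equidistributed class.** For fixed `d ≥ 3` and a prime
`p` with `gcd(p,d)=1`, there is `𝔟₀ > 0` so that for every `𝔟 ≥ 𝔟₀` there is `C > 0` with: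
for all `n ≥ 2`, the normalized number of pairs `(v, 𝒫)` where the counting vector of `v` is
`𝔟`-equidistributed and `A(𝒫)·v = 0` in `F_p` equals `1` up to an error `C (ln n)^{3/2}/√n`. -/
theorem stmt5 (d p : ℕ) (hd : 3 ≤ d) [Fact p.Prime] (hgcd : Nat.gcd p d = 1) :
    ∃ b₀ : ℝ, 0 < b₀ ∧ ∀ b : ℝ, b₀ ≤ b → ∃ C : ℝ, 0 < C ∧ ∀ n : ℕ, 2 ≤ n →
      |(∑ ν ∈ (Finset.Nat.antidiagonalTuple p n).filter
            (fun ν => ∑ j, ((ν j : ℝ) / n - 1 / p) ^ 2 ≤ b * Real.log n / n),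
          ∑ v ∈ Finset.univ.filter
              (fun v : Fin n → ZMod p => ∀ j : Fin p, phi v ((j : ℕ) : ZMod p) = ν j),
            (Nat.card {P : Equiv.Perm (Fin n × Fin d) //
                ((adjMat n d P).map (Int.cast : ℤ → ZMod p)).mulVec v = 0} : ℝ))
          / (Nat.factorial (n * d) : ℝ) - 1|
        ≤ C * (Real.log n) ^ ((3 : ℝ) / 2) / Real.sqrt n := by
  have hp : p.Prime := Fact.out
  refine ⟨4 * p, by have := hp.pos; positivity, fun b hb => ?_⟩
  obtain ⟨C, hC, h⟩ := LocalCLT.exists_const_of_eventually _ LocalCLT.rate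
    (fun n hn => LocalCLT.rate_pos hn) _ (LocalCLT.eventually_total hd hgcd b hb)
  refine ⟨C, hC, fun n hn => ?_⟩
  rw [mul_div_assoc C, LocalCLT.rate_eq, LocalCLT.double_sum_eq]
  exact h n hn
end
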